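/- arXiv:2504.17909 — 4 statements merged into one kernel-verified Lean document; each statement's English description precedes it below -/
import Mathlib

section
/- Let D be a reduced effective divisor on P¹ over F_q, k ≥ 0 an integer, 𝒟 ⊆ F_k a D-marking, ℓ ≥ 0 an integer, and L = O(3,ℓ) on F_k. Consider the restriction map α: H⁰(F_k, L) → H⁰(𝒟, O_𝒟). If ℓ − 2k ≥ (deg D + k)/2, then at least one of the following holds: α is surjective, or every section s ∈ ker(α) is horizontally reducible. -/
/-!
Statement 12.  The surjectivity/fixed-component dichotomy for the restriction map
`α : H⁰(F_k, O(3,ℓ)) → H⁰(𝒟, O_𝒟)` attached to a `D`-marking `𝒟` of the Hirzebruch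
surface `F_k` over `F_q`, in the range `ℓ − 2k ≥ (deg D + k)/2`.

A `D`-marking is the choice, for each closed point `P ∈ D`, of a relative degree
one point of the fiber over `P`: either `(z : 1)` with `z` in the residue field of
`P`, or `(1 : 0)`; it is encoded as a function assigning to each `P` an element of
`Option (Res P)`.  The space `H⁰(𝒟, O_𝒟)` is `∏_{P ∈ D} κ(P)`, and `α` evaluates a
section at each marked point (in a fixed trivialization).
-/
open scoped Classical

noncomputable section

namespace Stmt12

/-- Closed points of the projective line `P¹` over `F_q`: `none` is the point at
infinity, and `some p` corresponds to the monic irreducible polynomial `p`. -/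
abbrev P1Pt (Fq : Type) [Field Fq] : Type :=
  Option {p : Polynomial Fq // p.Monic ∧ Irreducible p}

variable {Fq : Type} [Field Fq]

/-- The degree of a closed point of `P¹`. -/
def P1Pt.deg : P1Pt Fq → ℕ
  | none => 1
  | some p => p.1.natDegree

/-- The residue field of a closed point of `P¹`. -/
def P1Pt.Res : P1Pt Fq → Type
  | none => Fq
  | some p => AdjoinRoot p.1

instance (P : P1Pt Fq) : CommRing (P1Pt.Res P) :=
  match P with
  | none => inferInstanceAs (CommRing Fq)
  | some p => inferInstanceAs (CommRing (AdjoinRoot p.1))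

instance (P : P1Pt Fq) : Algebra Fq (P1Pt.Res P) :=
  match P with
  | none => Algebra.id Fq
  | some p => inferInstanceAs (Algebra Fq (AdjoinRoot p.1))

/-- The homogeneous coordinates `(t₀ : t₁)` of a closed point of `P¹`, in its residue
field: `(1 : 0)` for the point at infinity, and `(θ : 1)` with `θ` the root of `p`
for the point `some p`. -/
def P1Pt.coords : (P : P1Pt Fq) → Fin 2 → P1Pt.Res P
  | none => ![1, 0]
  | some p => ![AdjoinRoot.root p.1, 1]

/-- Evaluate a polynomial in the homogeneous coordinates `t₀, t₁` of the base `P¹`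
at a closed point `P`, in the residue field of `P`. -/
def resEval (P : P1Pt Fq) (A : MvPolynomial (Fin 2) Fq) : P1Pt.Res P :=
  MvPolynomial.aeval (P1Pt.coords P) A

/-- `r_P(s)`: the number of relative degree one points of the fiber of `F_k → P¹`
over `P` at which the binary cubic form `s = (A₀, A₁, A₂, A₃)` vanishes.  These
points are the `(z : 1)` with `z` in the residue field of `P`, together with `(1 : 0)`. -/
def rP (P : P1Pt Fq) (s : Fin 4 → MvPolynomial (Fin 2) Fq) : ℕ :=
  Nat.card {z : P1Pt.Res P //
      resEval P (s 0) * z ^ 3 + resEval P (s 1) * z ^ 2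
        + resEval P (s 2) * z + resEval P (s 3) = 0} +
    (if resEval P (s 0) = 0 then 1 else 0)

/-- The degree of a reduced effective divisor (a finite set of closed points) on `P¹`. -/
def degD (D : Finset (P1Pt Fq)) : ℕ := ∑ P ∈ D, P1Pt.deg P

/-- `r_D(s) = ∏_{P ∣ D} r_P(s)`. -/
def rD (D : Finset (P1Pt Fq)) (s : Fin 4 → MvPolynomial (Fin 2) Fq) : ℕ :=
  ∏ P ∈ D, rP P s

/-- `a_D(s) = ∏_{P ∣ D} (r_P(s) − 1)`. -/
def aD (D : Finset (P1Pt Fq)) (s : Fin 4 → MvPolynomial (Fin 2) Fq) : ℤ :=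
  ∏ P ∈ D, ((rP P s : ℤ) - 1)

/-- `p` is homogeneous of (possibly negative) degree `d`; for `d < 0` this forces
`p = 0`. -/
def IsHomOfDeg (p : MvPolynomial (Fin 2) Fq) (d : ℤ) : Prop :=
  p.IsHomogeneous d.toNat ∧ (d < 0 → p = 0)

/-- The space of global sections of `O(m, ℓ)` on the Hirzebruch surface `F_k`,
viewed as tuples `(A₀, …, A_m)` of binary forms with `A_i` homogeneous of degree
`ℓ − i·k`. -/
def SecSet (m ℓ k : ℕ) : Set (Fin (m + 1) → MvPolynomial (Fin 2) Fq) :=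
  {s | ∀ i : Fin (m + 1), IsHomOfDeg (s i) ((ℓ : ℤ) - (i : ℕ) * k)}

/-- A binary cubic form `s ∈ H⁰(F_k, O(3,ℓ))` is horizontally reducible iff it is
zero or factors as a product of a nonzero quadratic and a nonzero linear form in
`x, y` with homogeneous polynomial coefficients. -/
def HorizRed (k : ℕ) (s : Fin 4 → MvPolynomial (Fin 2) Fq) : Prop :=
  s = 0 ∨ ∃ (b c : ℤ) (B : Fin 3 → MvPolynomial (Fin 2) Fq)
      (C : Fin 2 → MvPolynomial (Fin 2) Fq),
    B ≠ 0 ∧ C ≠ 0 ∧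
    (∀ j : Fin 3, IsHomOfDeg (B j) (b - (j : ℕ) * k)) ∧
    (∀ j : Fin 2, IsHomOfDeg (C j) (c - (j : ℕ) * k)) ∧
    s 0 = B 0 * C 0 ∧ s 1 = B 0 * C 1 + B 1 * C 0 ∧
    s 2 = B 1 * C 1 + B 2 * C 0 ∧ s 3 = B 2 * C 1

/-- The value (in a fixed trivialization) of a binary cubic section
`s = (A₀, A₁, A₂, A₃)` of `O(3, ℓ)` at the point of the fiber over `P` marked by
`pt`: at `(z : 1)` it is `A₀z³ + A₁z² + A₂z + A₃` (coefficients evaluated at `P`),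
and at `(1 : 0)` it is `A₀(P)`. -/
def evalAt3 (P : P1Pt Fq) (pt : Option (P1Pt.Res P))
    (s : Fin 4 → MvPolynomial (Fin 2) Fq) : P1Pt.Res P :=
  match pt with
  | some z =>
      resEval P (s 0) * z ^ 3 + resEval P (s 1) * z ^ 2 +
        resEval P (s 2) * z + resEval P (s 3)
  | none => resEval P (s 0)

/-!
A dimension count gives a nonzero `u ∈ H⁰(F_k, O(1, m))` through all the marks with `m` at most
`(deg D + k) / 2`. Dividing by the equation of a fiber contained in `u = 0` lowers `m` by the degree
of its base point and frees at most that one mark, so we may assume that `u` contains no fiber and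
meets all the marks but those over some `D₂ ⊆ D`, with `2 (m + deg D₂) ≤ deg D + k`. Then
`u = 0` is a section of `F_k → P¹`, and a form in `H⁰(F_k, O(n + 1, l))` restricts on it to a binary
form of degree `l + (n + 1) (m - k)`, with kernel the multiples of `u`. Put `D₁ = D ∖ D₂`. If that
degree is less than `deg D₁`, every form vanishing at the marks restricts to zero, hence is a
multiple of `u`. Otherwise interpolate on the curve `u = 0` to get any values over `D₁`, and correct
the values over `D₂` by multiples of `u`.
-/

open Polynomial
open Finset.HasAntidiagonal (antidiagonal mem_antidiagonal)

section HomEval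

variable {R S : Type*} [CommRing R] [CommRing S] [Algebra R S]

/-- Value at `w` of the binary form of degree `n` with dehomogenization `p`; `w 0` is the
coordinate that `X` stands for, and coefficients of `p` beyond degree `n` are ignored. -/
def homEval (n : ℕ) (w : Fin 2 → S) : R[X] →ₗ[R] S :=
  (MvPolynomial.aeval w).toLinearMap ∘ₗ homogenizeLM n

theorem homEval_eq_sum (n : ℕ) (w : Fin 2 → S) (p : R[X]) :
    homEval n w p =
      ∑ ij ∈ antidiagonal n, p.coeff ij.1 • (w 0 ^ ij.1 * w 1 ^ ij.2) := by
  simp [homEval, homogenize, MvPolynomial.aeval_monomial, Finsupp.prod_fintype,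
    Algebra.smul_def]

theorem homEval_mul {m n : ℕ} (w : Fin 2 → S) {p q : R[X]} (hp : p.natDegree ≤ m)
    (hq : q.natDegree ≤ n) : homEval (m + n) w (p * q) = homEval m w p * homEval n w q := by
  simp [homEval, homogenize_mul p q hp hq]

theorem homEval_smul (n : ℕ) (r : S) (w : Fin 2 → S) (p : R[X]) :
    homEval n (r • w) p = r ^ n * homEval n w p := by
  simp only [homEval_eq_sum, Finset.mul_sum, Pi.smul_apply, smul_eq_mul]
  refine Finset.sum_congr rfl fun ij hij => ?_
  rw [← mem_antidiagonal.1 hij, mul_smul_comm]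
  congr 1
  ring

theorem homEval_monomial {n i : ℕ} (hi : i ≤ n) (w : Fin 2 → S) (r : R) :
    homEval n w (monomial i r) = r • (w 0 ^ i * w 1 ^ (n - i)) := by
  simp [homEval, homogenize_monomial hi, MvPolynomial.aeval_monomial, Finsupp.prod_fintype,
    Algebra.smul_def]

theorem homEval_C (n : ℕ) (w : Fin 2 → S) (r : R) : homEval n w (C r) = r • w 1 ^ n := by
  simp [← monomial_zero_left, homEval_monomial n.zero_le]

theorem homEval_one (w : Fin 2 → S) (p : R[X]) :
    homEval 1 w p = p.coeff 0 • w 1 + p.coeff 1 • w 0 := by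
  simp [homEval_eq_sum, Finset.Nat.antidiagonal_succ]

theorem homEval_succ (n : ℕ) (w : Fin 2 → S) (p : R[X]) :
    homEval (n + 1) w p = p.coeff 0 • w 1 ^ (n + 1) + w 0 * homEval n w p.divX := by
  simp only [homEval_eq_sum, Finset.Nat.sum_antidiagonal_succ, Finset.mul_sum, coeff_divX]
  congr 1
  · simp
  · refine Finset.sum_congr rfl fun ij _ => ?_
    simp only [Algebra.smul_def]
    ring

/-- The zero of the binary linear form with dehomogenization `u`. -/
def zeroOf (u : R[X]) : Fin 2 → R := ![u.coeff 0, -u.coeff 1]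

theorem exists_eq_mul_of_add_eq_zero {a b x y : R} (hab : IsCoprime a b)
    (h : x * b + a * y = 0) : ∃ q, x = q * a ∧ y = -(q * b) := by
  obtain ⟨r, s, hrs⟩ := hab
  exact ⟨r * x - s * y, by linear_combination s * h - x * hrs,
    by linear_combination r * h - y * hrs⟩

theorem exists_eq_mul_of_homEval_zeroOf_eq_zero {u : R[X]} (hu : u.natDegree ≤ 1)
    (hcop : IsCoprime (u.coeff 0) (u.coeff 1)) {n : ℕ} {p : R[X]} (hp : p.degree < (n + 1 : ℕ))
    (h : homEval n (zeroOf u) p = 0) : ∃ q : R[X], q.degree < n ∧ p = q * u := by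
  induction n generalizing p with
  | zero =>
    have hp0 : p = C (p.coeff 0) := eq_C_of_degree_le_zero (Nat.WithBot.lt_one_iff_le_zero.1 hp)
    refine ⟨0, by simp, ?_⟩
    rw [hp0, homEval_C] at h
    rw [hp0, zero_mul]
    simpa using h
  | succ n ih =>
    rw [homEval_succ] at h
    obtain ⟨q₀, hq₀, hdivX⟩ : ∃ q₀, p.coeff 0 = q₀ * u.coeff 0 ∧
        homEval n (zeroOf u) p.divX = -(q₀ * (-u.coeff 1) ^ (n + 1)) :=
      exists_eq_mul_of_add_eq_zero (hcop.neg_right.pow_right) h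
    have hdeg : (p.divX - C (q₀ * u.coeff 1)).degree < (n + 1 : ℕ) := by
      rw [degree_lt_iff_coeff_zero] at hp ⊢
      intro i hi
      rw [coeff_sub, coeff_divX, coeff_C_of_ne_zero (by omega), hp _ (by omega), sub_zero]
    obtain ⟨q, hq, hpq⟩ := ih hdeg (by
      rw [map_sub, hdivX, homEval_C]
      simp only [zeroOf, Matrix.cons_val_one, Matrix.cons_val_fin_one, smul_eq_mul]
      ring)
    refine ⟨C q₀ + X * q, ?_, ?_⟩
    · rw [degree_lt_iff_coeff_zero] at hq ⊢
      intro i hi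
      obtain ⟨j, rfl⟩ : ∃ j, i = j + 1 := ⟨i - 1, by omega⟩
      rw [coeff_add, coeff_C_succ, coeff_X_mul, hq j (by omega), add_zero]
    · have hu' : C (u.coeff 1) * X + C (u.coeff 0) = u :=
        (eq_X_add_C_of_natDegree_le_one hu).symm
      have hp' := divX_mul_X_add p
      rw [hq₀] at hp'
      simp only [C_mul] at hp' hpq
      linear_combination -hp' + X * hpq + C q₀ * hu'

end HomEval

theorem map_eq_of_inf_ker_le_map {K M M' M'' : Type*} [DivisionRing K] [AddCommGroup M]
    [Module K M] [AddCommGroup M'] [Module K M'] [AddCommGroup M''] [Module K M'']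
    {U : Submodule K M} {V : Submodule K M'} {W : Submodule K M''} [Module.Finite K U]
    [Module.Finite K V] [Module.Finite K W] (g : M →ₗ[K] M') (f : M' →ₗ[K] M'')
    (hf : V.map f ≤ W) (hker : V ⊓ LinearMap.ker f ≤ U.map g)
    (hdim : Module.finrank K U + Module.finrank K W ≤ Module.finrank K V) : V.map f = W := by
  have hrank := LinearMap.finrank_range_add_finrank_ker (f.domRestrict V)
  have hker_le : Module.finrank K (LinearMap.ker (f.domRestrict V)) ≤ Module.finrank K U := by
    rw [LinearMap.ker_domRestrict, ← Submodule.finrank_map_subtype_eq,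
      Submodule.map_comap_subtype]
    exact (Submodule.finrank_mono hker).trans (Submodule.finrank_map_le g U)
  rw [LinearMap.range_domRestrict] at hrank
  exact Submodule.eq_of_le_of_finrank_le hf (by omega)

/-- The binary forms of degree `d`, that is `H⁰(P¹, O(d))`, encoded by their dehomogenizations at
`t₁ = 1`; zero for `d < 0`. -/
def forms (Fq : Type) [Field Fq] (d : ℤ) : Submodule Fq Fq[X] := degreeLT Fq (d + 1).toNat

section Forms

variable {a b d : ℤ} {p q : Fq[X]}

theorem mem_forms : p ∈ forms Fq d ↔ ∀ i : ℕ, d < i → p.coeff i = 0 := by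
  rw [forms, mem_degreeLT, degree_lt_iff_coeff_zero]
  exact forall_congr' fun i => imp_congr_left (by omega)

theorem eq_zero_of_mem_forms (hd : d < 0) (hp : p ∈ forms Fq d) : p = 0 := by
  ext i
  exact mem_forms.1 hp i (by omega)

theorem mem_forms_iff_natDegree_le (hd : 0 ≤ d) : p ∈ forms Fq d ↔ p.natDegree ≤ d.toNat := by
  rw [mem_forms, natDegree_le_iff_coeff_eq_zero]
  exact forall_congr' fun i => imp_congr_left (by omega)

theorem natDegree_le_of_mem_forms (hp : p ∈ forms Fq d) : p.natDegree ≤ d.toNat := by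
  rcases lt_or_ge d 0 with hd | hd
  · simp [eq_zero_of_mem_forms hd hp]
  · exact (mem_forms_iff_natDegree_le hd).1 hp

instance : SetLike.GradedMonoid (forms Fq) where
  one_mem := (mem_forms_iff_natDegree_le le_rfl).2 (by simp)
  mul_mem a b p q hp hq := by
    rcases lt_or_ge a 0 with ha | ha
    · simp [eq_zero_of_mem_forms ha hp]
    rcases lt_or_ge b 0 with hb | hb
    · simp [eq_zero_of_mem_forms hb hq]
    rw [mem_forms_iff_natDegree_le (by omega), Int.toNat_add ha hb]
    exact natDegree_mul_le_of_le (natDegree_le_of_mem_forms hp) (natDegree_le_of_mem_forms hq)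

theorem mul_mem_forms (hp : p ∈ forms Fq a) (hq : q ∈ forms Fq b) (h : a + b = d) :
    p * q ∈ forms Fq d :=
  h ▸ SetLike.mul_mem_graded hp hq

theorem homogenize_mul_of_mem_forms (hp : p ∈ forms Fq a) (hq : q ∈ forms Fq b)
    (h : a + b = d) :
    (p * q).homogenize d.toNat = p.homogenize a.toNat * q.homogenize b.toNat := by
  rcases lt_or_ge a 0 with ha | ha
  · simp [eq_zero_of_mem_forms ha hp]
  rcases lt_or_ge b 0 with hb | hb
  · simp [eq_zero_of_mem_forms hb hq]
  rw [← homogenize_mul p q (natDegree_le_of_mem_forms hp) (natDegree_le_of_mem_forms hq),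
    ← Int.toNat_add ha hb, h]

theorem eq_zero_of_mem_forms_of_homogenize_eq_zero (hp : p ∈ forms Fq d)
    (h : p.homogenize d.toNat = 0) : p = 0 :=
  eq_zero_of_homogenize_eq_zero (natDegree_le_of_mem_forms hp) h

theorem isHomOfDeg_homogenize (hp : p ∈ forms Fq d) : IsHomOfDeg (p.homogenize d.toNat) d :=
  ⟨isHomogeneous_homogenize p, fun hd => by simp [eq_zero_of_mem_forms hd hp]⟩

theorem IsHomOfDeg.exists_eq_homogenize {A : MvPolynomial (Fin 2) Fq} (hA : IsHomOfDeg A d) :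
    ∃ p ∈ forms Fq d, A = p.homogenize d.toNat := by
  rcases lt_or_ge d 0 with hd | hd
  · exact ⟨0, zero_mem _, by simp [hA.2 hd]⟩
  refine ⟨MvPolynomial.aeval ![X, 1] A, ?_, (homogenize_eq_of_isHomogeneous hA.1 rfl).symm⟩
  rw [mem_forms_iff_natDegree_le hd, MvPolynomial.aeval_def, MvPolynomial.eval₂_eq']
  refine natDegree_sum_le_of_forall_le _ _ fun e he => ?_
  have hdeg : e 0 + e 1 = d.toNat := by
    simpa [Finsupp.weight_apply, Finsupp.sum_fintype] using
      hA.1 (MvPolynomial.mem_support_iff.1 he)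
  simp only [algebraMap_eq, Fin.prod_univ_two, Matrix.cons_val_zero, Matrix.cons_val_one,
    Matrix.cons_val_fin_one, one_pow, mul_one]
  exact (natDegree_C_mul_X_pow_le _ _).trans (by omega)

instance : Module.Finite Fq (forms Fq d) :=
  Module.Finite.equiv (degreeLTEquiv Fq _).symm

theorem finrank_forms : Module.finrank Fq (forms Fq d) = (d + 1).toNat := by
  rw [forms, (degreeLTEquiv Fq _).finrank_eq, Module.finrank_fin_fun]

end Forms

theorem degD_mono {D D' : Finset (P1Pt Fq)} (h : D ⊆ D') : degD D ≤ degD D' :=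
  Finset.sum_le_sum_of_subset h

theorem degD_insert_le (P : P1Pt Fq) (D : Finset (P1Pt Fq)) :
    degD (insert P D) ≤ P.deg + degD D := by
  by_cases hP : P ∈ D
  · rw [Finset.insert_eq_of_mem hP]
    exact Nat.le_add_left _ _
  · exact (Finset.sum_insert hP).le

theorem degD_filter_add_degD_filter_not (D : Finset (P1Pt Fq)) (p : P1Pt Fq → Prop) :
    degD {P ∈ D | p P} + degD {P ∈ D | ¬ p P} = degD D :=
  Finset.sum_filter_add_sum_filter_not D p P1Pt.deg

namespace P1Pt

variable {P P' : P1Pt Fq}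

theorem isField_res (P : P1Pt Fq) : IsField P.Res := by
  rcases P with _ | r
  · exact Field.toIsField Fq
  · have : Fact (Irreducible r.1) := ⟨r.2.2⟩
    exact Field.toIsField (AdjoinRoot r.1)

instance (P : P1Pt Fq) : IsDomain P.Res := P.isField_res.isDomain

theorem finite_res_and_finrank_res (P : P1Pt Fq) :
    Module.Finite Fq P.Res ∧ Module.finrank Fq P.Res = P.deg := by
  rcases P with _ | r
  · exact ⟨inferInstanceAs (Module.Finite Fq Fq), Module.finrank_self Fq⟩
  · exact ⟨(AdjoinRoot.powerBasis' r.2.1).finite, (AdjoinRoot.powerBasis' r.2.1).finrank⟩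

instance (P : P1Pt Fq) : Module.Finite Fq P.Res := P.finite_res_and_finrank_res.1

theorem finrank_pi_res (D : Finset (P1Pt Fq)) :
    Module.finrank Fq ((P : D) → P.1.Res) = degD D := by
  rw [Module.finrank_pi_fintype, degD, ← Finset.sum_coe_sort D]
  exact Finset.sum_congr rfl fun P _ => P.1.finite_res_and_finrank_res.2

theorem deg_pos (P : P1Pt Fq) : 0 < P.deg := by
  rcases P with _ | r
  · exact one_pos
  · exact r.2.2.natDegree_pos

/-- Dehomogenization of a form of degree `deg P` that vanishes exactly at `P`; at infinity it is
the form `t₁`. -/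
def equation : P1Pt Fq → Fq[X]
  | none => 1
  | some r => r.1

theorem equation_mem_forms (P : P1Pt Fq) : P.equation ∈ forms Fq P.deg := by
  rw [mem_forms_iff_natDegree_le (by omega)]
  rcases P with _ | r
  · simp [equation]
  · simp [equation, deg]

end P1Pt

/-- Value at `P` of the form of degree `d` with dehomogenization `p`. -/
def evalForm (d : ℤ) (P : P1Pt Fq) : Fq[X] →ₗ[Fq] P.Res := homEval d.toNat P.coords

section EvalForm

variable {a b d : ℤ} {p q : Fq[X]} {P P' : P1Pt Fq}

theorem resEval_homogenize (P : P1Pt Fq) (n : ℕ) (p : Fq[X]) :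
    resEval P (p.homogenize n) = homEval n P.coords p :=
  rfl

theorem evalForm_none (d : ℤ) (p : Fq[X]) :
    evalForm d (none : P1Pt Fq) p = (p.coeff d.toNat : Fq) := by
  have h : homEval d.toNat (![1, 0] : Fin 2 → Fq) p = p.coeff d.toNat := by
    rw [homEval_eq_sum, Finset.sum_eq_single (d.toNat, 0)]
    · simp
    · rintro ⟨i, j⟩ hij hne
      have hj : j ≠ 0 := by
        rintro rfl
        exact hne (by simpa using hij)
      simp [hj]
    · simp
  exact h

theorem evalForm_some (r) (hp : p ∈ forms Fq d) :
    evalForm d (some r : P1Pt Fq) p = AdjoinRoot.mk r.1 p := by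
  have h : homEval d.toNat ![AdjoinRoot.root r.1, 1] p = AdjoinRoot.mk r.1 p :=
    (aeval_homogenize_of_eq_one (natDegree_le_of_mem_forms hp) _ rfl).trans (AdjoinRoot.aeval_eq p)
  exact h

theorem evalForm_mul (P : P1Pt Fq) (hp : p ∈ forms Fq a) (hq : q ∈ forms Fq b) (h : a + b = d) :
    evalForm d P (p * q) = evalForm a P p * evalForm b P q := by
  simp only [evalForm, ← resEval_homogenize, homogenize_mul_of_mem_forms hp hq h, resEval, map_mul]

theorem evalForm_pow (P : P1Pt Fq) (hp : p ∈ forms Fq a) (n : ℕ) :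
    evalForm (n • a) P (p ^ n) = evalForm a P p ^ n := by
  induction n with
  | zero => simp [evalForm, homEval]
  | succ n ih =>
    rw [pow_succ, pow_succ, ← ih,
      evalForm_mul P (SetLike.pow_mem_graded n hp) hp (succ_nsmul a n).symm]

theorem evalForm_equation_ne_zero (h : P' ≠ P) : evalForm P.deg P' P.equation ≠ 0 := by
  rcases P' with _ | r'
  · obtain _ | r := P
    · exact absurd rfl h
    · have hlead : (P1Pt.equation (some r)).coeff (P1Pt.deg (some r) : ℤ).toNat = 1 :=
        r.2.1.leadingCoeff
      rw [evalForm_none, hlead]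
      exact one_ne_zero (α := Fq)
  · rw [evalForm_some r' P.equation_mem_forms]
    intro h0
    have hdvd : r'.1 ∣ P.equation := AdjoinRoot.mk_eq_zero.1 h0
    obtain _ | r := P
    · exact r'.2.2.not_isUnit (isUnit_of_dvd_one hdvd)
    · exact h (congrArg some (Subtype.ext
        (eq_of_monic_of_associated r'.2.1 r.2.1 (r'.2.2.associated_of_dvd r.2.2 hdvd))))

theorem exists_eq_equation_mul (hp : p ∈ forms Fq d) (h : evalForm d P p = 0) :
    ∃ q ∈ forms Fq (d - P.deg), p = P.equation * q := by
  rcases P with _ | r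
  · refine ⟨p, mem_forms.2 fun i hi => ?_, (one_mul p).symm⟩
    rw [evalForm_none] at h
    simp only [P1Pt.deg] at hi
    rcases lt_or_ge d i with hdi | hdi
    · exact mem_forms.1 hp i hdi
    · rwa [show i = d.toNat by omega]
  · rw [evalForm_some r hp] at h
    obtain ⟨q, rfl⟩ := AdjoinRoot.mk_eq_zero.1 h
    refine ⟨q, ?_, rfl⟩
    rcases eq_or_ne q 0 with rfl | hq
    · exact zero_mem _
    have hd : 0 ≤ d := by
      by_contra hd
      exact mul_ne_zero r.2.2.ne_zero hq (eq_zero_of_mem_forms (by omega) hp)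
    have hdeg := natDegree_le_of_mem_forms hp
    rw [natDegree_mul r.2.2.ne_zero hq] at hdeg
    simp only [P1Pt.deg]
    rw [mem_forms_iff_natDegree_le (by omega)]
    omega

theorem exists_eq_prod_equation_mul (D : Finset (P1Pt Fq)) (hp : p ∈ forms Fq d)
    (h : ∀ P ∈ D, evalForm d P p = 0) :
    ∃ q ∈ forms Fq (d - degD D), p = (∏ P ∈ D, P.equation) * q := by
  induction D using Finset.induction_on generalizing d p with
  | empty => exact ⟨p, by simpa [degD] using hp, by simp⟩
  | insert P D hPD ih =>
    obtain ⟨p', hp', rfl⟩ := exists_eq_equation_mul hp (h P (Finset.mem_insert_self P D))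
    obtain ⟨q, hq, rfl⟩ := ih hp' fun P' hP' => by
      have hval := h P' (Finset.mem_insert_of_mem hP')
      rw [evalForm_mul P' P.equation_mem_forms hp' (by ring)] at hval
      have hne : P' ≠ P := fun hPP => hPD (hPP ▸ hP')
      exact (mul_eq_zero.1 hval).resolve_left (evalForm_equation_ne_zero hne)
    refine ⟨q, ?_, by rw [Finset.prod_insert hPD, mul_assoc]⟩
    rwa [degD, Finset.sum_insert hPD, Nat.cast_add, ← sub_sub]

theorem eq_zero_of_forall_evalForm_eq_zero (D : Finset (P1Pt Fq)) (hd : d < degD D)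
    (hp : p ∈ forms Fq d) (h : ∀ P ∈ D, evalForm d P p = 0) : p = 0 := by
  obtain ⟨q, hq, rfl⟩ := exists_eq_prod_equation_mul D hp h
  rw [eq_zero_of_mem_forms (by omega) hq, mul_zero]

theorem exists_mem_forms_forall_evalForm_eq (D : Finset (P1Pt Fq)) (hd : (degD D : ℤ) ≤ d + 1)
    (t : (P : P1Pt Fq) → P.Res) : ∃ p ∈ forms Fq d, ∀ P ∈ D, evalForm d P p = t P := by
  let evalD : Fq[X] →ₗ[Fq] (P : D) → P.1.Res := LinearMap.pi fun P => evalForm d P.1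
  have hsurj : (forms Fq d).map evalD = ⊤ := by
    refine map_eq_of_inf_ker_le_map (U := forms Fq (d - degD D))
      (LinearMap.mulLeft Fq (∏ P ∈ D, P.equation)) evalD le_top ?_ ?_
    · rintro p ⟨hp, hp0⟩
      obtain ⟨q, hq, hpq⟩ := exists_eq_prod_equation_mul D hp fun P hP =>
        congrFun (LinearMap.mem_ker.1 hp0) ⟨P, hP⟩
      exact ⟨q, hq, hpq.symm⟩
    · rw [finrank_top, P1Pt.finrank_pi_res, finrank_forms, finrank_forms]
      omega
  obtain ⟨p, hp, hpt⟩ := hsurj.ge (Submodule.mem_top (x := fun P : D => t P.1))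
  exact ⟨p, hp, fun P hP => congrFun hpt ⟨P, hP⟩⟩

end EvalForm

/-- `H⁰(F_k, O(n, l))`: the section `∑ i, A_i * y ^ i * x ^ (n - i)` is encoded by its
dehomogenization at `x = 1`, with each `A_i` a dehomogenized form of degree `l - i * k`. -/
def globalSections (Fq : Type) [Field Fq] (n : ℕ) (l : ℤ) (k : ℕ) : Submodule Fq Fq[X][X] where
  carrier := {A | A.natDegree ≤ n ∧ ∀ i : ℕ, A.coeff i ∈ forms Fq (l - i * k)}
  add_mem' hA hB := ⟨natDegree_add_le_of_degree_le hA.1 hB.1, fun i => by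
    rw [coeff_add]
    exact add_mem (hA.2 i) (hB.2 i)⟩
  zero_mem' := ⟨by simp, fun i => by simp⟩
  smul_mem' c A hA := ⟨(natDegree_smul_le c A).trans hA.1, fun i => by
    rw [coeff_smul]
    exact Submodule.smul_mem _ c (hA.2 i)⟩

section GlobalSections

variable {k n n' : ℕ} {a b l l' : ℤ} {A B : Fq[X][X]}

theorem eq_zero_of_mem_globalSections (hl : l < 0) (hA : A ∈ globalSections Fq n l k) :
    A = 0 := by
  ext1 i
  have hik : (0 : ℤ) ≤ i * k := by positivity
  exact eq_zero_of_mem_forms (by omega) (hA.2 i)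

theorem mul_mem_globalSections (hA : A ∈ globalSections Fq n a k)
    (hB : B ∈ globalSections Fq n' b k) (h : a + b = l) :
    A * B ∈ globalSections Fq (n + n') l k := by
  refine ⟨natDegree_mul_le_of_le hA.1 hB.1, fun i => ?_⟩
  rw [coeff_mul]
  refine sum_mem fun ij hij => mul_mem_forms (hA.2 ij.1) (hB.2 ij.2) ?_
  rw [← mem_antidiagonal.1 hij, ← h]
  push_cast
  ring

theorem monomial_mem_globalSections {i : ℕ} (hi : i ≤ n) {p : Fq[X]}
    (hp : p ∈ forms Fq (l - i * k)) : monomial i p ∈ globalSections Fq n l k := by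
  refine ⟨(natDegree_monomial_le p).trans hi, fun j => ?_⟩
  rw [coeff_monomial]
  split_ifs with hij
  · exact hij ▸ hp
  · exact zero_mem _

/-- A section is determined by its coefficients, which are arbitrary forms of the right degrees. -/
def globalSectionsEquiv (Fq : Type) [Field Fq] (n : ℕ) (l : ℤ) (k : ℕ) :
    globalSections Fq n l k ≃ₗ[Fq] ((i : Fin (n + 1)) → forms Fq (l - (i : ℕ) * k)) where
  toFun A i := ⟨A.1.coeff i, A.2.2 i⟩
  map_add' _ _ := rfl
  map_smul' _ _ := rfl
  invFun c := ⟨∑ i : Fin (n + 1), monomial i (c i).1,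
    sum_mem fun i _ => monomial_mem_globalSections (Nat.lt_succ_iff.1 i.2) (c i).2⟩
  left_inv A := Subtype.ext <|
    (Fin.sum_univ_eq_sum_range (fun i => monomial i (A.1.coeff i)) (n + 1)).trans
      (as_sum_range' A.1 (n + 1) (Nat.lt_succ_iff.2 A.2.1)).symm
  right_inv c := by
    ext1 i
    simp [finsetSum_coeff, coeff_monomial, Fin.val_inj]

instance : Module.Finite Fq (globalSections Fq n l k) :=
  Module.Finite.equiv (globalSectionsEquiv Fq n l k).symm

theorem finrank_globalSections :
    Module.finrank Fq (globalSections Fq n l k) =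
      ∑ i ∈ Finset.range (n + 1), (l - i * k + 1).toNat := by
  rw [(globalSectionsEquiv Fq n l k).finrank_eq, Module.finrank_pi_fintype,
    ← Fin.sum_univ_eq_sum_range fun i : ℕ => (l - i * k + 1).toNat]
  simp only [finrank_forms]

end GlobalSections

/-- The restriction to the fiber over `P` of a section of `O(n, l)`, as a dehomogenized binary
form over the residue field. -/
def restrictFiber (l : ℤ) (k : ℕ) (P : P1Pt Fq) : Fq[X][X] →ₗ[Fq] P.Res[X] :=
  lsum fun i => (monomial i).restrictScalars Fq ∘ₗ evalForm (l - i * k) P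

section RestrictFiber

variable {k n n' : ℕ} {a b l : ℤ} {A B : Fq[X][X]} {P : P1Pt Fq}

theorem coeff_restrictFiber (l : ℤ) (k : ℕ) (P : P1Pt Fq) (A : Fq[X][X]) (i : ℕ) :
    (restrictFiber l k P A).coeff i = evalForm (l - i * k) P (A.coeff i) := by
  simp only [restrictFiber, lsum_apply, sum_def, finsetSum_coeff, LinearMap.comp_apply,
    LinearMap.restrictScalars_apply, coeff_monomial]
  rw [Finset.sum_ite_eq']
  split_ifs with hi
  · rfl
  · rw [notMem_support_iff.1 hi, map_zero]

theorem restrictFiber_monomial (l : ℤ) (k : ℕ) (P : P1Pt Fq) (i : ℕ) (p : Fq[X]) :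
    restrictFiber l k P (monomial i p) = monomial i (evalForm (l - i * k) P p) := by
  ext j
  rw [coeff_restrictFiber, coeff_monomial, coeff_monomial]
  split_ifs with hij
  · rw [hij]
  · rw [map_zero]

theorem natDegree_restrictFiber_le (l : ℤ) (k : ℕ) (P : P1Pt Fq) (hA : A.natDegree ≤ n) :
    (restrictFiber l k P A).natDegree ≤ n :=
  natDegree_le_iff_coeff_eq_zero.2 fun i hi => by
    rw [coeff_restrictFiber, natDegree_le_iff_coeff_eq_zero.1 hA i hi, map_zero]

theorem restrictFiber_mul (P : P1Pt Fq) (hA : A ∈ globalSections Fq n a k)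
    (hB : B ∈ globalSections Fq n' b k) (h : a + b = l) :
    restrictFiber l k P (A * B) = restrictFiber a k P A * restrictFiber b k P B := by
  ext i
  rw [coeff_restrictFiber, coeff_mul, coeff_mul, map_sum]
  refine Finset.sum_congr rfl fun ij hij => ?_
  rw [coeff_restrictFiber, coeff_restrictFiber]
  refine evalForm_mul P (hA.2 ij.1) (hB.2 ij.2) ?_
  rw [← mem_antidiagonal.1 hij, ← h]
  push_cast
  ring

theorem exists_eq_C_equation_mul (hA : A ∈ globalSections Fq n l k)
    (h : restrictFiber l k P A = 0) :
    ∃ B ∈ globalSections Fq n (l - P.deg) k, A = C P.equation * B := by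
  have hcoeff (i : ℕ) : ∃ q ∈ forms Fq (l - i * k - P.deg), A.coeff i = P.equation * q :=
    exists_eq_equation_mul (hA.2 i) (by rw [← coeff_restrictFiber, h, coeff_zero])
  choose q hq hAq using hcoeff
  refine ⟨∑ i ∈ Finset.range (n + 1), monomial i (q i), sum_mem fun i hi =>
    monomial_mem_globalSections (Finset.mem_range_succ_iff.1 hi) (by
      rw [sub_right_comm]
      exact hq i), ?_⟩
  rw [as_sum_range' A (n + 1) (Nat.lt_succ_iff.2 hA.1), Finset.mul_sum]
  exact Finset.sum_congr rfl fun i _ => by rw [C_mul_monomial, hAq]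

end RestrictFiber

/-- Homogeneous coordinates `(y : x)` of a point of a fiber, given in the encoding of the marking:
`some z` is the point with `x / y = z` and `none` is the point `y = 0`. -/
def markCoords {R : Type*} [CommRing R] : Option R → Fin 2 → R
  | some z => ![1, z]
  | none => ![0, 1]

/-- The value of a section of `O(n, l)` at the point `mk` of the fiber over `P`. -/
def evalMark (n : ℕ) (l : ℤ) (k : ℕ) (P : P1Pt Fq) (mk : Option P.Res) :
    Fq[X][X] →ₗ[Fq] P.Res :=
  (homEval n (markCoords mk)).restrictScalars Fq ∘ₗ restrictFiber l k P

section EvalMark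

variable {k n n' : ℕ} {a b l : ℤ} {A B : Fq[X][X]} {P : P1Pt Fq}

theorem evalMark_apply (n : ℕ) (l : ℤ) (k : ℕ) (P : P1Pt Fq) (mk : Option P.Res)
    (A : Fq[X][X]) :
    evalMark n l k P mk A = homEval n (markCoords mk) (restrictFiber l k P A) :=
  rfl

theorem evalMark_monomial {i : ℕ} (hi : i ≤ n) (l : ℤ) (k : ℕ) (P : P1Pt Fq)
    (mk : Option P.Res) (p : Fq[X]) :
    evalMark n l k P mk (monomial i p) =
      evalForm (l - i * k) P p * (markCoords mk 0 ^ i * markCoords mk 1 ^ (n - i)) := by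
  rw [evalMark_apply, restrictFiber_monomial, homEval_monomial hi, smul_eq_mul]

theorem evalMark_mul (P : P1Pt Fq) (mk : Option P.Res) (hA : A ∈ globalSections Fq n a k)
    (hB : B ∈ globalSections Fq n' b k) (h : a + b = l) :
    evalMark (n + n') l k P mk (A * B) = evalMark n a k P mk A * evalMark n' b k P mk B := by
  simp only [evalMark_apply, restrictFiber_mul P hA hB h]
  exact homEval_mul _ (natDegree_restrictFiber_le _ _ _ hA.1)
    (natDegree_restrictFiber_le _ _ _ hB.1)

end EvalMark

section Curve

variable {k n : ℕ} {a l m : ℤ} {A u : Fq[X][X]} {w : Fin 2 → Fq[X]} {P : P1Pt Fq}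

theorem homEval_mem_forms (hA : A ∈ globalSections Fq n l k) (hy : w 0 ∈ forms Fq (a + k))
    (hx : w 1 ∈ forms Fq a) : homEval n w A ∈ forms Fq (l + n * a) := by
  rw [homEval_eq_sum]
  refine sum_mem fun ij hij => mul_mem_forms (hA.2 ij.1) (mul_mem_forms
    (SetLike.pow_mem_graded ij.1 hy) (SetLike.pow_mem_graded ij.2 hx) rfl) ?_
  rw [← mem_antidiagonal.1 hij]
  push_cast
  ring

theorem evalForm_homEval (P : P1Pt Fq) (hA : A ∈ globalSections Fq n l k)
    (hy : w 0 ∈ forms Fq (a + k)) (hx : w 1 ∈ forms Fq a) :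
    evalForm (l + n * a) P (homEval n w A) =
      homEval n ![evalForm (a + k) P (w 0), evalForm a P (w 1)] (restrictFiber l k P A) := by
  simp only [homEval_eq_sum, map_sum]
  refine Finset.sum_congr rfl fun ij hij => ?_
  have hyi := SetLike.pow_mem_graded ij.1 hy
  have hxj := SetLike.pow_mem_graded ij.2 hx
  rw [smul_eq_mul, evalForm_mul P (hA.2 ij.1) (mul_mem_forms hyi hxj rfl),
    evalForm_mul P hyi hxj rfl, evalForm_pow P hy, evalForm_pow P hx, coeff_restrictFiber]
  · rfl
  · rw [← mem_antidiagonal.1 hij]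
    push_cast
    ring

theorem zeroOf_zero_mem_forms (hu : u ∈ globalSections Fq 1 m k) :
    zeroOf u 0 ∈ forms Fq (m - k + k) := by
  simpa [zeroOf] using hu.2 0

theorem zeroOf_one_mem_forms (hu : u ∈ globalSections Fq 1 m k) :
    zeroOf u 1 ∈ forms Fq (m - k) := by
  simpa [zeroOf] using hu.2 1

theorem exists_zeroOf_eq_smul_markCoords {R : Type*} [CommRing R] {v : R[X]} {mk : Option R}
    (hv : v.natDegree ≤ 1) (hv0 : v ≠ 0) (h : homEval 1 (markCoords mk) v = 0) :
    ∃ r : R, r ≠ 0 ∧ zeroOf v = r • markCoords mk := by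
  rw [homEval_one] at h
  have hcoeff (h0 : v.coeff 0 = 0) (h1 : v.coeff 1 = 0) : v = 0 := by
    rw [eq_X_add_C_of_natDegree_le_one hv, h0, h1]
    simp
  rcases mk with _ | z
  · have h0 : v.coeff 0 = 0 := by simpa [markCoords] using h
    exact ⟨-v.coeff 1, fun h1 => hv0 (hcoeff h0 (neg_eq_zero.1 h1)), by
      simp [zeroOf, markCoords, h0]⟩
  · have h1 : v.coeff 1 = -(v.coeff 0 * z) := by
      simpa [markCoords] using eq_neg_of_add_eq_zero_right h
    exact ⟨v.coeff 0, fun h0 => hv0 (hcoeff h0 (by simp [h1, h0])), by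
      simp [zeroOf, markCoords, h1]⟩

theorem exists_evalForm_homEval_zeroOf_eq (hu : u ∈ globalSections Fq 1 m k)
    (hP : restrictFiber m k P u ≠ 0) {mk : Option P.Res} (h : evalMark 1 m k P mk u = 0) :
    ∃ r : P.Res, r ≠ 0 ∧ ∀ A ∈ globalSections Fq n l k,
      evalForm (l + n * (m - k)) P (homEval n (zeroOf u) A) = r ^ n * evalMark n l k P mk A := by
  obtain ⟨r, hr, hzero⟩ :=
    exists_zeroOf_eq_smul_markCoords (natDegree_restrictFiber_le m k P hu.1) hP h
  have hcoords : ![evalForm (m - k + k) P (zeroOf u 0), evalForm (m - k) P (zeroOf u 1)] =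
      zeroOf (restrictFiber m k P u) := by
    simp [zeroOf, coeff_restrictFiber]
  refine ⟨r, hr, fun A hA => ?_⟩
  rw [evalForm_homEval P hA (zeroOf_zero_mem_forms hu) (zeroOf_one_mem_forms hu), hcoords,
    hzero, homEval_smul, evalMark_apply]

theorem exists_ne_zero_forall_evalMark_eq_zero (D : Finset (P1Pt Fq))
    (pt : (P : P1Pt Fq) → Option P.Res)
    (hD : degD D < ∑ i ∈ Finset.range (n + 1), (l - i * k + 1).toNat) :
    ∃ A ∈ globalSections Fq n l k, A ≠ 0 ∧ ∀ P ∈ D, evalMark n l k P (pt P) A = 0 := by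
  let evalD : globalSections Fq n l k →ₗ[Fq] (P : D) → P.1.Res :=
    LinearMap.pi fun P => evalMark n l k P.1 (pt P) ∘ₗ (globalSections Fq n l k).subtype
  have hinj : ¬ Function.Injective evalD := fun hinj =>
    hD.not_ge (by simpa only [P1Pt.finrank_pi_res, finrank_globalSections] using
      LinearMap.finrank_le_finrank_of_injective hinj)
  rw [injective_iff_map_eq_zero] at hinj
  push Not at hinj
  obtain ⟨A, hA, hA0⟩ := hinj
  exact ⟨A, A.2, fun h => hA0 (Subtype.ext h), fun P hP => congrFun hA ⟨P, hP⟩⟩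

theorem evalMark_mul_C_equation_eq_zero_iff {P' : P1Pt Fq} (h : P' ≠ P) {mk : Option P'.Res}
    (hA : A ∈ globalSections Fq n (l - P.deg) k) :
    evalMark n l k P' mk (A * C P.equation) = 0 ↔ evalMark n (l - P.deg) k P' mk A = 0 := by
  have hC : C P.equation ∈ globalSections Fq 0 (P.deg : ℤ) k :=
    monomial_mem_globalSections le_rfl (by simpa using P.equation_mem_forms)
  have hval : evalMark 0 P.deg k P' mk (C P.equation) = evalForm P.deg P' P.equation := by
    simp [← monomial_zero_left, evalMark_monomial le_rfl]
  have hmul := evalMark_mul P' mk hA hC (sub_add_cancel l _)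
  rw [hval] at hmul
  change evalMark (n + 0) l k P' mk _ = 0 ↔ _
  rw [hmul, mul_eq_zero, or_iff_left (evalForm_equation_ne_zero h)]

theorem exists_forall_restrictFiber_ne_zero (D : Finset (P1Pt Fq))
    (pt : (P : P1Pt Fq) → Option P.Res) (hu : u ∈ globalSections Fq n m k) (hu0 : u ≠ 0) :
    ∃ m' : ℤ, ∃ u' ∈ globalSections Fq n m' k, (∀ P, restrictFiber m' k P u' ≠ 0) ∧
      m' + degD {P ∈ D | evalMark n m' k P (pt P) u' ≠ 0} ≤
        m + degD {P ∈ D | evalMark n m k P (pt P) u ≠ 0} := by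
  induction hN : m.toNat using Nat.strong_induction_on generalizing m u with
  | _ N ih =>
    by_cases hfib : ∀ P, restrictFiber m k P u ≠ 0
    · exact ⟨m, u, hu, hfib, le_rfl⟩
    push Not at hfib
    obtain ⟨P, hP⟩ := hfib
    obtain ⟨v, hv, rfl⟩ := exists_eq_C_equation_mul hu hP
    have hv0 : v ≠ 0 := right_ne_zero_of_mul hu0
    have hm : 0 ≤ m - P.deg := not_lt.1 fun h => hv0 (eq_zero_of_mem_globalSections h hv)
    have hdeg := P.deg_pos
    obtain ⟨m', u', hu', hfib', hle⟩ := ih (m - P.deg).toNat (by omega) hv hv0 rfl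
    refine ⟨m', u', hu', hfib', hle.trans ?_⟩
    have hsub : {P' ∈ D | evalMark n (m - P.deg) k P' (pt P') v ≠ 0} ⊆
        insert P {P' ∈ D | evalMark n m k P' (pt P') (C P.equation * v) ≠ 0} := by
      intro P' hP'
      rw [Finset.mem_filter] at hP'
      rw [Finset.mem_insert, Finset.mem_filter, or_iff_not_imp_left, mul_comm]
      exact fun hne => ⟨hP'.1, (evalMark_mul_C_equation_eq_zero_iff hne hv).not.2 hP'.2⟩
    have hdegD := (degD_mono hsub).trans (degD_insert_le _ _)
    omega

end Curve

section Factor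

variable {k n n' n'' : ℕ} {l l' m : ℤ} {A q u : Fq[X][X]}

theorem isCoprime_coeff_zero_coeff_one (hu : u ∈ globalSections Fq 1 m k)
    (hfib : ∀ P, restrictFiber m k P u ≠ 0) : IsCoprime (u.coeff 0) (u.coeff 1) := by
  apply isCoprime_of_irreducible_dvd
  · rintro ⟨h0, h1⟩
    refine hfib none ?_
    rw [eq_X_add_C_of_natDegree_le_one hu.1, h0, h1]
    simp
  · intro z hz h0 h1
    have hassoc : Associated (normalize z) z := normalize_associated z
    let P : P1Pt Fq := some ⟨normalize z, monic_normalize hz.ne_zero, hassoc.symm.irreducible hz⟩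
    have hvanish {i : ℕ} (hi : z ∣ u.coeff i) : evalForm (m - i * k) P (u.coeff i) = 0 := by
      rw [evalForm_some _ (hu.2 i)]
      exact AdjoinRoot.mk_eq_zero.2 (hassoc.dvd.trans hi)
    refine hfib P ?_
    ext i
    rw [coeff_restrictFiber, coeff_zero]
    rcases i with _ | _ | i
    · exact hvanish h0
    · exact hvanish h1
    · rw [natDegree_le_iff_coeff_eq_zero.1 hu.1 _ (by omega), map_zero]

theorem restrictFiber_none_eq_zero (hA : A ∈ globalSections Fq n l k) (h : l < l') :
    restrictFiber l' k none A = 0 := by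
  ext i
  rw [coeff_restrictFiber, evalForm_none, coeff_zero]
  exact mem_forms.1 (hA.2 i) _ (by omega)

theorem exists_nat_mem_globalSections (hq : q.natDegree ≤ n) (l : ℤ) (k : ℕ) :
    ∃ j : ℕ, q ∈ globalSections Fq n (l + j) k := by
  obtain ⟨N, hN⟩ : ∃ N, ∀ i ∈ Finset.range (n + 1), (q.coeff i).natDegree + i * k ≤ N :=
    ⟨_, fun i hi => Finset.single_le_sum (f := fun i => (q.coeff i).natDegree + i * k)
      (fun _ _ => Nat.zero_le _) hi⟩
  refine ⟨N + l.natAbs, hq, fun i => mem_forms.2 fun e he => ?_⟩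
  rcases lt_or_ge n i with hi | hi
  · rw [natDegree_le_iff_coeff_eq_zero.1 hq i hi, coeff_zero]
  · have hdeg := hN i (Finset.mem_range_succ_iff.2 hi)
    refine coeff_eq_zero_of_natDegree_lt ?_
    zify at hdeg ⊢
    have habs := neg_abs_le l
    push_cast at he
    omega

theorem mem_globalSections_of_mul_mem (hq : q.natDegree ≤ n) (hu : u ∈ globalSections Fq n' m k)
    (hinf : restrictFiber m k none u ≠ 0) (h : q * u ∈ globalSections Fq n'' l k) :
    q ∈ globalSections Fq n (l - m) k := by
  obtain ⟨j, hj⟩ := exists_nat_mem_globalSections hq (l - m) k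
  induction j with
  | zero => simpa using hj
  | succ j ih =>
    -- In the twist by `j + 1` the product vanishes on the fiber at infinity while `u` does not, so
    -- `q` is divisible by `t₁`, whose dehomogenization is `1`.
    have hmul := restrictFiber_mul (l := l + (j + 1 : ℕ)) none hj hu (by ring)
    rw [restrictFiber_none_eq_zero h (by omega)] at hmul
    obtain ⟨q', hq', rfl⟩ := exists_eq_C_equation_mul hj
      ((mul_eq_zero.1 hmul.symm).resolve_right hinf)
    have hone : C (P1Pt.equation (none : P1Pt Fq)) = 1 := C_1
    have htwist : l - m + (j + 1 : ℕ) - P1Pt.deg (none : P1Pt Fq) = l - m + j := by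
      simp only [P1Pt.deg]
      omega
    rw [hone, one_mul] at ih ⊢
    exact ih (htwist ▸ hq')

theorem exists_eq_mul_of_mem_globalSections (hu : u ∈ globalSections Fq 1 m k)
    (hfib : ∀ P, restrictFiber m k P u ≠ 0) (hA : A ∈ globalSections Fq (n + 1) l k)
    (h : homEval (n + 1) (zeroOf u) A = 0) : ∃ q ∈ globalSections Fq n (l - m) k, A = q * u := by
  obtain ⟨q, hq, rfl⟩ := exists_eq_mul_of_homEval_zeroOf_eq_zero hu.1
    (isCoprime_coeff_zero_coeff_one hu hfib)
    (degree_le_natDegree.trans_lt (Nat.cast_lt.2 (Nat.lt_succ_iff.2 hA.1))) h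
  have hqn : q.natDegree ≤ n :=
    natDegree_le_iff_coeff_eq_zero.2 ((degree_lt_iff_coeff_zero q (n + 1)).1 hq)
  exact ⟨q, mem_globalSections_of_mul_mem hqn hu (hfib none) hA, rfl⟩

end Factor

section Interpolation

variable {k n : ℕ} {l m : ℤ} {u : Fq[X][X]}

theorem sum_toNat_add_toNat_le (hm : 0 ≤ m) (hl : 0 ≤ l - m - n * k + 1) :
    ∑ i ∈ Finset.range (n + 1), (l - m - i * k + 1).toNat +
        (l + (n + 1 : ℕ) * (m - k) + 1).toNat ≤
      ∑ i ∈ Finset.range (n + 2), (l - i * k + 1).toNat := by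
  have hterm : ∀ i ∈ Finset.range (n + 1),
      (l - i * k + 1).toNat = (l - m - i * k + 1).toNat + m.toNat := by
    intro i hi
    have hik : (i : ℤ) * k ≤ n * k := by
      have := Finset.mem_range_succ_iff.1 hi
      gcongr
    omega
  have hlast : (l + (n + 1 : ℕ) * (m - k) + 1).toNat ≤
      (n + 1) * m.toNat + (l - (n + 1 : ℕ) * k + 1).toNat := by
    have hnm : 0 ≤ ((n + 1 : ℕ) : ℤ) * m := by positivity
    zify
    rw [Int.toNat_of_nonneg hm, mul_sub]
    push_cast at hnm ⊢
    omega
  rw [Finset.sum_range_succ _ (n + 1), Finset.sum_congr rfl hterm, Finset.sum_add_distrib,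
    Finset.sum_const, Finset.card_range, smul_eq_mul]
  omega

theorem exists_homEval_zeroOf_eq (hu : u ∈ globalSections Fq 1 m k)
    (hfib : ∀ P, restrictFiber m k P u ≠ 0) (hl : 0 ≤ l - m - n * k + 1) {p : Fq[X]}
    (hp : p ∈ forms Fq (l + (n + 1 : ℕ) * (m - k))) :
    ∃ A ∈ globalSections Fq (n + 1) l k, homEval (n + 1) (zeroOf u) A = p := by
  have hm : 0 ≤ m := not_lt.1 fun hm => hfib none (by
    rw [eq_zero_of_mem_globalSections hm hu, map_zero])
  suffices (globalSections Fq (n + 1) l k).map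
      ((homEval (n + 1) (zeroOf u)).restrictScalars Fq) = forms Fq (l + (n + 1 : ℕ) * (m - k)) from
    this.ge hp
  refine map_eq_of_inf_ker_le_map (U := globalSections Fq n (l - m) k) (LinearMap.mulRight Fq u)
    _ ?_ ?_ ?_
  · rintro _ ⟨A, hA, rfl⟩
    exact homEval_mem_forms hA (zeroOf_zero_mem_forms hu) (zeroOf_one_mem_forms hu)
  · rintro A ⟨hA, hA0⟩
    obtain ⟨q, hq, hAq⟩ := exists_eq_mul_of_mem_globalSections hu hfib hA hA0
    exact ⟨q, hq, hAq.symm⟩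
  · simpa only [finrank_globalSections, finrank_forms] using sum_toNat_add_toNat_le hm hl

variable (D : Finset (P1Pt Fq)) (pt : (P : P1Pt Fq) → Option P.Res)

theorem exists_forall_evalMark_eq (hD : (degD D : ℤ) ≤ l - n * k + 1)
    (t : (P : P1Pt Fq) → P.Res) :
    ∃ A ∈ globalSections Fq n l k, ∀ P ∈ D, evalMark n l k P (pt P) A = t P := by
  have hnk : (0 : ℤ) ≤ n * k := by positivity
  obtain ⟨p, hp, hpt⟩ := exists_mem_forms_forall_evalForm_eq (d := l - (0 : ℕ) * k) D
    (by push_cast; omega) fun P => if pt P = none then t P else 0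
  obtain ⟨q, hq, hqt⟩ := exists_mem_forms_forall_evalForm_eq (d := l - n * k) D hD
    fun P => if pt P = none then 0 else t P
  refine ⟨monomial 0 p + monomial n q, add_mem (monomial_mem_globalSections n.zero_le hp)
    (monomial_mem_globalSections le_rfl hq), fun P hP => ?_⟩
  rw [map_add, evalMark_monomial n.zero_le, evalMark_monomial le_rfl, hpt P hP, hqt P hP]
  rcases pt P with _ | z
  · simp [markCoords]
  · simp [markCoords]

theorem exists_forall_evalMark_eq_of_forall_evalMark_eq_zero (hu : u ∈ globalSections Fq 1 m k)
    (hfib : ∀ P, restrictFiber m k P u ≠ 0) (hl : 0 ≤ l - m - n * k + 1)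
    (hD : (degD D : ℤ) ≤ l + (n + 1 : ℕ) * (m - k) + 1)
    (hzero : ∀ P ∈ D, evalMark 1 m k P (pt P) u = 0) (t : (P : P1Pt Fq) → P.Res) :
    ∃ A ∈ globalSections Fq (n + 1) l k, ∀ P ∈ D, evalMark (n + 1) l k P (pt P) A = t P := by
  choose! r hr hval using fun P hP =>
    exists_evalForm_homEval_zeroOf_eq (n := n + 1) (l := l) hu (hfib P) (hzero P hP)
  obtain ⟨p, hp, hpt⟩ := exists_mem_forms_forall_evalForm_eq D hD
    fun P => r P ^ (n + 1) * t P
  obtain ⟨A, hA, rfl⟩ := exists_homEval_zeroOf_eq hu hfib hl hp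
  refine ⟨A, hA, fun P hP => ?_⟩
  exact mul_left_cancel₀ (pow_ne_zero _ (hr P hP)) ((hval P hP A hA).symm.trans (hpt P hP))

theorem exists_forall_evalMark_mul_eq (hu : u ∈ globalSections Fq 1 m k)
    (hD : (degD D : ℤ) ≤ l - m - n * k + 1) (hne : ∀ P ∈ D, evalMark 1 m k P (pt P) u ≠ 0)
    (t : (P : P1Pt Fq) → P.Res) :
    ∃ q ∈ globalSections Fq n (l - m) k,
      ∀ P ∈ D, evalMark (n + 1) l k P (pt P) (q * u) = t P := by
  choose! v hv using fun (P : P1Pt Fq) (hP : P ∈ D) => P.isField_res.mul_inv_cancel (hne P hP)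
  obtain ⟨q, hq, hqt⟩ := exists_forall_evalMark_eq D pt hD fun P => t P * v P
  refine ⟨q, hq, fun P hP => ?_⟩
  rw [evalMark_mul P _ hq hu (by ring), hqt P hP, mul_assoc, mul_comm (v P), hv P hP, mul_one]

end Interpolation

section Dichotomy

variable {k n : ℕ} {l : ℤ} (D : Finset (P1Pt Fq)) (pt : (P : P1Pt Fq) → Option P.Res)

theorem exists_mem_globalSections_one_add_degD_le (k : ℕ) :
    ∃ m : ℤ, ∃ u ∈ globalSections Fq 1 m k, (∀ P, restrictFiber m k P u ≠ 0) ∧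
      2 * (m + degD {P ∈ D | evalMark 1 m k P (pt P) u ≠ 0}) ≤ degD D + k := by
  obtain ⟨u, hu, hu0, hzero⟩ := exists_ne_zero_forall_evalMark_eq_zero (n := 1) (k := k)
    (l := (degD D + k) / 2) D pt (by
      simp only [Finset.sum_range_succ, Finset.sum_range_zero, Nat.cast_zero, Nat.cast_one]
      omega)
  obtain ⟨m, u', hu', hfib, hle⟩ := exists_forall_restrictFiber_ne_zero D pt hu hu0
  have hempty : degD {P ∈ D | evalMark 1 ((degD D + k) / 2) k P (pt P) u ≠ 0} = 0 := by
    rw [Finset.filter_false_of_mem fun P hP => not_not.2 (hzero P hP)]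
    rfl
  exact ⟨m, u', hu', hfib, by omega⟩

theorem forall_exists_evalMark_eq_or_exists_forall_eq_mul
    (hrange : degD D + (2 * n + 1) * k ≤ 2 * l + 3) :
    (∀ t : (P : P1Pt Fq) → P.Res, ∃ A ∈ globalSections Fq (n + 1) l k,
      ∀ P ∈ D, evalMark (n + 1) l k P (pt P) A = t P) ∨
    ∃ m : ℤ, ∃ u ∈ globalSections Fq 1 m k, u ≠ 0 ∧ ∀ A ∈ globalSections Fq (n + 1) l k,
      (∀ P ∈ D, evalMark (n + 1) l k P (pt P) A = 0) →
        ∃ q ∈ globalSections Fq n (l - m) k, A = q * u := by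
  obtain ⟨m, u, hu, hfib, hle⟩ := exists_mem_globalSections_one_add_degD_le D pt k
  have hsplit := degD_filter_add_degD_filter_not D fun P => evalMark 1 m k P (pt P) u = 0
  set D₁ : Finset (P1Pt Fq) := {P ∈ D | evalMark 1 m k P (pt P) u = 0}
  set D₂ : Finset (P1Pt Fq) := {P ∈ D | evalMark 1 m k P (pt P) u ≠ 0}
  have hzero : ∀ P ∈ D₁, evalMark 1 m k P (pt P) u = 0 := fun P hP =>
    (Finset.mem_filter.1 hP).2
  have hne : ∀ P ∈ D₂, evalMark 1 m k P (pt P) u ≠ 0 := fun P hP => (Finset.mem_filter.1 hP).2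
  have hbound : degD D₂ ≤ l - m - n * k + 1 := by
    have hnk : (2 * n + 1) * (k : ℤ) = 2 * (n * k) + k := by ring
    omega
  rcases lt_or_ge (l + (n + 1 : ℕ) * (m - k)) (degD D₁) with hlt | hge
  · refine Or.inr ⟨m, u, hu, fun hu0 => hfib none (by rw [hu0, map_zero]), fun A hA hAD => ?_⟩
    refine exists_eq_mul_of_mem_globalSections hu hfib hA
      (eq_zero_of_forall_evalForm_eq_zero D₁ hlt (homEval_mem_forms hA
        (zeroOf_zero_mem_forms hu) (zeroOf_one_mem_forms hu)) fun P hP => ?_)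
    obtain ⟨r, -, hval⟩ := exists_evalForm_homEval_zeroOf_eq hu (hfib P) (hzero P hP)
    rw [hval A hA, hAD P (Finset.mem_filter.1 hP).1, mul_zero]
  · refine Or.inl fun t => ?_
    obtain ⟨A, hA, hAt⟩ := exists_forall_evalMark_eq_of_forall_evalMark_eq_zero (n := n) (l := l)
      D₁ pt hu hfib (by omega) (by omega) hzero t
    obtain ⟨q, hq, hqt⟩ := exists_forall_evalMark_mul_eq D₂ pt hu hbound hne
      fun P => t P - evalMark (n + 1) l k P (pt P) A
    refine ⟨A + q * u, add_mem hA (mul_mem_globalSections hq hu (by ring)), fun P hP => ?_⟩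
    rw [map_add]
    by_cases hP₁ : evalMark 1 m k P (pt P) u = 0
    · rw [hAt P (Finset.mem_filter.2 ⟨hP, hP₁⟩), evalMark_mul P _ hq hu (by ring), hP₁,
        mul_zero, add_zero]
    · rw [hqt P (Finset.mem_filter.2 ⟨hP, hP₁⟩), add_sub_cancel]

end Dichotomy

/-- The coefficient of `y ^ i * x ^ (n - i)` in a section of `O(n, l)`, as a homogeneous polynomial
in `t₀, t₁`; this translates the encoding of `globalSections` into that of `SecSet`. -/
def homCoeff (l : ℤ) (k : ℕ) (A : Fq[X][X]) (i : ℕ) : MvPolynomial (Fin 2) Fq :=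
  (A.coeff i).homogenize (l - i * k).toNat

section HomCoeff

variable {k n n' : ℕ} {a b l : ℤ} {A B q u : Fq[X][X]}

theorem isHomOfDeg_homCoeff (hA : A ∈ globalSections Fq n l k) (i : ℕ) :
    IsHomOfDeg (homCoeff l k A i) (l - i * k) :=
  isHomOfDeg_homogenize (hA.2 i)

theorem homCoeff_eq_zero_of_lt (hA : A ∈ globalSections Fq n l k) {i : ℕ} (hi : n < i) :
    homCoeff l k A i = 0 := by
  rw [homCoeff, natDegree_le_iff_coeff_eq_zero.1 hA.1 i hi, homogenize_zero]

theorem homCoeff_ne_zero (hA : A ∈ globalSections Fq n l k) (hA0 : A ≠ 0) :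
    (fun i : Fin (n + 1) => homCoeff l k A i) ≠ 0 := by
  intro h
  refine hA0 (Polynomial.ext fun i => ?_)
  rcases le_or_gt i n with hi | hi
  · exact eq_zero_of_mem_forms_of_homogenize_eq_zero (hA.2 i)
      (congrFun h ⟨i, Nat.lt_succ_iff.2 hi⟩)
  · exact natDegree_le_iff_coeff_eq_zero.1 hA.1 i hi

theorem homCoeff_mul (hA : A ∈ globalSections Fq n a k) (hB : B ∈ globalSections Fq n' b k)
    (h : a + b = l) (i : ℕ) :
    homCoeff l k (A * B) i =
      ∑ ij ∈ antidiagonal i, homCoeff a k A ij.1 * homCoeff b k B ij.2 := by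
  rw [homCoeff, coeff_mul, homogenize_finsetSum]
  refine Finset.sum_congr rfl fun ij hij => ?_
  refine homogenize_mul_of_mem_forms (hA.2 ij.1) (hB.2 ij.2) ?_
  rw [← mem_antidiagonal.1 hij, ← h]
  push_cast
  ring

theorem mem_secSet_iff_exists_homCoeff_eq {ℓ : ℕ} {s : Fin (n + 1) → MvPolynomial (Fin 2) Fq} :
    s ∈ SecSet n ℓ k ↔
      ∃ A ∈ globalSections Fq n ℓ k, (fun i : Fin (n + 1) => homCoeff ℓ k A i) = s := by
  refine ⟨fun hs => ?_, ?_⟩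
  · choose p hp hsp using fun i => (hs i).exists_eq_homogenize
    obtain ⟨A, hA⟩ := (globalSectionsEquiv Fq n ℓ k).surjective fun i => ⟨p i, hp i⟩
    refine ⟨A, A.2, funext fun i => ?_⟩
    rw [hsp i, homCoeff, show A.1.coeff i = p i from congrArg Subtype.val (congrFun hA i)]
  · rintro ⟨A, hA, rfl⟩ i
    exact isHomOfDeg_homCoeff hA i

theorem evalAt3_homCoeff (l : ℤ) (k : ℕ) (P : P1Pt Fq) (mk : Option P.Res) (A : Fq[X][X]) :
    evalAt3 P mk (fun i => homCoeff l k A i) = evalMark 3 l k P mk A := by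
  have hcoeff (i : ℕ) : resEval P (homCoeff l k A i) = (restrictFiber l k P A).coeff i := by
    rw [homCoeff, resEval_homogenize, coeff_restrictFiber]
    rfl
  have hval : evalMark 3 l k P mk A =
      resEval P (homCoeff l k A 0) * markCoords mk 1 ^ 3 +
        resEval P (homCoeff l k A 1) * (markCoords mk 0 * markCoords mk 1 ^ 2) +
        resEval P (homCoeff l k A 2) * (markCoords mk 0 ^ 2 * markCoords mk 1) +
        resEval P (homCoeff l k A 3) * markCoords mk 0 ^ 3 := by
    simp [evalMark_apply, homEval_eq_sum, hcoeff, Finset.Nat.antidiagonal_succ, add_assoc]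
  rcases mk with _ | z
  · simp [evalAt3, hval, markCoords]
  · simp [evalAt3, hval, markCoords]

theorem horizRed_homCoeff_mul (hq : q ∈ globalSections Fq 2 a k) (hu : u ∈ globalSections Fq 1 b k)
    (hu0 : u ≠ 0) (h : a + b = l) : HorizRed k fun i => homCoeff l k (q * u) i := by
  rcases eq_or_ne q 0 with rfl | hq0
  · exact Or.inl (funext fun i => by simp [homCoeff])
  refine Or.inr ⟨a, b, fun j => homCoeff a k q j, fun j => homCoeff b k u j,
    homCoeff_ne_zero hq hq0, homCoeff_ne_zero hu hu0,
    fun j => isHomOfDeg_homCoeff hq j, fun j => isHomOfDeg_homCoeff hu j, ?_⟩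
  have hq3 : homCoeff a k q 3 = 0 := homCoeff_eq_zero_of_lt hq (by norm_num)
  have hu2 : homCoeff b k u 2 = 0 := homCoeff_eq_zero_of_lt hu (by norm_num)
  have hu3 : homCoeff b k u 3 = 0 := homCoeff_eq_zero_of_lt hu (by norm_num)
  simp [homCoeff_mul hq hu h, Finset.Nat.antidiagonal_succ, hq3, hu2, hu3]

end HomCoeff

theorem statement_12_general (Fq : Type) [Field Fq] (ℓ k : ℕ) (D : Finset (P1Pt Fq))
    (pt : (P : P1Pt Fq) → Option (P1Pt.Res P)) (hrange : degD D + 5 * k ≤ 2 * ℓ + 3) :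
    (∀ t : (P : P1Pt Fq) → P ∈ D → P1Pt.Res P,
      ∃ s ∈ SecSet 3 ℓ k, ∀ P : P1Pt Fq, ∀ hP : P ∈ D, evalAt3 P (pt P) s = t P hP) ∨
    (∀ s ∈ SecSet 3 ℓ k, (∀ P ∈ D, evalAt3 P (pt P) s = 0) → HorizRed k s) := by
  rcases forall_exists_evalMark_eq_or_exists_forall_eq_mul (n := 2) (l := ℓ) (k := k) D pt
    (by omega) with hsurj | ⟨m, u, hu, hu0, hmul⟩
  · refine Or.inl fun t => ?_
    obtain ⟨A, hA, hAt⟩ := hsurj fun P => if hP : P ∈ D then t P hP else 0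
    refine ⟨_, mem_secSet_iff_exists_homCoeff_eq.2 ⟨A, hA, rfl⟩, fun P hP => ?_⟩
    rw [evalAt3_homCoeff, hAt P hP, dif_pos hP]
  · refine Or.inr fun s hs hzero => ?_
    obtain ⟨A, hA, rfl⟩ := mem_secSet_iff_exists_homCoeff_eq.1 hs
    obtain ⟨q, hq, rfl⟩ := hmul A hA fun P hP => by rw [← evalAt3_homCoeff, hzero P hP]
    exact horizRed_homCoeff_mul hq hu hu0 (by ring)

/-- Let `D` be a reduced effective divisor on `P¹`, `k ≥ 0`,
`𝒟 ⊆ F_k` a `D`-marking, `ℓ ≥ 0`, and `L = O(3,ℓ)` on `F_k`.  If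
`ℓ − 2k ≥ (deg D + k)/2` (i.e. `deg D + 5k ≤ 2ℓ`), then either the restriction map
`α : H⁰(F_k, L) → H⁰(𝒟, O_𝒟)` is surjective, or every section in `ker α` is
horizontally reducible. -/
theorem statement_12 (Fq : Type) [Field Fq] [Fintype Fq] (ℓ k : ℕ)
    (D : Finset (P1Pt Fq)) (pt : (P : P1Pt Fq) → Option (P1Pt.Res P))
    (hrange : degD D + 5 * k ≤ 2 * ℓ) :
    (∀ t : (P : P1Pt Fq) → P ∈ D → P1Pt.Res P,
      ∃ s ∈ SecSet 3 ℓ k, ∀ P : P1Pt Fq, ∀ hP : P ∈ D, evalAt3 P (pt P) s = t P hP) ∨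
    (∀ s ∈ SecSet 3 ℓ k, (∀ P ∈ D, evalAt3 P (pt P) s = 0) → HorizRed k s) :=
  statement_12_general Fq ℓ k D pt (by omega)

end Stmt12
end
end

section
/- Let ℓ, k, c ≥ 0 be integers with ℓ − 3k ≥ 0 and ℓ − 2k ≥ c, and let σ ∈ H⁰(F_k, O(1,c)) be a nonzero irreducible section. Let Img(σ) be the image of multiplication by σ: H⁰(F_k, O(2, ℓ−c)) → H⁰(F_k, O(3,ℓ)). Then for every reduced effective divisor D on P¹: Σ_{s ∈ Img(σ), s ≠ 0} r_D(s) = O(5^{ω(D)} q^{3ℓ−3k−3c}) and Σ_{s ∈ Img(σ), s ≠ 0} |a_D(s)| = O(3^{ω(D)} q^{3ℓ−3k−3c}), with implied constants depending only on q. -/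
/-!
Statement 13. Estimates for the root-counting sums over the `σ`-reducible
binary cubic forms on a Hirzebruch surface `F_k` over `F_q`.

We model the Hirzebruch surface `F_k = P(O ⊕ O(−k)) → P¹` over `F_q` concretely:
* closed points of `P¹` are the point at infinity together with monic irreducible
  polynomials over `F_q`;
* global sections of `O(m, ℓ)` on `F_k` are tuples `(A₀, …, A_m)` of binary forms
  `A_i ∈ F_q[t₀, t₁]` homogeneous of degree `ℓ − i·k`, corresponding to
  `A₀ x^m + A₁ x^{m−1} y + ⋯ + A_m y^m`;
* for a closed point `P` of `P¹`, `r_P(s)` is the number of relative degree one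
  points of the fiber over `P` (that is, points of `P¹(κ(P))`) at which `s` vanishes,
  and `r_D(s) = ∏_{P ∣ D} r_P(s)`, `a_D(s) = ∏_{P ∣ D} (r_P(s) − 1)`.
-/

open scoped Classical

noncomputable section

namespace Stmt13

/-- Closed points of the projective line `P¹` over `F_q`: `none` is the point at
infinity, and `some p` corresponds to the monic irreducible polynomial `p`. -/
abbrev P1Pt (Fq : Type) [Field Fq] : Type :=
  Option {p : Polynomial Fq // p.Monic ∧ Irreducible p}

variable {Fq : Type} [Field Fq]

/-- The degree of a closed point of `P¹`. -/
def P1Pt.deg : P1Pt Fq → ℕ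
  | none => 1
  | some p => p.1.natDegree

/-- The residue field of a closed point of `P¹`. -/
def P1Pt.Res : P1Pt Fq → Type
  | none => Fq
  | some p => AdjoinRoot p.1

instance (P : P1Pt Fq) : CommRing (P1Pt.Res P) :=
  match P with
  | none => inferInstanceAs (CommRing Fq)
  | some p => inferInstanceAs (CommRing (AdjoinRoot p.1))

instance (P : P1Pt Fq) : Algebra Fq (P1Pt.Res P) :=
  match P with
  | none => Algebra.id Fq
  | some p => inferInstanceAs (Algebra Fq (AdjoinRoot p.1))

/-- The homogeneous coordinates `(t₀ : t₁)` of a closed point of `P¹`, in its residue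
field: `(1 : 0)` for the point at infinity, and `(θ : 1)` with `θ` the root of `p`
for the point `some p`. -/
def P1Pt.coords : (P : P1Pt Fq) → Fin 2 → P1Pt.Res P
  | none => ![1, 0]
  | some p => ![AdjoinRoot.root p.1, 1]

/-- Evaluate a polynomial in the homogeneous coordinates `t₀, t₁` of the base `P¹`
at a closed point `P`, in the residue field of `P`. -/
def resEval (P : P1Pt Fq) (A : MvPolynomial (Fin 2) Fq) : P1Pt.Res P :=
  MvPolynomial.aeval (P1Pt.coords P) A

/-- `r_P(s)`: the number of relative degree one points of the fiber of `F_k → P¹`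
over `P` at which the binary cubic form `s = (A₀, A₁, A₂, A₃)` vanishes.  These
points are the `(z : 1)` with `z` in the residue field of `P`, together with `(1 : 0)`. -/
def rP (P : P1Pt Fq) (s : Fin 4 → MvPolynomial (Fin 2) Fq) : ℕ :=
  Nat.card {z : P1Pt.Res P //
      resEval P (s 0) * z ^ 3 + resEval P (s 1) * z ^ 2
        + resEval P (s 2) * z + resEval P (s 3) = 0} +
    (if resEval P (s 0) = 0 then 1 else 0)

/-- The degree of a reduced effective divisor (a finite set of closed points) on `P¹`. -/
def degD (D : Finset (P1Pt Fq)) : ℕ := ∑ P ∈ D, P1Pt.deg P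

/-- `r_D(s) = ∏_{P ∣ D} r_P(s)`. -/
def rD (D : Finset (P1Pt Fq)) (s : Fin 4 → MvPolynomial (Fin 2) Fq) : ℕ :=
  ∏ P ∈ D, rP P s

/-- `a_D(s) = ∏_{P ∣ D} (r_P(s) − 1)`. -/
def aD (D : Finset (P1Pt Fq)) (s : Fin 4 → MvPolynomial (Fin 2) Fq) : ℤ :=
  ∏ P ∈ D, ((rP P s : ℤ) - 1)

/-- `p` is homogeneous of (possibly negative) degree `d`; for `d < 0` this forces
`p = 0`. -/
def IsHomOfDeg (p : MvPolynomial (Fin 2) Fq) (d : ℤ) : Prop :=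
  p.IsHomogeneous d.toNat ∧ (d < 0 → p = 0)

/-- The space of global sections of `O(m, ℓ)` on the Hirzebruch surface `F_k`,
viewed as tuples `(A₀, …, A_m)` of binary forms with `A_i` homogeneous of degree
`ℓ − i·k`. -/
def SecSet (m ℓ k : ℕ) : Set (Fin (m + 1) → MvPolynomial (Fin 2) Fq) :=
  {s | ∀ i : Fin (m + 1), IsHomOfDeg (s i) ((ℓ : ℤ) - (i : ℕ) * k)}

/-!
Write an element of the image as `s = σ * B` with `B` a section of `O(2, ℓ - c)`. At a closed
point `P`, either `s` does not vanish identically on the fiber over `P`, and then `r_P(s) ≤ 3`, or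
it does, and then `r_P(s) = q ^ deg P + 1`. Since the coefficients of `σ` are coprime, `σ` is
nonzero on every fiber, so in the second case `B` vanishes on the fiber over `P`. Hence
`r_P(s) ≤ 3 + [B vanishes at P] * q ^ deg P` and `|r_P(s) - 1| ≤ 2 + [B vanishes at P] * q ^ deg P`.
Expanding the product over `P ∈ D` gives one term for each `E ⊆ D` on which `B` vanishes, with
weight `q ^ deg E`. If a nonzero `B` vanishes on `E`, then its entries, being divisible by a form
of degree `deg E`, are so constrained that the number of these `B` drops by a factor `q ^ deg E`.
So each `E` contributes `O(q ^ (3 * (ℓ - c - k)))`, and the binomial theorem gives the factors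
`(3 + 1) ^ ω(D)` and `(2 + 1) ^ ω(D)`.
-/

section General

theorem prod_ite_zero_add_const {ι M : Type*} [CommSemiring M] (s : Finset ι)
    (p : ι → Prop) [DecidablePred p] (f : ι → M) (a : M) :
    ∏ i ∈ s, ((if p i then f i else 0) + a) =
      ∑ t ∈ s.powerset, (if ∀ i ∈ t, p i then ∏ i ∈ t, f i else 0) * a ^ (s.card - t.card) := by
  rw [Finset.prod_add]
  refine Finset.sum_congr rfl fun t ht => ?_
  rw [Finset.prod_ite_zero, Finset.prod_const,
    Finset.card_sdiff_of_subset (Finset.mem_powerset.1 ht)]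

theorem finsum_mem_le_sum_of_subset_image {α β M : Type*} [AddCommMonoid M] [PartialOrder M]
    [IsOrderedAddMonoid M] [CanonicallyOrderedAdd M] {s : Finset α} {t : Set β} {φ : α → β}
    (h : t ⊆ φ '' s) (f : β → M) : ∑ᶠ y ∈ t, f y ≤ ∑ x ∈ s, f (φ x) := by
  classical
  have ht : t.Finite := (s.finite_toSet.image φ).subset h
  calc ∑ᶠ y ∈ t, f y = ∑ y ∈ ht.toFinset, f y := finsum_mem_eq_finite_toFinset_sum f ht
    _ ≤ ∑ y ∈ s.image φ, f y := Finset.sum_le_sum_of_subset (by simpa using h)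
    _ ≤ ∑ x ∈ s, f (φ x) := Finset.sum_image_le_of_nonneg fun _ _ => zero_le

open Polynomial in
theorem card_isRoot_add_ite_coeff_le {R : Type*} [CommRing R] [IsDomain R] {p : R[X]} {n : ℕ}
    (hp : p ≠ 0) (hn : p.natDegree ≤ n) :
    Nat.card {z // p.IsRoot z} + (if p.coeff n = 0 then 1 else 0) ≤ n := by
  have hroots : Nat.card {z // p.IsRoot z} ≤ p.natDegree := by
    have hcoe : {z | p.IsRoot z} = p.roots.toFinset := by ext z; simp [hp]
    calc Nat.card {z // p.IsRoot z} = p.roots.toFinset.card := by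
          rw [← Set.ncard_coe_finset, ← hcoe]; rfl
      _ ≤ p.roots.card := p.roots.toFinset_card_le
      _ ≤ p.natDegree := p.card_roots'
  split_ifs with hcoeff
  · have hne : p.natDegree ≠ n := by
      rintro rfl
      exact hp (leadingCoeff_eq_zero.1 hcoeff)
    lia
  · lia

end General

section Multiplication

variable {R S : Type*} [CommRing R] [CommRing S]

/-- The coefficients of the binary cubic form `(u₀ x + u₁ y) (b₀ x² + b₁ x y + b₂ y²)`, so that
`mulSec σ` is multiplication by the section `σ` of `O(1, c)`. -/
def mulSec (u : Fin 2 → R) (b : Fin 3 → R) : Fin 4 → R :=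
  ![b 0 * u 0, b 0 * u 1 + b 1 * u 0, b 1 * u 1 + b 2 * u 0, b 2 * u 1]

theorem mulSec_zero (u : Fin 2 → R) : mulSec u 0 = 0 := by
  ext i; fin_cases i <;> simp [mulSec]

theorem map_mulSec (f : R →+* S) (u : Fin 2 → R) (b : Fin 3 → R) (i : Fin 4) :
    f (mulSec u b i) = mulSec (f ∘ u) (f ∘ b) i := by
  fin_cases i <;> simp [mulSec]

theorem eq_zero_of_mulSec_eq_zero [NoZeroDivisors R] {u : Fin 2 → R} {b : Fin 3 → R}
    (hu : u ≠ 0) (h : mulSec u b = 0) : b = 0 := by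
  have h0 : b 0 * u 0 = 0 := congrFun h 0
  have h1 : b 0 * u 1 + b 1 * u 0 = 0 := congrFun h 1
  have h2 : b 1 * u 1 + b 2 * u 0 = 0 := congrFun h 2
  have h3 : b 2 * u 1 = 0 := congrFun h 3
  by_cases hu0 : u 0 = 0
  · have hu1 : u 1 ≠ 0 := fun hu1 => hu (by ext i; fin_cases i <;> assumption)
    ext i; fin_cases i <;> simp_all
  · have hb0 : b 0 = 0 := (mul_eq_zero_iff_right hu0).1 h0
    have hb1 : b 1 = 0 := by simpa [hb0, hu0] using h1
    have hb2 : b 2 = 0 := by simpa [hb1, hu0] using h2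
    ext i; fin_cases i <;> assumption

theorem image_mulSec_diff_zero (u : Fin 2 → R) (Z : Set (Fin 3 → R)) :
    mulSec u '' Z \ {0} = {s | s ≠ 0 ∧ ∃ b ∈ Z, s 0 = b 0 * u 0 ∧ s 1 = b 0 * u 1 + b 1 * u 0 ∧
      s 2 = b 1 * u 1 + b 2 * u 0 ∧ s 3 = b 2 * u 1} := by
  ext s
  have heq : ∀ b, mulSec u b = s ↔ s 0 = b 0 * u 0 ∧ s 1 = b 0 * u 1 + b 1 * u 0 ∧
      s 2 = b 1 * u 1 + b 2 * u 0 ∧ s 3 = b 2 * u 1 := by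
    intro b
    rw [eq_comm, funext_iff, Fin.forall_fin_succ, Fin.forall_fin_succ, Fin.forall_fin_two]
    rfl
  simp only [Set.mem_sdiff, Set.mem_image, Set.mem_singleton_iff, Set.mem_ofPred_eq, heq]
  exact and_comm

end Multiplication

section Dehomogenization

open Polynomial

variable {R : Type*} [CommSemiring R]

/-- Dehomogenization of binary forms at the point `(1 : 0)`, that is, `t₀ ↦ X` and `t₁ ↦ 1`; it
turns a form of degree `n` into a polynomial of degree at most `n`. -/
def dehomogenize : MvPolynomial (Fin 2) R →ₐ[R] R[X] := MvPolynomial.aeval ![X, 1]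

theorem homogenize_dehomogenize {A : MvPolynomial (Fin 2) R} {n : ℕ} (hA : A.IsHomogeneous n) :
    (dehomogenize A).homogenize n = A :=
  homogenize_eq_of_isHomogeneous hA rfl

theorem natDegree_dehomogenize_le {A : MvPolynomial (Fin 2) R} {n : ℕ}
    (hA : A.IsHomogeneous n) : (dehomogenize A).natDegree ≤ n := by
  have hcoords : ∀ i, (![X, 1] i : R[X]).natDegree ≤ 1 := by
    rw [Fin.forall_fin_two]
    exact ⟨natDegree_X_le, by simp⟩
  exact (MvPolynomial.aeval_natDegree_le A hA.totalDegree_le _ hcoords).trans_eq (mul_one n)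

theorem aeval_homogenize_one_zero (p : R[X]) (n : ℕ) :
    MvPolynomial.aeval ![1, 0] (p.homogenize n) = p.coeff n := by
  induction p using Polynomial.induction_on' with
  | add p q hp hq => rw [homogenize_add, map_add, hp, hq, coeff_add]
  | monomial m r =>
    rcases lt_trichotomy m n with hmn | rfl | hnm
    · simp [homogenize_monomial hmn.le, MvPolynomial.aeval_monomial, coeff_monomial, hmn.ne,
        Nat.sub_ne_zero_of_lt hmn]
    · simp [MvPolynomial.aeval_monomial]
    · simp [homogenize_monomial_of_lt hnm, coeff_monomial, hnm.ne']

end Dehomogenization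

section ClosedPoints

instance (P : P1Pt Fq) : IsDomain P.Res :=
  match P with
  | none => inferInstanceAs (IsDomain Fq)
  | some p =>
    haveI : Fact (Irreducible p.1) := ⟨p.2.2⟩
    inferInstanceAs (IsDomain (AdjoinRoot p.1))

theorem card_res [Fintype Fq] (P : P1Pt Fq) : Nat.card P.Res = Fintype.card Fq ^ P.deg := by
  cases P with
  | none =>
    change Nat.card Fq = Fintype.card Fq ^ 1
    rw [pow_one, Nat.card_eq_fintype_card]
  | some p =>
    change Nat.card (AdjoinRoot p.1) = Fintype.card Fq ^ p.1.natDegree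
    rw [Nat.card_congr (AdjoinRoot.powerBasis' p.2.1).basis.equivFun.toEquiv]
    simp

theorem resEval_none {A : MvPolynomial (Fin 2) Fq} {n : ℕ} (hA : A.IsHomogeneous n) :
    resEval none A = (dehomogenize A).coeff n := by
  rw [← aeval_homogenize_one_zero, homogenize_dehomogenize hA]
  rfl

theorem resEval_some (p : {p : Polynomial Fq // p.Monic ∧ Irreducible p})
    (A : MvPolynomial (Fin 2) Fq) :
    resEval (some p) A = AdjoinRoot.mk p.1 (dehomogenize A) := by
  have hcomp : (AdjoinRoot.mkₐ p.1).comp dehomogenize =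
      MvPolynomial.aeval (![AdjoinRoot.root p.1, 1] : Fin 2 → AdjoinRoot p.1) := by
    ext i
    fin_cases i <;> simp [dehomogenize]
  exact (DFunLike.congr_fun hcomp A).symm

theorem resEval_some_eq_zero_iff (p : {p : Polynomial Fq // p.Monic ∧ Irreducible p})
    (A : MvPolynomial (Fin 2) Fq) : resEval (some p) A = 0 ↔ p.1 ∣ dehomogenize A := by
  rw [resEval_some]
  exact AdjoinRoot.mk_eq_zero

theorem natDegree_dehomogenize_lt {A : MvPolynomial (Fin 2) Fq} {n : ℕ} (hA : A.IsHomogeneous n)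
    (h0 : dehomogenize A ≠ 0) (hinf : resEval none A = 0) : (dehomogenize A).natDegree < n := by
  refine (natDegree_dehomogenize_le hA).lt_of_ne ?_
  rintro rfl
  exact h0 (Polynomial.leadingCoeff_eq_zero.1 ((resEval_none hA).symm.trans hinf))

/-- The binary form of degree `P.deg` whose only zero on `P¹` is the closed point `P`. -/
def pointForm : P1Pt Fq → MvPolynomial (Fin 2) Fq
  | none => MvPolynomial.X 1
  | some p => p.1.homogenize p.1.natDegree

theorem not_isUnit_pointForm (P : P1Pt Fq) : ¬IsUnit (pointForm P) := by
  intro h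
  cases P with
  | none => simpa [pointForm] using h.map (MvPolynomial.aeval (0 : Fin 2 → Fq))
  | some p =>
    refine p.2.2.not_isUnit ?_
    simpa [pointForm, dehomogenize] using h.map dehomogenize

theorem pointForm_dvd {P : P1Pt Fq} {A : MvPolynomial (Fin 2) Fq} {n : ℕ}
    (hA : A.IsHomogeneous n) (hP : resEval P A = 0) : pointForm P ∣ A := by
  rw [← homogenize_dehomogenize hA]
  by_cases h0 : dehomogenize A = 0
  · rw [h0, Polynomial.homogenize_zero]
    exact dvd_zero _
  cases P with
  | none =>
    have hlt := natDegree_dehomogenize_lt hA h0 hP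
    have hmul := Polynomial.homogenize_mul 1 (dehomogenize A) (m := 1) (n := n - 1)
      (by simp) (by lia)
    rw [one_mul, Nat.add_sub_cancel' (by lia), Polynomial.homogenize_one, pow_one] at hmul
    exact hmul ▸ dvd_mul_right _ _
  | some p =>
    obtain ⟨g, hg⟩ := (resEval_some_eq_zero_iff p A).1 hP
    have hg0 : g ≠ 0 := right_ne_zero_of_mul (hg ▸ h0)
    have hdeg : p.1.natDegree + g.natDegree ≤ n := by
      rw [← Polynomial.natDegree_mul p.2.2.ne_zero hg0, ← hg]
      exact natDegree_dehomogenize_le hA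
    have hmul := Polynomial.homogenize_mul p.1 g (n := n - p.1.natDegree) le_rfl (by lia)
    rw [← hg, Nat.add_sub_cancel' (by lia)] at hmul
    exact hmul ▸ dvd_mul_right _ _

/-- The entries of the tuple `s` of binary forms all vanish at `P`; for a section of `O(m, ℓ)`
this says that it vanishes identically on the fiber over `P`. -/
def VanishesAt {ι : Type*} (P : P1Pt Fq) (s : ι → MvPolynomial (Fin 2) Fq) : Prop :=
  ∀ i, resEval P (s i) = 0

theorem not_vanishesAt_of_isRelPrime {σ : Fin 2 → MvPolynomial (Fin 2) Fq} {n : Fin 2 → ℕ}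
    (hσ : ∀ i, (σ i).IsHomogeneous (n i)) (hrel : IsRelPrime (σ 0) (σ 1)) (P : P1Pt Fq) :
    ¬VanishesAt P σ := fun hP =>
  not_isUnit_pointForm P (hrel (pointForm_dvd (hσ 0) (hP 0)) (pointForm_dvd (hσ 1) (hP 1)))

theorem vanishesAt_of_mulSec {P : P1Pt Fq} {σ : Fin 2 → MvPolynomial (Fin 2) Fq}
    {B : Fin 3 → MvPolynomial (Fin 2) Fq} (hσ : ¬VanishesAt P σ)
    (h : VanishesAt P (mulSec σ B)) : VanishesAt P B := by
  let ev : MvPolynomial (Fin 2) Fq →+* P.Res := (MvPolynomial.aeval P.coords).toRingHom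
  refine congrFun (eq_zero_of_mulSec_eq_zero (u := ev ∘ σ) (fun hev => hσ (congrFun hev)) ?_)
  funext i
  exact (map_mulSec ev σ B i).symm.trans (h i)

end ClosedPoints

section FiberRoots

/-- The restriction of the binary cubic form `s` to the fiber over `P`, in the affine
coordinate `z = x / y`. -/
def fiberCubic (P : P1Pt Fq) (s : Fin 4 → MvPolynomial (Fin 2) Fq) : Cubic P.Res :=
  ⟨resEval P (s 0), resEval P (s 1), resEval P (s 2), resEval P (s 3)⟩

theorem rP_eq_card_isRoot_add (P : P1Pt Fq) (s : Fin 4 → MvPolynomial (Fin 2) Fq) :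
    rP P s = Nat.card {z // (fiberCubic P s).toPoly.IsRoot z} +
      if (fiberCubic P s).toPoly.coeff 3 = 0 then 1 else 0 := by
  simp [rP, fiberCubic, Cubic.toPoly, Polynomial.IsRoot]

theorem fiberCubic_eq_zero_iff (P : P1Pt Fq) (s : Fin 4 → MvPolynomial (Fin 2) Fq) :
    fiberCubic P s = 0 ↔ VanishesAt P s := by
  rw [Cubic.ext_iff, VanishesAt, Fin.forall_fin_succ, Fin.forall_fin_succ, Fin.forall_fin_two]
  rfl

theorem rP_le_three {P : P1Pt Fq} {s : Fin 4 → MvPolynomial (Fin 2) Fq}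
    (h : ¬VanishesAt P s) : rP P s ≤ 3 := by
  rw [rP_eq_card_isRoot_add]
  refine card_isRoot_add_ite_coeff_le ?_ Polynomial.natDegree_cubic_le
  rwa [Ne, Cubic.toPoly_eq_zero_iff, fiberCubic_eq_zero_iff]

theorem rP_eq_of_vanishesAt [Fintype Fq] {P : P1Pt Fq} {s : Fin 4 → MvPolynomial (Fin 2) Fq}
    (h : VanishesAt P s) : rP P s = Fintype.card Fq ^ P.deg + 1 := by
  rw [rP_eq_card_isRoot_add, (fiberCubic_eq_zero_iff P s).2 h, Cubic.zero, ← card_res]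
  simp [Polynomial.IsRoot]

theorem rP_le_ite_vanishesAt_add [Fintype Fq] (P : P1Pt Fq)
    (s : Fin 4 → MvPolynomial (Fin 2) Fq) :
    rP P s ≤ (if VanishesAt P s then Fintype.card Fq ^ P.deg else 0) + 3 := by
  split_ifs with h
  · rw [rP_eq_of_vanishesAt h]
    lia
  · exact (rP_le_three h).trans (Nat.le_add_left _ _)

theorem natAbs_rP_sub_one_le_ite_vanishesAt_add [Fintype Fq] (P : P1Pt Fq)
    (s : Fin 4 → MvPolynomial (Fin 2) Fq) :
    ((rP P s : ℤ) - 1).natAbs ≤ (if VanishesAt P s then Fintype.card Fq ^ P.deg else 0) + 2 := by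
  split_ifs with h
  · rw [rP_eq_of_vanishesAt h]
    lia
  · have := rP_le_three h
    lia

end FiberRoots

section Counting

open Polynomial

/-- The binary forms of degree `n` vanishing on the reduced divisor `D`. -/
def vanishingForms (n : ℕ) (D : Finset (P1Pt Fq)) : Set (MvPolynomial (Fin 2) Fq) :=
  {A | A.IsHomogeneous n ∧ ∀ P ∈ D, resEval P A = 0}

/-- The monic polynomial whose zero divisor is `D` away from the point at infinity. -/
def affinePoly (D : Finset (P1Pt Fq)) : Fq[X] := ∏ p ∈ D.eraseNone, p.1

theorem monic_affinePoly (D : Finset (P1Pt Fq)) : (affinePoly D).Monic :=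
  monic_prod_of_monic _ _ fun p _ => p.2.1

theorem degD_eq_natDegree_affinePoly_add (D : Finset (P1Pt Fq)) :
    degD D = (affinePoly D).natDegree + if none ∈ D then 1 else 0 := by
  have haffine : ∑ p ∈ D.eraseNone, p.1.natDegree = ∑ P ∈ D.erase none, P.deg := by
    rw [← Finset.map_some_eraseNone, Finset.sum_map]
    rfl
  rw [affinePoly, natDegree_prod_of_monic _ _ fun p _ => p.2.1, haffine, degD]
  split_ifs with h
  · exact (Finset.sum_erase_add D _ h).symm
  · rw [Finset.erase_eq_of_notMem h, add_zero]

theorem affinePoly_dvd_dehomogenize {n : ℕ} {D : Finset (P1Pt Fq)} {A : MvPolynomial (Fin 2) Fq}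
    (hA : A ∈ vanishingForms n D) : affinePoly D ∣ dehomogenize A := by
  refine Finset.prod_dvd_of_coprime (fun p _ r _ hpr => ?_) fun p hp => ?_
  · refine p.2.2.coprime_iff_not_dvd.2 fun hdvd => hpr (Subtype.ext ?_)
    exact eq_of_monic_of_associated p.2.1 r.2.1 (p.2.2.associated_of_dvd r.2.2 hdvd)
  · exact (resEval_some_eq_zero_iff p A).1 (hA.2 _ (Finset.mem_eraseNone.1 hp))

theorem exists_mem_degreeLT_homogenize_eq {n : ℕ} {D : Finset (P1Pt Fq)}
    {A : MvPolynomial (Fin 2) Fq} (hA : A ∈ vanishingForms n D) :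
    ∃ g ∈ degreeLT Fq (n + 1 - degD D), (affinePoly D * g).homogenize n = A := by
  obtain ⟨g, hg⟩ := affinePoly_dvd_dehomogenize hA
  refine ⟨g, ?_, by rw [← hg, homogenize_dehomogenize hA.1]⟩
  rcases eq_or_ne g 0 with rfl | hg0
  · exact zero_mem _
  have hnonzero : dehomogenize A ≠ 0 := hg ▸ mul_ne_zero (monic_affinePoly D).ne_zero hg0
  have hdeg : (affinePoly D).natDegree + g.natDegree + (if none ∈ D then 1 else 0) ≤ n := by
    rw [← natDegree_mul (monic_affinePoly D).ne_zero hg0, ← hg]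
    split_ifs with h
    · exact natDegree_dehomogenize_lt hA.1 hnonzero (hA.2 _ h)
    · exact natDegree_dehomogenize_le hA.1
  rw [mem_degreeLT, degree_eq_natDegree hg0, Nat.cast_lt, degD_eq_natDegree_affinePoly_add]
  lia

theorem vanishingForms_subset_image (n : ℕ) (D : Finset (P1Pt Fq)) :
    vanishingForms n D ⊆ (fun g => (affinePoly D * g).homogenize n) ''
      (degreeLT Fq (n + 1 - degD D) : Set Fq[X]) :=
  fun _ hA => exists_mem_degreeLT_homogenize_eq hA

theorem finite_degreeLT [Finite Fq] (d : ℕ) : (degreeLT Fq d : Set Fq[X]).Finite :=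
  Finite.of_equiv _ (degreeLTEquiv Fq d).toEquiv.symm

theorem ncard_degreeLT [Fintype Fq] (d : ℕ) :
    (degreeLT Fq d : Set Fq[X]).ncard = Fintype.card Fq ^ d := by
  rw [← Nat.card_coe_set_eq]
  exact (Nat.card_congr (degreeLTEquiv Fq d).toEquiv).trans (by simp)

theorem finite_vanishingForms [Finite Fq] (n : ℕ) (D : Finset (P1Pt Fq)) :
    (vanishingForms n D).Finite :=
  ((finite_degreeLT _).image _).subset (vanishingForms_subset_image n D)

theorem ncard_vanishingForms_le [Fintype Fq] (n : ℕ) (D : Finset (P1Pt Fq)) :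
    (vanishingForms n D).ncard ≤ Fintype.card Fq ^ (n + 1 - degD D) :=
  calc (vanishingForms n D).ncard
      ≤ _ := Set.ncard_le_ncard (vanishingForms_subset_image n D) ((finite_degreeLT _).image _)
    _ ≤ _ := Set.ncard_image_le (finite_degreeLT _)
    _ = _ := ncard_degreeLT _

theorem degD_le_of_mem_vanishingForms {n : ℕ} {D : Finset (P1Pt Fq)}
    {A : MvPolynomial (Fin 2) Fq} (hA : A ∈ vanishingForms n D) (h0 : A ≠ 0) : degD D ≤ n := by
  by_contra! hlt
  obtain ⟨g, hg, rfl⟩ := exists_mem_degreeLT_homogenize_eq hA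
  have hg0 : g = 0 := by
    rwa [Nat.sub_eq_zero_of_le hlt, mem_degreeLT, Nat.cast_zero, Nat.WithBot.lt_zero_iff,
      degree_eq_bot] at hg
  simp [hg0] at h0

variable {ι : Type*}

/-- The nonzero tuples of binary forms, the `i`-th of degree `n i`, that vanish on the reduced
divisor `D`. -/
def vanishingTuples (n : ι → ℕ) (D : Finset (P1Pt Fq)) : Set (ι → MvPolynomial (Fin 2) Fq) :=
  {B | B ≠ 0 ∧ (∀ i, (B i).IsHomogeneous (n i)) ∧ ∀ P ∈ D, VanishesAt P B}

theorem vanishingTuples_subset_pi (n : ι → ℕ) (D : Finset (P1Pt Fq)) :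
    vanishingTuples n D ⊆ Set.univ.pi fun i => vanishingForms (n i) D :=
  fun _ hB i _ => ⟨hB.2.1 i, fun P hP => hB.2.2 P hP i⟩

theorem finite_vanishingTuples [Finite Fq] [Finite ι] (n : ι → ℕ) (D : Finset (P1Pt Fq)) :
    (vanishingTuples n D).Finite :=
  (Set.Finite.pi fun i => finite_vanishingForms (n i) D).subset (vanishingTuples_subset_pi n D)

theorem ncard_vanishingTuples_le [Fintype Fq] [Fintype ι] (n : ι → ℕ) (D : Finset (P1Pt Fq)) :
    (vanishingTuples n D).ncard ≤ Fintype.card Fq ^ ∑ i, (n i + 1 - degD D) :=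
  calc (vanishingTuples n D).ncard
      ≤ (Set.univ.pi fun i => vanishingForms (n i) D).ncard :=
        Set.ncard_le_ncard (vanishingTuples_subset_pi n D)
          (Set.Finite.pi fun i => finite_vanishingForms (n i) D)
    _ = ∏ i, (vanishingForms (n i) D).ncard := by
        rw [← Nat.card_coe_set_eq, Nat.card_congr (Equiv.Set.univPi _), Nat.card_pi]
        rfl
    _ ≤ ∏ i, Fintype.card Fq ^ (n i + 1 - degD D) :=
        Finset.prod_le_prod' fun i _ => ncard_vanishingForms_le (n i) D
    _ = _ := Finset.prod_pow_eq_pow_sum ..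

theorem ncard_vanishingTuples_mul_le [Fintype Fq] [Fintype ι] (n : ι → ℕ)
    (D : Finset (P1Pt Fq)) :
    (vanishingTuples n D).ncard * Fintype.card Fq ^ degD D ≤
      Fintype.card Fq ^ ∑ i, (n i + 1) := by
  rcases (vanishingTuples n D).eq_empty_or_nonempty with hempty | ⟨B, hB⟩
  · simp [hempty]
  -- At a nonzero entry `B j` the exponent `n j + 1 - degD D` is not truncated, so the factor for
  -- this one entry already recovers `q ^ degD D`.
  obtain ⟨j, hj⟩ := Function.ne_iff.1 hB.1
  have hdeg : degD D ≤ n j :=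
    degD_le_of_mem_vanishingForms (vanishingTuples_subset_pi n D hB j trivial) hj
  have hexp : ∑ i, (n i + 1 - degD D) + degD D ≤ ∑ i, (n i + 1) := by
    rw [← Finset.add_sum_erase _ _ (Finset.mem_univ j),
      ← Finset.add_sum_erase _ (fun i => n i + 1) (Finset.mem_univ j), add_right_comm]
    exact Nat.add_le_add (by lia) (Finset.sum_le_sum fun i _ => Nat.sub_le _ _)
  calc (vanishingTuples n D).ncard * Fintype.card Fq ^ degD D
      ≤ Fintype.card Fq ^ (∑ i, (n i + 1 - degD D)) * Fintype.card Fq ^ degD D :=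
        Nat.mul_le_mul_right _ (ncard_vanishingTuples_le n D)
    _ ≤ Fintype.card Fq ^ ∑ i, (n i + 1) := by
        rw [← pow_add]
        exact Nat.pow_le_pow_right Fintype.card_pos hexp

end Counting

section Moments

variable [Fintype Fq] {ι : Type*} [Fintype ι] {n : ι → ℕ}
  {T : Finset (ι → MvPolynomial (Fin 2) Fq)}

theorem sum_ite_vanishesAt_le (hT : ∀ B ∈ T, B ∈ vanishingTuples n ∅) (D : Finset (P1Pt Fq)) :
    ∑ B ∈ T, (if ∀ P ∈ D, VanishesAt P B then ∏ P ∈ D, Fintype.card Fq ^ P.deg else 0) ≤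
      Fintype.card Fq ^ ∑ i, (n i + 1) := by
  have hcard : (T.filter fun B => ∀ P ∈ D, VanishesAt P B).card ≤
      (vanishingTuples n D).ncard := by
    rw [← Set.ncard_coe_finset]
    refine Set.ncard_le_ncard (fun B hB => ?_) (finite_vanishingTuples n D)
    obtain ⟨hBT, hBD⟩ := Finset.mem_filter.1 (Finset.mem_coe.1 hB)
    exact ⟨(hT B hBT).1, (hT B hBT).2.1, hBD⟩
  rw [← Finset.sum_filter, Finset.sum_const, smul_eq_mul, Finset.prod_pow_eq_pow_sum]
  exact (Nat.mul_le_mul_right _ hcard).trans (ncard_vanishingTuples_mul_le n D)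

theorem sum_prod_le (hT : ∀ B ∈ T, B ∈ vanishingTuples n ∅) (D : Finset (P1Pt Fq)) {a : ℕ}
    {g : P1Pt Fq → (ι → MvPolynomial (Fin 2) Fq) → ℕ}
    (hg : ∀ P B, g P B ≤ (if VanishesAt P B then Fintype.card Fq ^ P.deg else 0) + a) :
    ∑ B ∈ T, ∏ P ∈ D, g P B ≤ (a + 1) ^ D.card * Fintype.card Fq ^ ∑ i, (n i + 1) :=
  calc ∑ B ∈ T, ∏ P ∈ D, g P B
      ≤ ∑ B ∈ T, ∏ P ∈ D, ((if VanishesAt P B then Fintype.card Fq ^ P.deg else 0) + a) :=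
        Finset.sum_le_sum fun B _ => Finset.prod_le_prod' fun P _ => hg P B
    _ = ∑ t ∈ D.powerset, (∑ B ∈ T, if ∀ P ∈ t, VanishesAt P B then
          ∏ P ∈ t, Fintype.card Fq ^ P.deg else 0) * a ^ (D.card - t.card) := by
        simp only [prod_ite_zero_add_const, Finset.sum_mul]
        exact Finset.sum_comm
    _ ≤ ∑ t ∈ D.powerset, Fintype.card Fq ^ (∑ i, (n i + 1)) * a ^ (D.card - t.card) :=
        Finset.sum_le_sum fun t _ => Nat.mul_le_mul_right _ (sum_ite_vanishesAt_le hT t)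
    _ = (a + 1) ^ D.card * Fintype.card Fq ^ ∑ i, (n i + 1) := by
        rw [← Finset.mul_sum, mul_comm, add_comm a 1, ← Finset.sum_pow_mul_eq_add_pow]
        simp only [one_pow, one_mul]

end Moments

section Image

variable {m k : ℕ} {σ : Fin 2 → MvPolynomial (Fin 2) Fq}

theorem isHomogeneous_of_mem_secSet {ℓ : ℕ} {s : Fin (m + 1) → MvPolynomial (Fin 2) Fq}
    (hs : s ∈ SecSet m ℓ k) (i : Fin (m + 1)) : (s i).IsHomogeneous (ℓ - i * k) := by
  have hdeg : ((ℓ : ℤ) - (i : ℕ) * k).toNat = ℓ - i * k := by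
    rw [← Nat.cast_mul, Int.toNat_sub]
  exact hdeg ▸ (hs i).1

theorem finsum_mem_image_mulSec_prod_le [Fintype Fq] (hm : 2 * k ≤ m)
    (hσ : ∀ P, ¬VanishesAt P σ) (D : Finset (P1Pt Fq)) {a : ℕ}
    {g : P1Pt Fq → (Fin 4 → MvPolynomial (Fin 2) Fq) → ℕ}
    (hg : ∀ P s, g P s ≤ (if VanishesAt P s then Fintype.card Fq ^ P.deg else 0) + a) :
    ∑ᶠ s ∈ mulSec σ '' SecSet 2 m k \ {0}, ∏ P ∈ D, g P s ≤
      Fintype.card Fq ^ 3 * (a + 1) ^ D.card * Fintype.card Fq ^ (3 * (m - k)) := by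
  let n : Fin 3 → ℕ := fun i => m - i * k
  have hT := finite_vanishingTuples (Fq := Fq) n ∅
  have himage : mulSec σ '' SecSet 2 m k \ {0} ⊆ mulSec σ '' hT.toFinset := by
    rintro _ ⟨⟨B, hB, rfl⟩, hne⟩
    have hB0 : B ≠ 0 := fun h => hne (h ▸ mulSec_zero σ)
    rw [hT.coe_toFinset]
    exact ⟨B, ⟨hB0, isHomogeneous_of_mem_secSet hB, by simp⟩, rfl⟩
  have hgB : ∀ P B, g P (mulSec σ B) ≤
      (if VanishesAt P B then Fintype.card Fq ^ P.deg else 0) + a := by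
    intro P B
    refine (hg P _).trans (Nat.add_le_add_right ?_ a)
    split_ifs with hs hB
    · exact le_rfl
    · exact absurd (vanishesAt_of_mulSec (hσ P) hs) hB
    all_goals exact Nat.zero_le _
  have hexp : ∑ i, (n i + 1) = 3 + 3 * (m - k) := by
    simp only [n, Fin.sum_univ_three, Fin.val_zero, Fin.val_one, Fin.val_two]
    lia
  calc ∑ᶠ s ∈ mulSec σ '' SecSet 2 m k \ {0}, ∏ P ∈ D, g P s
      ≤ ∑ B ∈ hT.toFinset, ∏ P ∈ D, g P (mulSec σ B) :=
        finsum_mem_le_sum_of_subset_image himage _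
    _ ≤ (a + 1) ^ D.card * Fintype.card Fq ^ ∑ i, (n i + 1) :=
        sum_prod_le (fun B => hT.mem_toFinset.1) D hgB
    _ = Fintype.card Fq ^ 3 * (a + 1) ^ D.card * Fintype.card Fq ^ (3 * (m - k)) := by
        rw [hexp, pow_add]
        ring

theorem natAbs_aD (D : Finset (P1Pt Fq)) (s : Fin 4 → MvPolynomial (Fin 2) Fq) :
    (aD D s).natAbs = ∏ P ∈ D, ((rP P s : ℤ) - 1).natAbs :=
  map_prod Int.natAbsHom _ _

theorem statement_13_general [Fintype Fq] (hm : 2 * k ≤ m) {n : Fin 2 → ℕ}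
    (hσ : ∀ i, (σ i).IsHomogeneous (n i)) (hrel : IsRelPrime (σ 0) (σ 1))
    (D : Finset (P1Pt Fq)) :
    (∑ᶠ s ∈ mulSec σ '' SecSet 2 m k \ {0}, rD D s ≤
      Fintype.card Fq ^ 3 * 4 ^ D.card * Fintype.card Fq ^ (3 * (m - k))) ∧
    ∑ᶠ s ∈ mulSec σ '' SecSet 2 m k \ {0}, (aD D s).natAbs ≤
      Fintype.card Fq ^ 3 * 3 ^ D.card * Fintype.card Fq ^ (3 * (m - k)) := by
  have hvan := not_vanishesAt_of_isRelPrime hσ hrel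
  simp only [natAbs_aD]
  exact ⟨finsum_mem_image_mulSec_prod_le hm hvan D rP_le_ite_vanishesAt_add,
    finsum_mem_image_mulSec_prod_le hm hvan D natAbs_rP_sub_one_le_ite_vanishesAt_add⟩

end Image

/-- Let `ℓ, k, c ≥ 0` with `ℓ − 3k ≥ 0` and `ℓ − 2k ≥ c`, and let
`σ ∈ H⁰(F_k, O(1,c))` be a nonzero irreducible section.  Let `Img(σ)` be the image of
multiplication by `σ : H⁰(F_k, O(2, ℓ−c)) → H⁰(F_k, O(3, ℓ))`.  Then for every
reduced effective divisor `D` on `P¹`,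
`Σ_{s ∈ Img(σ), s ≠ 0} r_D(s) = O(5^{ω(D)} q^{3ℓ−3k−3c})` and
`Σ_{s ∈ Img(σ), s ≠ 0} |a_D(s)| = O(3^{ω(D)} q^{3ℓ−3k−3c})`,
with implied constants depending only on `q`. -/
theorem statement_13 (Fq : Type) [Field Fq] [Fintype Fq] :
    ∃ K : ℕ, 0 < K ∧
      ∀ (ℓ k c : ℕ) (σ : Fin 2 → MvPolynomial (Fin 2) Fq) (D : Finset (P1Pt Fq)),
        3 * k ≤ ℓ → c + 2 * k ≤ ℓ →
        σ ≠ 0 →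
        IsHomOfDeg (σ 0) (c : ℤ) →
        IsHomOfDeg (σ 1) ((c : ℤ) - (k : ℤ)) →
        (∀ d : MvPolynomial (Fin 2) Fq, d ∣ σ 0 → d ∣ σ 1 → IsUnit d) →
        (∑ᶠ s ∈ {s : Fin 4 → MvPolynomial (Fin 2) Fq | s ≠ 0 ∧
              ∃ B ∈ SecSet 2 (ℓ - c) k,
                s 0 = B 0 * σ 0 ∧ s 1 = B 0 * σ 1 + B 1 * σ 0 ∧
                s 2 = B 1 * σ 1 + B 2 * σ 0 ∧ s 3 = B 2 * σ 1},
            rD D s) ≤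
          K * 5 ^ D.card * Fintype.card Fq ^ (3 * ℓ - 3 * k - 3 * c) ∧
        (∑ᶠ s ∈ {s : Fin 4 → MvPolynomial (Fin 2) Fq | s ≠ 0 ∧
              ∃ B ∈ SecSet 2 (ℓ - c) k,
                s 0 = B 0 * σ 0 ∧ s 1 = B 0 * σ 1 + B 1 * σ 0 ∧
                s 2 = B 1 * σ 1 + B 2 * σ 0 ∧ s 3 = B 2 * σ 1},
            (aD D s).natAbs) ≤
          K * 3 ^ D.card * Fintype.card Fq ^ (3 * ℓ - 3 * k - 3 * c) := by
  refine ⟨Fintype.card Fq ^ 3, pow_pos Fintype.card_pos 3, ?_⟩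
  intro ℓ k c σ D _ hℓ _ hσ0 hσ1 hcop
  have hexp : 3 * ℓ - 3 * k - 3 * c = 3 * (ℓ - c - k) := by lia
  rw [← image_mulSec_diff_zero, hexp]
  refine (statement_13_general (by lia) (n := ![c, ((c : ℤ) - k).toNat])
    (Fin.forall_fin_two.2 ⟨hσ0.1, hσ1.1⟩) (fun d => hcop d) D).imp_left fun hr => hr.trans ?_
  gcongr
  norm_num

end Stmt13
end
end

section
/- Let ℓ, k ≥ 0 be integers with ℓ ≥ 3k, and let D be a reduced effective divisor on P¹. Then R^{hr}(ℓ,k,D) = O(5^{ω(D)} q^{3ℓ−3k}), R^{sr}(ℓ,k,D) = O(5^{ω(D)} q^{3ℓ−5k}), R^{z}(ℓ,k,D) = O(2^{ω(D)} q^{deg D}), and similarly |Φ^{hr}(ℓ,k,D)| = O(3^{ω(D)} q^{3ℓ−3k}), |Φ^{sr}(ℓ,k,D)| = O(3^{ω(D)} q^{3ℓ−5k}), and |Φ^{z}(ℓ,k,D)| = O(q^{deg D}), with implied constants depending only on q. -/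
/-!
Statement 14.  Bounds for the root-counting sums `R^{hr}, R^{sr}, R^{z}` and the
adjusted sums `Φ^{hr}, Φ^{sr}, Φ^{z}` over horizontally reducible, specially
reducible, and zero binary cubic forms on the Hirzebruch surface `F_k` over `F_q`.
See the preamble for the concrete model of `F_k` and the root-counting functions.
-/
open scoped Classical

noncomputable section

namespace Stmt14

/-- Closed points of the projective line `P¹` over `F_q`: `none` is the point at
infinity, and `some p` corresponds to the monic irreducible polynomial `p`. -/
abbrev P1Pt (Fq : Type) [Field Fq] : Type :=
  Option {p : Polynomial Fq // p.Monic ∧ Irreducible p}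

variable {Fq : Type} [Field Fq]

/-- The degree of a closed point of `P¹`. -/
def P1Pt.deg : P1Pt Fq → ℕ
  | none => 1
  | some p => p.1.natDegree

/-- The residue field of a closed point of `P¹`. -/
def P1Pt.Res : P1Pt Fq → Type
  | none => Fq
  | some p => AdjoinRoot p.1

instance (P : P1Pt Fq) : CommRing (P1Pt.Res P) :=
  match P with
  | none => inferInstanceAs (CommRing Fq)
  | some p => inferInstanceAs (CommRing (AdjoinRoot p.1))

instance (P : P1Pt Fq) : Algebra Fq (P1Pt.Res P) :=
  match P with
  | none => Algebra.id Fq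
  | some p => inferInstanceAs (Algebra Fq (AdjoinRoot p.1))

/-- The homogeneous coordinates `(t₀ : t₁)` of a closed point of `P¹`, in its residue
field: `(1 : 0)` for the point at infinity, and `(θ : 1)` with `θ` the root of `p`
for the point `some p`. -/
def P1Pt.coords : (P : P1Pt Fq) → Fin 2 → P1Pt.Res P
  | none => ![1, 0]
  | some p => ![AdjoinRoot.root p.1, 1]

/-- Evaluate a polynomial in the homogeneous coordinates `t₀, t₁` of the base `P¹`
at a closed point `P`, in the residue field of `P`. -/
def resEval (P : P1Pt Fq) (A : MvPolynomial (Fin 2) Fq) : P1Pt.Res P :=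
  MvPolynomial.aeval (P1Pt.coords P) A

/-- `r_P(s)`: the number of relative degree one points of the fiber of `F_k → P¹`
over `P` at which the binary cubic form `s = (A₀, A₁, A₂, A₃)` vanishes.  These
points are the `(z : 1)` with `z` in the residue field of `P`, together with `(1 : 0)`. -/
def rP (P : P1Pt Fq) (s : Fin 4 → MvPolynomial (Fin 2) Fq) : ℕ :=
  Nat.card {z : P1Pt.Res P //
      resEval P (s 0) * z ^ 3 + resEval P (s 1) * z ^ 2
        + resEval P (s 2) * z + resEval P (s 3) = 0} +
    (if resEval P (s 0) = 0 then 1 else 0)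

/-- The degree of a reduced effective divisor (a finite set of closed points) on `P¹`. -/
def degD (D : Finset (P1Pt Fq)) : ℕ := ∑ P ∈ D, P1Pt.deg P

/-- `r_D(s) = ∏_{P ∣ D} r_P(s)`. -/
def rD (D : Finset (P1Pt Fq)) (s : Fin 4 → MvPolynomial (Fin 2) Fq) : ℕ :=
  ∏ P ∈ D, rP P s

/-- `a_D(s) = ∏_{P ∣ D} (r_P(s) − 1)`. -/
def aD (D : Finset (P1Pt Fq)) (s : Fin 4 → MvPolynomial (Fin 2) Fq) : ℤ :=
  ∏ P ∈ D, ((rP P s : ℤ) - 1)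

/-- `p` is homogeneous of (possibly negative) degree `d`; for `d < 0` this forces
`p = 0`. -/
def IsHomOfDeg (p : MvPolynomial (Fin 2) Fq) (d : ℤ) : Prop :=
  p.IsHomogeneous d.toNat ∧ (d < 0 → p = 0)

/-- The space of global sections of `O(m, ℓ)` on the Hirzebruch surface `F_k`,
viewed as tuples `(A₀, …, A_m)` of binary forms with `A_i` homogeneous of degree
`ℓ − i·k`. -/
def SecSet (m ℓ k : ℕ) : Set (Fin (m + 1) → MvPolynomial (Fin 2) Fq) :=
  {s | ∀ i : Fin (m + 1), IsHomOfDeg (s i) ((ℓ : ℤ) - (i : ℕ) * k)}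

/-- A binary cubic form `s ∈ H⁰(F_k, O(3,ℓ))` is horizontally reducible iff it is
zero or factors as a product of a nonzero quadratic and a nonzero linear form in
`x, y` with homogeneous polynomial coefficients. -/
def HorizRed (k : ℕ) (s : Fin 4 → MvPolynomial (Fin 2) Fq) : Prop :=
  s = 0 ∨ ∃ (b c : ℤ) (B : Fin 3 → MvPolynomial (Fin 2) Fq)
      (C : Fin 2 → MvPolynomial (Fin 2) Fq),
    B ≠ 0 ∧ C ≠ 0 ∧
    (∀ j : Fin 3, IsHomOfDeg (B j) (b - (j : ℕ) * k)) ∧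
    (∀ j : Fin 2, IsHomOfDeg (C j) (c - (j : ℕ) * k)) ∧
    s 0 = B 0 * C 0 ∧ s 1 = B 0 * C 1 + B 1 * C 0 ∧
    s 2 = B 1 * C 1 + B 2 * C 0 ∧ s 3 = B 2 * C 1

/-!
At a closed point `P` where `s` does not vanish identically on the fiber, `r_P(s) ≤ 3`; otherwise
`r_P(s) = q^{deg P} + 1`. Expanding the product over `P ∣ D` turns the sums `R` and `Φ` over a
family of sections into sums over `D' ⊆ D` of `q^{deg D'}` times the number of sections of the
family vanishing identically on the fibers over `D'`, so it suffices to bound these products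
uniformly in `D'`; the factors `5 = 2 + 3` and `3 = 1 + 2` come from the binomial theorem.

A binary form of degree `d` vanishing on `D'` is a multiple of a fixed form of degree `deg D'`,
so there are at most `q^{d + 1 - deg D'}` of them, and none but zero once `deg D' > d`. A nonzero
section with `A₃ = 0` vanishing over `D'` therefore has `deg D' ≤ ℓ`, and the coefficient `A₀`
alone saves the factor `q^{deg D'}`. A specially reducible section is a product of a quadratic
form `B` and a linear form `C`, one of which vanishes over each point of `D'`. Since the last
coefficients of `B` and `C` are nonzero, every coefficient saves a factor, which gives
`q^{2 deg D'}` in total. One half pays for the weight and the other for the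
`2^{ω(D')} ≤ q^{deg D'}` ways of distributing the points of `D'` between `B` and `C`, and the sum
over the degrees of `B` is geometric.
-/

section InclusionExclusion

variable {ι S R : Type*} [CommSemiring R] [PartialOrder R] [CanonicallyOrderedAdd R]
  [IsOrderedRing R]

theorem sum_prod_le_add_pow_mul (T : Finset S) (D : Finset ι) (V : ι → S → Prop) (N : ι → R)
    (w : ι → S → R) (α β Y : R)
    (hw : ∀ i s, w i s ≤ (if V i s then β * N i else 0) + α)
    (hY : ∀ D' ⊆ D, (∏ i ∈ D', N i) * (T.filter fun s => ∀ i ∈ D', V i s).card ≤ Y) :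
    ∑ s ∈ T, ∏ i ∈ D, w i s ≤ (β + α) ^ D.card * Y := by
  calc ∑ s ∈ T, ∏ i ∈ D, w i s
      ≤ ∑ s ∈ T, ∏ i ∈ D, ((if V i s then β * N i else 0) + α) :=
        Finset.sum_le_sum fun s _ => Finset.prod_le_prod (fun _ _ => zero_le) fun i _ => hw i s
    _ = ∑ D' ∈ D.powerset, ∑ s ∈ T,
          (if ∀ i ∈ D', V i s then β ^ D'.card * ∏ i ∈ D', N i else 0) *
            α ^ (D.card - D'.card) := by
        rw [Finset.sum_comm]
        refine Finset.sum_congr rfl fun s _ => ?_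
        rw [Finset.prod_add]
        refine Finset.sum_congr rfl fun D' hD' => ?_
        rw [Finset.prod_ite_zero, Finset.prod_mul_distrib, Finset.prod_const, Finset.prod_const,
          Finset.card_sdiff_of_subset (Finset.mem_powerset.1 hD')]
    _ = ∑ D' ∈ D.powerset, β ^ D'.card * α ^ (D.card - D'.card) *
          ((∏ i ∈ D', N i) * (T.filter fun s => ∀ i ∈ D', V i s).card) := by
        refine Finset.sum_congr rfl fun D' _ => ?_
        rw [← Finset.sum_mul, ← Finset.sum_filter, Finset.sum_const, nsmul_eq_mul]
        ring
    _ ≤ ∑ D' ∈ D.powerset, β ^ D'.card * α ^ (D.card - D'.card) * Y :=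
        Finset.sum_le_sum fun D' hD' =>
          mul_le_mul_of_nonneg_left (hY D' (Finset.mem_powerset.1 hD')) zero_le
    _ = (β + α) ^ D.card * Y := by rw [← Finset.sum_mul, Finset.sum_pow_mul_eq_add_pow]

end InclusionExclusion

namespace P1Pt

instance (P : P1Pt Fq) : IsDomain P.Res :=
  match P with
  | none => inferInstanceAs (IsDomain Fq)
  | some p =>
    haveI : Fact (Irreducible p.1) := ⟨p.2.2⟩
    inferInstanceAs (IsDomain (AdjoinRoot p.1))

theorem natCard_res [Fintype Fq] : ∀ P : P1Pt Fq, Nat.card P.Res = Fintype.card Fq ^ P.deg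
  | none => by simp [Res, deg]
  | some p => by
    have e := (AdjoinRoot.powerBasis' p.2.1).basis.equivFun
    simp [Res, deg, Nat.card_congr e.toEquiv, AdjoinRoot.powerBasis'_dim]

instance [Finite Fq] (P : P1Pt Fq) : Finite P.Res := by
  have := Fintype.ofFinite Fq
  exact Nat.finite_of_card_ne_zero (natCard_res P ▸ pow_ne_zero _ Fintype.card_ne_zero)

theorem deg_pos : ∀ P : P1Pt Fq, 0 < P.deg
  | none => Nat.one_pos
  | some p => p.2.2.natDegree_pos

end P1Pt

theorem pow_degD (q : ℕ) (D : Finset (P1Pt Fq)) : q ^ degD D = ∏ P ∈ D, q ^ P.deg :=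
  (Finset.prod_pow_eq_pow_sum _ _ _).symm

theorem degD_add_degD_sdiff {D D' : Finset (P1Pt Fq)} (h : D' ⊆ D) :
    degD D' + degD (D \ D') = degD D := by
  rw [add_comm]
  exact Finset.sum_sdiff h

theorem two_pow_card_le [Fintype Fq] (D : Finset (P1Pt Fq)) :
    2 ^ D.card ≤ Fintype.card Fq ^ degD D := by
  rw [pow_degD, ← Finset.prod_const]
  exact Finset.prod_le_prod' fun P _ =>
    Nat.succ_le_of_lt (Nat.one_lt_pow P.deg_pos.ne' Fintype.one_lt_card)

/-- The section with coefficients `s` vanishes identically on the fiber over `P`. The index type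
is arbitrary so that the notion applies to cubic forms and to their factors alike. -/
def VanishesOnFiber {ι : Type*} (P : P1Pt Fq) (s : ι → MvPolynomial (Fin 2) Fq) : Prop :=
  ∀ i, resEval P (s i) = 0

section FiberRoots

variable {P : P1Pt Fq} {s : Fin 4 → MvPolynomial (Fin 2) Fq}

theorem vanishesOnFiber_zero (ι : Type*) (P : P1Pt Fq) :
    VanishesOnFiber P (0 : ι → MvPolynomial (Fin 2) Fq) :=
  fun _ => map_zero _

theorem rP_eq_of_vanishesOnFiber [Fintype Fq] (h : VanishesOnFiber P s) :
    rP P s = Fintype.card Fq ^ P.deg + 1 := by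
  simp [rP, h _, P.natCard_res]

theorem natCard_setOf_eval_eq_zero_le {R : Type*} [CommRing R] [IsDomain R] {f : Polynomial R}
    (hf : f ≠ 0) : Nat.card {z : R // f.eval z = 0} ≤ f.natDegree := by
  have hroots : {z : R | f.eval z = 0} = f.rootSet R := by
    ext z
    simp [Polynomial.mem_rootSet, hf]
  rw [← Set.coe_ofPred, Nat.card_coe_set_eq, hroots]
  exact Polynomial.ncard_rootSet_le f R

theorem rP_le_three_of_not_vanishesOnFiber (h : ¬ VanishesOnFiber P s) : rP P s ≤ 3 := by
  let F : Cubic P.Res :=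
    ⟨resEval P (s 0), resEval P (s 1), resEval P (s 2), resEval P (s 3)⟩
  have hF : F.toPoly ≠ 0 := by
    rw [Ne, Cubic.toPoly_eq_zero_iff, Cubic.ext_iff]
    exact fun ⟨h₀, h₁, h₂, h₃⟩ => h (by simpa [VanishesOnFiber, Fin.forall_fin_succ] using
      ⟨h₀, h₁, h₂, h₃⟩)
  have hroots : rP P s =
      Nat.card {z : P.Res // F.toPoly.eval z = 0} + if resEval P (s 0) = 0 then 1 else 0 := by
    simp [rP, F, Cubic.toPoly]
  have hcard := natCard_setOf_eval_eq_zero_le hF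
  rw [hroots]
  split_ifs with h₀
  · have : F.toPoly.natDegree ≤ 2 :=
      Polynomial.natDegree_le_of_degree_le (Cubic.degree_of_a_eq_zero h₀)
    omega
  · have : F.toPoly.natDegree ≤ 3 := Polynomial.natDegree_le_of_degree_le Polynomial.degree_cubic_le
    omega

theorem rP_le [Fintype Fq] (P : P1Pt Fq) (s : Fin 4 → MvPolynomial (Fin 2) Fq) :
    rP P s ≤ (if VanishesOnFiber P s then 2 * Fintype.card Fq ^ P.deg else 0) + 3 := by
  split_ifs with h
  · rw [rP_eq_of_vanishesOnFiber h]
    omega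
  · simpa using rP_le_three_of_not_vanishesOnFiber h

theorem natAbs_rP_sub_one_le [Fintype Fq] (P : P1Pt Fq) (s : Fin 4 → MvPolynomial (Fin 2) Fq) :
    ((rP P s : ℤ) - 1).natAbs ≤
      (if VanishesOnFiber P s then 1 * Fintype.card Fq ^ P.deg else 0) + 2 := by
  split_ifs with h
  · rw [rP_eq_of_vanishesOnFiber h]
    omega
  · have := rP_le_three_of_not_vanishesOnFiber h
    omega

theorem rD_zero_le [Fintype Fq] (D : Finset (P1Pt Fq)) :
    rD D 0 ≤ 2 ^ D.card * Fintype.card Fq ^ degD D := by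
  rw [rD, pow_degD, ← Finset.prod_const, ← Finset.prod_mul_distrib]
  refine Finset.prod_le_prod' fun P _ => ?_
  rw [rP_eq_of_vanishesOnFiber (vanishesOnFiber_zero _ P)]
  have : 0 < Fintype.card Fq ^ P.deg := pow_pos Fintype.card_pos _
  omega

theorem aD_zero [Fintype Fq] (D : Finset (P1Pt Fq)) : aD D 0 = Fintype.card Fq ^ degD D := by
  rw [aD, degD, ← Finset.prod_pow_eq_pow_sum]
  exact Finset.prod_congr rfl fun P _ => by
    simp [rP_eq_of_vanishesOnFiber (vanishesOnFiber_zero _ P)]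

end FiberRoots

section RootSums

variable [Fintype Fq] {T : Set (Fin 4 → MvPolynomial (Fin 2) Fq)} {D : Finset (P1Pt Fq)} {Y : ℕ}

theorem sum_prod_le_of_ncard_vanishing_le (hT : T.Finite) {α β : ℕ}
    (w : P1Pt Fq → (Fin 4 → MvPolynomial (Fin 2) Fq) → ℕ)
    (hw : ∀ P s, w P s ≤
      (if VanishesOnFiber P s then β * Fintype.card Fq ^ P.deg else 0) + α)
    (hY : ∀ D' : Finset (P1Pt Fq),
      Fintype.card Fq ^ degD D' * {s ∈ T | ∀ P ∈ D', VanishesOnFiber P s}.ncard ≤ Y) :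
    ∑ s ∈ hT.toFinset, ∏ P ∈ D, w P s ≤ (β + α) ^ D.card * Y := by
  refine sum_prod_le_add_pow_mul _ D _ _ w α β Y hw fun D' _ => ?_
  have hfilter : {s ∈ T | ∀ P ∈ D', VanishesOnFiber P s} =
      (hT.toFinset.filter fun s => ∀ P ∈ D', VanishesOnFiber P s) := by
    ext s
    simp
  simpa only [hfilter, Set.ncard_coe_finset, pow_degD, Nat.cast_id] using hY D'

theorem finsum_mem_rD_le (hT : T.Finite) (hY : ∀ D' : Finset (P1Pt Fq),
      Fintype.card Fq ^ degD D' * {s ∈ T | ∀ P ∈ D', VanishesOnFiber P s}.ncard ≤ Y) :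
    ∑ᶠ s ∈ T, rD D s ≤ 5 ^ D.card * Y := by
  rw [finsum_mem_eq_finite_toFinset_sum _ hT]
  exact sum_prod_le_of_ncard_vanishing_le hT rP rP_le hY

theorem natAbs_finsum_mem_aD_le (hT : T.Finite) (hY : ∀ D' : Finset (P1Pt Fq),
      Fintype.card Fq ^ degD D' * {s ∈ T | ∀ P ∈ D', VanishesOnFiber P s}.ncard ≤ Y) :
    (∑ᶠ s ∈ T, aD D s).natAbs ≤ 3 ^ D.card * Y := by
  have natAbs_aD : ∀ s, (aD D s).natAbs = ∏ P ∈ D, ((rP P s : ℤ) - 1).natAbs :=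
    fun s => map_prod Int.natAbsHom _ _
  rw [finsum_mem_eq_finite_toFinset_sum _ hT]
  refine (Int.natAbs_sum_le _ _).trans ?_
  simp only [natAbs_aD]
  exact sum_prod_le_of_ncard_vanishing_le hT _ natAbs_rP_sub_one_le hY

end RootSums

section VanishingForms

open Polynomial

/-- The monic generator of the ideal of the closed point `P` on the affine line `t₁ ≠ 0`; it is `1`
for the point at infinity. -/
def P1Pt.affineGenerator : P1Pt Fq → Fq[X]
  | none => 1
  | some p => p.1

theorem P1Pt.monic_affineGenerator : ∀ P : P1Pt Fq, P.affineGenerator.Monic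
  | none => monic_one
  | some p => p.2.1

theorem P1Pt.pairwise_isCoprime_affineGenerator :
    Pairwise fun P Q : P1Pt Fq => IsCoprime P.affineGenerator Q.affineGenerator
  | none, _, _ => isCoprime_one_left
  | some _, none, _ => isCoprime_one_right
  | some p, some q, hpq => by
    refine (p.2.2.coprime_iff_not_dvd).2 fun hdvd => hpq ?_
    exact congrArg some <| Subtype.ext <|
      eq_of_monic_of_associated p.2.1 q.2.1 (p.2.2.associated_of_dvd q.2.2 hdvd)

theorem degD_eq_natDegree_prod_add (D : Finset (P1Pt Fq)) :
    degD D = (∏ P ∈ D, P.affineGenerator).natDegree + if none ∈ D then 1 else 0 := by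
  have deg_eq : ∀ P : P1Pt Fq,
      P.deg = P.affineGenerator.natDegree + if P = none then 1 else 0
    | none => by simp [P1Pt.deg, P1Pt.affineGenerator]
    | some p => by simp [P1Pt.deg, P1Pt.affineGenerator]
  rw [natDegree_prod_of_monic _ _ fun P _ => P.monic_affineGenerator]
  simp [degD, deg_eq, Finset.sum_add_distrib]

theorem aeval_one_zero_homogenize {R : Type*} [CommSemiring R] (f : R[X]) (n : ℕ) :
    MvPolynomial.aeval (![1, 0] : Fin 2 → R) (f.homogenize n) = f.coeff n := by
  rw [homogenize, map_sum, Finset.Nat.sum_antidiagonal_eq_sum_range_succ_mk,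
    Finset.sum_range_succ, Finset.sum_eq_zero]
  · simp [MvPolynomial.aeval_monomial, Finsupp.prod_fintype, Finsupp.update]
  · intro k hk
    have : n - k ≠ 0 := Nat.sub_ne_zero_of_lt (Finset.mem_range.1 hk)
    simp [MvPolynomial.aeval_monomial, Finsupp.prod_fintype, this]

theorem resEval_none_homogenize (f : Fq[X]) (n : ℕ) :
    resEval none (f.homogenize n) = f.coeff n :=
  aeval_one_zero_homogenize f n

theorem affineGenerator_dvd_of_resEval_homogenize_eq_zero {f : Fq[X]} {n : ℕ}
    (hf : f.natDegree ≤ n) :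
    ∀ {P : P1Pt Fq}, resEval P (f.homogenize n) = 0 → P.affineGenerator ∣ f
  | none, _ => one_dvd f
  | some p, h => by
    have heval : resEval (some p) (f.homogenize n) = aeval (AdjoinRoot.root p.1) f :=
      aeval_homogenize_of_eq_one (A := AdjoinRoot p.1) hf ![AdjoinRoot.root p.1, 1] rfl
    rw [h, AdjoinRoot.aeval_eq] at heval
    exact AdjoinRoot.mk_eq_zero.1 heval.symm

theorem exists_homogenize_eq {R : Type*} [CommSemiring R] {A : MvPolynomial (Fin 2) R} {n : ℕ}
    (hA : A.IsHomogeneous n) : ∃ f : R[X], f.natDegree ≤ n ∧ f.homogenize n = A := by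
  refine ⟨MvPolynomial.aeval ![X, 1] A, ?_, homogenize_eq_of_isHomogeneous hA rfl⟩
  simpa using MvPolynomial.aeval_natDegree_le A hA.totalDegree_le (n := 1)
    (![X, 1] : Fin 2 → R[X]) (by simpa [Fin.forall_fin_two] using natDegree_X_le)

/-- The binary forms of degree `d` on `P¹` vanishing at every point of `D`, that is, the global
sections of `O(d)` lying in `O(d - D)`. -/
def vanishingForms (d : ℤ) (D : Finset (P1Pt Fq)) : Set (MvPolynomial (Fin 2) Fq) :=
  {A | IsHomOfDeg A d ∧ ∀ P ∈ D, resEval P A = 0}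

theorem natDegree_add_degD_le_of_mul_homogenize_mem_vanishingForms {h : Fq[X]} (h₀ : h ≠ 0) {n : ℕ}
    {D : Finset (P1Pt Fq)} (hn : ((∏ P ∈ D, P.affineGenerator) * h).natDegree ≤ n)
    (hmem : ((∏ P ∈ D, P.affineGenerator) * h).homogenize n ∈ vanishingForms n D) :
    h.natDegree + degD D ≤ n := by
  set g := ∏ P ∈ D, P.affineGenerator with hg_def
  have hg : g.Monic := monic_prod_of_monic _ _ fun P _ => P.monic_affineGenerator
  have hdeg : (g * h).natDegree = g.natDegree + h.natDegree := hg.natDegree_mul' h₀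
  rw [degD_eq_natDegree_prod_add, ← hg_def]
  split_ifs with hD
  · have hcoeff : (g * h).coeff n = 0 :=
      (resEval_none_homogenize _ _).symm.trans (hmem.2 none hD)
    have hne : (g * h).natDegree ≠ n := by
      rintro rfl
      exact mul_ne_zero hg.ne_zero h₀ (leadingCoeff_eq_zero.1 hcoeff)
    omega
  · omega

theorem vanishingForms_natCast_subset (n : ℕ) (D : Finset (P1Pt Fq)) :
    vanishingForms n D ⊆ (fun h => ((∏ P ∈ D, P.affineGenerator) * h).homogenize n) ''
      (degreeLT Fq (n + 1 - degD D) : Set Fq[X]) := by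
  intro A hA
  have hhom : A.IsHomogeneous n := by simpa using hA.1.1
  obtain ⟨f, hfn, rfl⟩ := exists_homogenize_eq hhom
  obtain ⟨h, rfl⟩ : ∏ P ∈ D, P.affineGenerator ∣ f :=
    Finset.prod_dvd_of_coprime
      (fun _ _ _ _ hPQ => P1Pt.pairwise_isCoprime_affineGenerator hPQ)
      fun P hP => affineGenerator_dvd_of_resEval_homogenize_eq_zero hfn (hA.2 P hP)
  refine ⟨h, ?_, rfl⟩
  rw [SetLike.mem_coe, mem_degreeLT]
  rcases eq_or_ne h 0 with rfl | h₀
  · simp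
  · rw [← natDegree_lt_iff_degree_lt h₀]
    have := natDegree_add_degD_le_of_mul_homogenize_mem_vanishingForms h₀ hfn hA
    omega

theorem eq_zero_of_mem_vanishingForms {d : ℤ} {D : Finset (P1Pt Fq)}
    {A : MvPolynomial (Fin 2) Fq} (hA : A ∈ vanishingForms d D) (hd : d < degD D) : A = 0 := by
  rcases lt_or_ge d 0 with hneg | hnonneg
  · exact hA.1.2 hneg
  · lift d to ℕ using hnonneg
    obtain ⟨h, hh, rfl⟩ := vanishingForms_natCast_subset d D hA
    have hzero : d + 1 - degD D = 0 := by omega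
    rw [hzero, SetLike.mem_coe, mem_degreeLT, Nat.cast_zero, Nat.WithBot.lt_zero_iff,
      degree_eq_bot] at hh
    simp [hh]

theorem natCard_degreeLT (K : Type*) [Field K] (n : ℕ) :
    Nat.card (degreeLT K n) = Nat.card K ^ n := by
  rw [Nat.card_congr (degreeLTEquiv K n).toEquiv, Nat.card_fun, Nat.card_fin]

theorem finite_degreeLT (K : Type*) [Field K] [Finite K] (n : ℕ) :
    (degreeLT K n : Set K[X]).Finite :=
  Set.finite_coe_iff.1 (Finite.of_equiv _ (degreeLTEquiv K n).toEquiv.symm)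

theorem vanishingForms_subset_zero {d : ℤ} (hd : d < 0) (D : Finset (P1Pt Fq)) :
    vanishingForms d D ⊆ {0} :=
  fun _ hA => hA.1.2 hd

theorem finite_vanishingForms [Finite Fq] (d : ℤ) (D : Finset (P1Pt Fq)) :
    (vanishingForms d D).Finite := by
  rcases lt_or_ge d 0 with hneg | hnonneg
  · exact (Set.finite_singleton 0).subset (vanishingForms_subset_zero hneg D)
  · lift d to ℕ using hnonneg
    exact ((finite_degreeLT Fq _).image _).subset (vanishingForms_natCast_subset d D)

theorem ncard_vanishingForms_le [Fintype Fq] (d : ℤ) (D : Finset (P1Pt Fq)) :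
    (vanishingForms d D).ncard ≤ Fintype.card Fq ^ (d + 1 - degD D).toNat := by
  rcases lt_or_ge d 0 with hneg | hnonneg
  · calc (vanishingForms d D).ncard
        ≤ 1 := by simpa using Set.ncard_le_ncard (vanishingForms_subset_zero hneg D)
      _ ≤ _ := Nat.one_le_pow _ _ Fintype.card_pos
  · lift d to ℕ using hnonneg
    have hfin := finite_degreeLT Fq (d + 1 - degD D)
    calc (vanishingForms d D).ncard
        ≤ (degreeLT Fq (d + 1 - degD D) : Set Fq[X]).ncard :=
          (Set.ncard_le_ncard (vanishingForms_natCast_subset d D) (hfin.image _)).trans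
            (Set.ncard_image_le hfin)
      _ = Fintype.card Fq ^ (d + 1 - degD D) := by
          rw [← Nat.card_coe_set_eq, SetLike.coe_sort_coe, natCard_degreeLT,
            Nat.card_eq_fintype_card]
      _ = Fintype.card Fq ^ ((d : ℤ) + 1 - degD D).toNat := by congr 1; omega

end VanishingForms

section VanishingSections

/-- The sections of `O(m, ℓ)` on `F_k` vanishing identically on the fibers over the points
of `D`. -/
def vanishingSections (m ℓ k : ℕ) (D : Finset (P1Pt Fq)) :
    Set (Fin (m + 1) → MvPolynomial (Fin 2) Fq) :=
  {s ∈ SecSet m ℓ k | ∀ P ∈ D, VanishesOnFiber P s}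

variable {m ℓ k : ℕ} {D : Finset (P1Pt Fq)}

theorem vanishingSections_eq_pi :
    vanishingSections m ℓ k D =
      Set.univ.pi fun i : Fin (m + 1) => vanishingForms ((ℓ : ℤ) - (i : ℕ) * k) D := by
  ext s
  simp only [vanishingSections, SecSet, VanishesOnFiber, vanishingForms, Set.mem_ofPred_eq,
    Set.mem_univ_pi, forall_and]
  exact and_congr_right fun _ => ⟨fun h i P hP => h P hP i, fun h P hP i => h i P hP⟩

theorem degD_le_of_mem_vanishingSections {s : Fin (m + 1) → MvPolynomial (Fin 2) Fq}
    (hs : s ∈ vanishingSections m ℓ k D) {i : Fin (m + 1)} (hi : s i ≠ 0) :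
    i * k + degD D ≤ ℓ := by
  rw [vanishingSections_eq_pi, Set.mem_univ_pi] at hs
  have : (degD D : ℤ) ≤ ℓ - (i : ℕ) * k := by
    by_contra! hlt
    exact hi (eq_zero_of_mem_vanishingForms (hs i) hlt)
  zify
  linarith

theorem finite_vanishingSections [Finite Fq] (m ℓ k : ℕ) (D : Finset (P1Pt Fq)) :
    (vanishingSections m ℓ k D).Finite := by
  rw [vanishingSections_eq_pi]
  exact Set.Finite.pi fun i => finite_vanishingForms _ D

theorem finite_secSet [Finite Fq] (m ℓ k : ℕ) :
    (SecSet m ℓ k : Set (Fin (m + 1) → MvPolynomial (Fin 2) Fq)).Finite := by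
  simpa [vanishingSections] using finite_vanishingSections (Fq := Fq) m ℓ k ∅

variable [Fintype Fq]

theorem ncard_vanishingSections_le (m ℓ k : ℕ) (D : Finset (P1Pt Fq)) :
    (vanishingSections m ℓ k D).ncard ≤
      Fintype.card Fq ^ ∑ i : Fin (m + 1), (ℓ + 1 - (i * k + degD D)) := by
  rw [vanishingSections_eq_pi, Set.ncard_def, Set.encard_pi_eq_prod_encard, ← ENat.coe_toNatHom,
    map_prod, ← Finset.prod_pow_eq_pow_sum]
  refine Finset.prod_le_prod' fun i _ => (ncard_vanishingForms_le _ D).trans_eq ?_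
  congr 1
  have : ((i * k : ℕ) : ℤ) = (i : ℕ) * k := Nat.cast_mul _ _
  omega

theorem pow_degD_mul_ncard_vanishingSections_diff_zero_le (m ℓ k : ℕ) (D : Finset (P1Pt Fq)) :
    Fintype.card Fq ^ degD D * (vanishingSections m ℓ k D \ {0}).ncard ≤
      Fintype.card Fq ^ ∑ i : Fin (m + 1), (ℓ - i * k + 1) := by
  rcases (vanishingSections m ℓ k D \ {0}).eq_empty_or_nonempty with hempty | ⟨s, hs, hs₀⟩
  · simp [hempty]
  obtain ⟨j, hj⟩ := Function.ne_iff.1 hs₀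
  have hD : degD D ≤ ℓ := le_of_add_le_right (degD_le_of_mem_vanishingSections hs hj)
  calc _ ≤ Fintype.card Fq ^ degD D *
        Fintype.card Fq ^ ∑ i : Fin (m + 1), (ℓ + 1 - (i * k + degD D)) :=
        Nat.mul_le_mul_left _ ((Set.ncard_le_ncard Set.sdiff_subset
          (finite_vanishingSections m ℓ k D)).trans (ncard_vanishingSections_le m ℓ k D))
    _ ≤ _ := by
      rw [← pow_add, Fin.sum_univ_succ, Fin.sum_univ_succ, ← add_assoc]
      refine Nat.pow_le_pow_right Fintype.card_pos (Nat.add_le_add ?_ ?_)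
      · simp only [Fin.val_zero, zero_mul]
        omega
      · exact Finset.sum_le_sum fun i _ => by omega

theorem pow_degD_mul_ncard_vanishingSections_last_ne_zero_le (m ℓ k : ℕ)
    (D : Finset (P1Pt Fq)) :
    Fintype.card Fq ^ ((m + 1) * degD D) *
        {s ∈ vanishingSections m ℓ k D | s (Fin.last m) ≠ 0}.ncard ≤
      Fintype.card Fq ^ ∑ i : Fin (m + 1), (ℓ - i * k + 1) := by
  rcases {s ∈ vanishingSections m ℓ k D | s (Fin.last m) ≠ 0}.eq_empty_or_nonempty with
    hempty | ⟨s, hs, hlast⟩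
  · simp [hempty]
  have hD : m * k + degD D ≤ ℓ := by simpa using degD_le_of_mem_vanishingSections hs hlast
  calc _ ≤ Fintype.card Fq ^ ((m + 1) * degD D) *
        Fintype.card Fq ^ ∑ i : Fin (m + 1), (ℓ + 1 - (i * k + degD D)) :=
        Nat.mul_le_mul_left _ ((Set.ncard_le_ncard (Set.sep_subset _ _)
          (finite_vanishingSections m ℓ k D)).trans (ncard_vanishingSections_le m ℓ k D))
    _ = Fintype.card Fq ^ ∑ i : Fin (m + 1), (degD D + (ℓ + 1 - (i * k + degD D))) := by
      rw [← pow_add, Finset.sum_add_distrib]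
      simp
    _ = _ := by
      congr 1
      refine Finset.sum_congr rfl fun i _ => ?_
      have : i * k ≤ m * k := Nat.mul_le_mul_right k i.is_le
      omega

end VanishingSections

section MulForm

/-- The coefficients of the product of a binary quadratic form `B` and a binary linear form `C`. -/
def mulForm {R : Type*} [CommSemiring R] (B : Fin 3 → R) (C : Fin 2 → R) : Fin 4 → R :=
  ![B 0 * C 0, B 0 * C 1 + B 1 * C 0, B 1 * C 1 + B 2 * C 0, B 2 * C 1]

theorem eq_zero_or_eq_zero_of_mulForm_eq_zero {R : Type*} [CommRing R] [IsDomain R]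
    {B : Fin 3 → R} {C : Fin 2 → R} (h : mulForm B C = 0) : B = 0 ∨ C = 0 := by
  have hcoeff : B 0 * C 0 = 0 ∧ B 0 * C 1 + B 1 * C 0 = 0 ∧ B 1 * C 1 + B 2 * C 0 = 0 ∧
      B 2 * C 1 = 0 := by
    simpa [mulForm, funext_iff, Fin.forall_fin_succ] using h
  have hmul : (Cubic.toPoly ⟨0, B 0, B 1, B 2⟩) * (Cubic.toPoly ⟨0, 0, C 0, C 1⟩) = 0 := by
    calc _ = Cubic.toPoly ⟨B 0 * C 0, B 0 * C 1 + B 1 * C 0, B 1 * C 1 + B 2 * C 0,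
          B 2 * C 1⟩ := by
          simp only [Cubic.toPoly, map_add, map_mul, map_zero]
          ring
      _ = 0 := by simp [hcoeff, Cubic.toPoly]
  refine (mul_eq_zero.1 hmul).imp (fun hB => ?_) fun hC => ?_
  · obtain ⟨-, h₀, h₁, h₂⟩ := Cubic.ext_iff.1 ((Cubic.toPoly_eq_zero_iff _).1 hB)
    ext i
    fin_cases i
    exacts [h₀, h₁, h₂]
  · obtain ⟨-, -, h₀, h₁⟩ := Cubic.ext_iff.1 ((Cubic.toPoly_eq_zero_iff _).1 hC)
    ext i
    fin_cases i
    exacts [h₀, h₁]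

theorem vanishesOnFiber_or_of_mulForm {P : P1Pt Fq} {B : Fin 3 → MvPolynomial (Fin 2) Fq}
    {C : Fin 2 → MvPolynomial (Fin 2) Fq} (h : VanishesOnFiber P (mulForm B C)) :
    VanishesOnFiber P B ∨ VanishesOnFiber P C := by
  have hmul : mulForm (fun i => resEval P (B i)) (fun j => resEval P (C j)) = 0 := by
    simpa [VanishesOnFiber, mulForm, resEval, funext_iff, Fin.forall_fin_succ] using h
  exact (eq_zero_or_eq_zero_of_mulForm_eq_zero hmul).imp congrFun congrFun

end MulForm

section Reducible

/-- The set `V(ℓ,k)^{hr}` of nonzero horizontally reducible sections. -/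
def horizRedSections (ℓ k : ℕ) : Set (Fin 4 → MvPolynomial (Fin 2) Fq) :=
  {s ∈ SecSet 3 ℓ k | s ≠ 0 ∧ HorizRed k s}

/-- The set `V(ℓ,k)^{sr}` of specially reducible sections. -/
def specRedSections (ℓ k : ℕ) : Set (Fin 4 → MvPolynomial (Fin 2) Fq) :=
  {s ∈ SecSet 3 ℓ k | HorizRed k s ∧ s 3 ≠ 0}

/-- The sections of `O(m, ℓ)` on `F_k` that vanish identically on the fibers over `D` and are not
divisible by `x`. -/
def lastNeZeroVanishingSections (m ℓ k : ℕ) (D : Finset (P1Pt Fq)) :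
    Set (Fin (m + 1) → MvPolynomial (Fin 2) Fq) :=
  {s ∈ vanishingSections m ℓ k D | s (Fin.last m) ≠ 0}

/-- The pairs of a quadratic form whose last coefficient has degree `i` and a linear form whose last
coefficient has degree `j`, neither divisible by `x`, vanishing identically on the fibers over `D₁`
and over `D₂` respectively. -/
def factorPairs (k i j : ℕ) (D₁ D₂ : Finset (P1Pt Fq)) :
    Set ((Fin 3 → MvPolynomial (Fin 2) Fq) × (Fin 2 → MvPolynomial (Fin 2) Fq)) :=
  lastNeZeroVanishingSections 2 (2 * k + i) k D₁ ×ˢ lastNeZeroVanishingSections 1 (k + j) k D₂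

theorem IsHomOfDeg.nonneg {p : MvPolynomial (Fin 2) Fq} {d : ℤ} (h : IsHomOfDeg p d)
    (hp : p ≠ 0) : 0 ≤ d :=
  not_lt.1 fun hd => hp (h.2 hd)

theorem IsHomOfDeg.mul {p₁ p₂ : MvPolynomial (Fin 2) Fq} {d₁ d₂ : ℤ} (h₁ : IsHomOfDeg p₁ d₁)
    (h₂ : IsHomOfDeg p₂ d₂) : IsHomOfDeg (p₁ * p₂) (d₁ + d₂) := by
  by_cases hp : p₁ * p₂ = 0
  · exact hp ▸ ⟨MvPolynomial.isHomogeneous_zero _ _ _, fun _ => rfl⟩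
  · obtain ⟨hp₁, hp₂⟩ := mul_ne_zero_iff.1 hp
    refine ⟨?_, fun hd => absurd hd (by linarith [h₁.nonneg hp₁, h₂.nonneg hp₂])⟩
    rw [Int.toNat_add (h₁.nonneg hp₁) (h₂.nonneg hp₂)]
    exact h₁.1.mul h₂.1

theorem IsHomOfDeg.inj_right {p : MvPolynomial (Fin 2) Fq} {d₁ d₂ : ℤ} (h₁ : IsHomOfDeg p d₁)
    (h₂ : IsHomOfDeg p d₂) (hp : p ≠ 0) : d₁ = d₂ := by
  rw [← Int.toNat_of_nonneg (h₁.nonneg hp), ← Int.toNat_of_nonneg (h₂.nonneg hp),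
    h₁.1.inj_right h₂.1 hp]

theorem exists_mulForm_of_mem_specRedSections {ℓ k : ℕ} {s : Fin 4 → MvPolynomial (Fin 2) Fq}
    (hs : s ∈ specRedSections ℓ k) :
    ∃ i j : ℕ, 3 * k + (i + j) = ℓ ∧ ∃ B ∈ SecSet 2 (2 * k + i) k, ∃ C ∈ SecSet 1 (k + j) k,
      B 2 ≠ 0 ∧ C 1 ≠ 0 ∧ mulForm B C = s := by
  obtain ⟨hsec, rfl | ⟨b, c, B, C, -, -, hB, hC, h₀, h₁, h₂, h₃⟩, hne⟩ := hs
  · exact absurd rfl hne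
  rw [h₃] at hne
  obtain ⟨hB₂, hC₁⟩ := mul_ne_zero_iff.1 hne
  have hb : 0 ≤ b - 2 * k := by simpa using (hB 2).nonneg hB₂
  have hc : 0 ≤ c - k := by simpa using (hC 1).nonneg hC₁
  obtain ⟨i, hi⟩ := Int.eq_ofNat_of_zero_le hb
  obtain ⟨j, hj⟩ := Int.eq_ofNat_of_zero_le hc
  obtain rfl : b = (2 * k + i : ℕ) := by push_cast; linarith
  obtain rfl : c = (k + j : ℕ) := by push_cast; linarith
  have hdeg : ((ℓ : ℤ) - (3 : ℕ) * k) = _ :=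
    IsHomOfDeg.inj_right (h₃ ▸ hsec 3) ((hB 2).mul (hC 1)) hne
  refine ⟨i, j, ?_, B, hB, C, hC, hB₂, hC₁, ?_⟩
  · push_cast [Fin.val_two, Fin.val_one] at hdeg
    omega
  · ext1 x
    fin_cases x
    exacts [h₀.symm, h₁.symm, h₂.symm, h₃.symm]

/-- The component `x.2` collects the points over which the quadratic factor vanishes; over the
others the linear one does, since residue fields are domains. -/
theorem vanishing_specRedSections_subset (n k : ℕ) (D : Finset (P1Pt Fq)) :
    {s ∈ specRedSections (3 * k + n) k | ∀ P ∈ D, VanishesOnFiber P s} ⊆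
      ⋃ x ∈ Finset.range (n + 1) ×ˢ D.powerset,
        Function.uncurry mulForm '' factorPairs k x.1 (n - x.1) x.2 (D \ x.2) := by
  rintro s ⟨hs, hvan⟩
  obtain ⟨i, j, hij, B, hB, C, hC, hB₂, hC₁, rfl⟩ := exists_mulForm_of_mem_specRedSections hs
  set D' := D.filter fun P => VanishesOnFiber P B
  have hBvan : ∀ P ∈ D', VanishesOnFiber P B := fun P hP => (Finset.mem_filter.1 hP).2
  have hCvan : ∀ P ∈ D \ D', VanishesOnFiber P C := by
    intro P hP
    obtain ⟨hPD, hPD'⟩ := Finset.mem_sdiff.1 hP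
    exact (vanishesOnFiber_or_of_mulForm (hvan P hPD)).resolve_left fun h =>
      hPD' (Finset.mem_filter.2 ⟨hPD, h⟩)
  obtain rfl : i + j = n := by omega
  refine Set.mem_biUnion (x := (i, D')) ?_
    ⟨(B, C), ⟨⟨⟨hB, hBvan⟩, hB₂⟩, ⟨⟨?_, hCvan⟩, hC₁⟩⟩, rfl⟩
  · exact Finset.mem_product.2
      ⟨Finset.mem_range.2 (by omega), Finset.mem_powerset.2 (Finset.filter_subset _ D)⟩
  · simpa using hC

theorem ncard_vanishing_specRedSections_le [Finite Fq] (n k : ℕ) (D : Finset (P1Pt Fq)) :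
    {s ∈ specRedSections (3 * k + n) k | ∀ P ∈ D, VanishesOnFiber P s}.ncard ≤
      ∑ x ∈ Finset.range (n + 1) ×ˢ D.powerset,
        (factorPairs k x.1 (n - x.1) x.2 (D \ x.2)).ncard := by
  have hfin (x : ℕ × Finset (P1Pt Fq)) : (factorPairs k x.1 (n - x.1) x.2 (D \ x.2)).Finite :=
    ((finite_vanishingSections _ _ _ _).subset (Set.sep_subset _ _)).prod
      ((finite_vanishingSections _ _ _ _).subset (Set.sep_subset _ _))
  calc _ ≤ _ := Set.ncard_le_ncard (vanishing_specRedSections_subset n k D)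
        ((Finset.finite_toSet _).biUnion fun x _ => (hfin x).image _)
    _ ≤ _ := Finset.set_ncard_biUnion_le _ _
    _ ≤ _ := Finset.sum_le_sum fun x _ => Set.ncard_image_le (hfin x)

variable [Fintype Fq]

theorem pow_two_mul_degD_mul_ncard_factorPairs_le (k i j : ℕ) {D D' : Finset (P1Pt Fq)}
    (hD' : D' ⊆ D) :
    Fintype.card Fq ^ (2 * degD D) * (factorPairs k i j D' (D \ D')).ncard ≤
      Fintype.card Fq ^ (4 * k + 3 * i + 2 * j + 5) := by
  have hB := pow_degD_mul_ncard_vanishingSections_last_ne_zero_le 2 (2 * k + i) k D'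
  have hC := pow_degD_mul_ncard_vanishingSections_last_ne_zero_le 1 (k + j) k (D \ D')
  rw [factorPairs, Set.ncard_prod, ← degD_add_degD_sdiff hD']
  calc _ = (Fintype.card Fq ^ (2 * degD D') *
          (lastNeZeroVanishingSections 2 (2 * k + i) k D').ncard) *
        (Fintype.card Fq ^ ((1 + 1) * degD (D \ D')) *
          (lastNeZeroVanishingSections 1 (k + j) k (D \ D')).ncard) := by ring
    _ ≤ Fintype.card Fq ^ (∑ a : Fin (2 + 1), (2 * k + i - a * k + 1)) *
        Fintype.card Fq ^ (∑ a : Fin (1 + 1), (k + j - a * k + 1)) := by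
      refine Nat.mul_le_mul ((Nat.mul_le_mul_right _ ?_).trans hB) hC
      exact Nat.pow_le_pow_right Fintype.card_pos (by omega)
    _ = _ := by
      rw [← pow_add]
      congr 1
      simp only [Fin.sum_univ_succ, Fin.sum_univ_zero, Fin.val_zero, Fin.val_succ]
      omega

theorem pow_degD_mul_ncard_vanishing_specRedSections_le (ℓ k : ℕ) (D : Finset (P1Pt Fq)) :
    Fintype.card Fq ^ degD D *
        {s ∈ specRedSections ℓ k | ∀ P ∈ D, VanishesOnFiber P s}.ncard ≤
      Fintype.card Fq ^ (3 * ℓ - 5 * k + 6) := by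
  set q := Fintype.card Fq
  rcases {s ∈ specRedSections ℓ k | ∀ P ∈ D, VanishesOnFiber P s}.eq_empty_or_nonempty with
    hempty | ⟨s, hs, -⟩
  · simp [hempty]
  obtain ⟨i, j, rfl, -⟩ := exists_mulForm_of_mem_specRedSections hs
  set n := i + j
  refine Nat.le_of_mul_le_mul_left ?_ (pow_pos Fintype.card_pos (degD D) : 0 < q ^ degD D)
  calc _ ≤ q ^ (2 * degD D) * ∑ x ∈ Finset.range (n + 1) ×ˢ D.powerset,
          (factorPairs k x.1 (n - x.1) x.2 (D \ x.2)).ncard := by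
        rw [← mul_assoc, ← pow_add, ← two_mul]
        exact Nat.mul_le_mul_left _ (ncard_vanishing_specRedSections_le n k D)
    _ ≤ ∑ x ∈ Finset.range (n + 1) ×ˢ D.powerset, q ^ (4 * k + 2 * n + 5) * q ^ x.1 := by
        rw [Finset.mul_sum]
        refine Finset.sum_le_sum fun x hx => ?_
        obtain ⟨hi, hD'⟩ := Finset.mem_product.1 hx
        have hi : x.1 ≤ n := Nat.lt_succ_iff.1 (Finset.mem_range.1 hi)
        refine (pow_two_mul_degD_mul_ncard_factorPairs_le k x.1 (n - x.1)
          (Finset.mem_powerset.1 hD')).trans_eq ?_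
        rw [← pow_add]
        congr 1
        omega
    _ = 2 ^ D.card * (q ^ (4 * k + 2 * n + 5) * ∑ a ∈ Finset.range (n + 1), q ^ a) := by
        simp only [Finset.sum_product, Finset.sum_const, Finset.card_powerset, smul_eq_mul,
          Finset.mul_sum]
    _ ≤ q ^ degD D * (q ^ (4 * k + 2 * n + 5) * q ^ (n + 1)) := by
        refine Nat.mul_le_mul (two_pow_card_le D) (Nat.mul_le_mul_left _ ?_)
        exact (Nat.geomSum_lt Fintype.one_lt_card fun a ha => Finset.mem_range.1 ha).le
    _ = q ^ degD D * q ^ (3 * (3 * k + n) - 5 * k + 6) := by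
        rw [← pow_add _ (4 * k + 2 * n + 5)]
        congr 2
        omega

theorem pow_degD_mul_ncard_vanishing_xReducible_le {ℓ k : ℕ} (h : 2 * k ≤ ℓ)
    (D : Finset (P1Pt Fq)) :
    Fintype.card Fq ^ degD D *
        {s ∈ vanishingSections 3 ℓ k D | s ≠ 0 ∧ s 3 = 0}.ncard ≤
      Fintype.card Fq ^ (3 * ℓ - 3 * k + 3) := by
  have hcard : {s ∈ vanishingSections 3 ℓ k D | s ≠ 0 ∧ s 3 = 0}.ncard ≤
      (vanishingSections 2 ℓ k D \ {0}).ncard := by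
    refine Set.ncard_le_ncard_of_injOn Fin.init (fun s hs => ⟨?_, fun h₀ => hs.2.1 ?_⟩)
      (fun s hs t ht hst => ?_) ((finite_vanishingSections 2 ℓ k D).subset Set.sdiff_subset)
    · exact ⟨fun i => hs.1.1 i.castSucc, fun P hP i => hs.1.2 P hP i.castSucc⟩
    · exact funext (Fin.lastCases hs.2.2 (congrFun h₀))
    · exact funext (Fin.lastCases (hs.2.2.trans ht.2.2.symm) (congrFun hst))
  have hexp : ∑ i : Fin (2 + 1), (ℓ - i * k + 1) = 3 * ℓ - 3 * k + 3 := by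
    simp only [Fin.sum_univ_succ, Fin.sum_univ_zero, Fin.val_zero, Fin.val_succ]
    omega
  rw [← hexp]
  exact (Nat.mul_le_mul_left _ hcard).trans
    (pow_degD_mul_ncard_vanishingSections_diff_zero_le 2 ℓ k D)

theorem pow_degD_mul_ncard_vanishing_horizRedSections_le {ℓ k : ℕ} (h : 2 * k ≤ ℓ)
    (D : Finset (P1Pt Fq)) :
    Fintype.card Fq ^ degD D *
        {s ∈ horizRedSections ℓ k | ∀ P ∈ D, VanishesOnFiber P s}.ncard ≤
      Fintype.card Fq ^ (3 * ℓ - 3 * k + 7) := by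
  set q := Fintype.card Fq
  have hq : 0 < q := Fintype.card_pos
  have hsub : {s ∈ horizRedSections ℓ k | ∀ P ∈ D, VanishesOnFiber P s} ⊆
      {s ∈ vanishingSections 3 ℓ k D | s ≠ 0 ∧ s 3 = 0} ∪
        {s ∈ specRedSections ℓ k | ∀ P ∈ D, VanishesOnFiber P s} := by
    rintro s ⟨⟨hs, hs₀, hred⟩, hvan⟩
    by_cases h₃ : s 3 = 0
    · exact Or.inl ⟨⟨hs, hvan⟩, hs₀, h₃⟩
    · exact Or.inr ⟨⟨hs, hred, h₃⟩, hvan⟩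
  calc _ ≤ q ^ degD D * ({s ∈ vanishingSections 3 ℓ k D | s ≠ 0 ∧ s 3 = 0}.ncard +
        {s ∈ specRedSections ℓ k | ∀ P ∈ D, VanishesOnFiber P s}.ncard) := by
        refine Nat.mul_le_mul_left _ ((Set.ncard_le_ncard hsub ?_).trans (Set.ncard_union_le _ _))
        exact (finite_secSet 3 ℓ k).subset fun s hs => hs.elim (fun h => h.1.1) fun h => h.1.1
    _ ≤ q ^ (3 * ℓ - 3 * k + 3) + q ^ (3 * ℓ - 5 * k + 6) := by
        rw [mul_add]
        exact Nat.add_le_add (pow_degD_mul_ncard_vanishing_xReducible_le h D)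
          (pow_degD_mul_ncard_vanishing_specRedSections_le ℓ k D)
    _ ≤ q ^ (3 * ℓ - 3 * k + 6) + q ^ (3 * ℓ - 3 * k + 6) :=
        Nat.add_le_add (Nat.pow_le_pow_right hq (by omega)) (Nat.pow_le_pow_right hq (by omega))
    _ ≤ q ^ (3 * ℓ - 3 * k + 7) := by
        rw [← two_mul, pow_succ' q (_ + 6)]
        exact Nat.mul_le_mul_right _ Fintype.one_lt_card

end Reducible

theorem setOf_mem_secSet_eq_zero (m ℓ k : ℕ) :
    {s ∈ (SecSet m ℓ k : Set (Fin (m + 1) → MvPolynomial (Fin 2) Fq)) | s = 0} = {0} := by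
  ext s
  refine ⟨And.right, ?_⟩
  rintro rfl
  exact ⟨fun i => ⟨MvPolynomial.isHomogeneous_zero _ _ _, fun _ => rfl⟩, rfl⟩


theorem statement_14_general (Fq : Type) [Field Fq] [Fintype Fq] :
    ∃ K : ℕ, 0 < K ∧
      ∀ (ℓ k : ℕ) (D : Finset (P1Pt Fq)), 2 * k ≤ ℓ →
        ((∑ᶠ s ∈ {s ∈ SecSet 3 ℓ k | s ≠ 0 ∧ HorizRed k s}, rD D s) ≤
            K * 5 ^ D.card * Fintype.card Fq ^ (3 * ℓ - 3 * k)) ∧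
        ((∑ᶠ s ∈ {s ∈ SecSet 3 ℓ k | HorizRed k s ∧ s 3 ≠ 0}, rD D s) ≤
            K * 5 ^ D.card * Fintype.card Fq ^ (3 * ℓ - 5 * k)) ∧
        ((∑ᶠ s ∈ {s ∈ SecSet 3 ℓ k | s = 0}, rD D s) ≤
            K * 2 ^ D.card * Fintype.card Fq ^ degD D) ∧
        ((∑ᶠ s ∈ {s ∈ SecSet 3 ℓ k | s ≠ 0 ∧ HorizRed k s}, aD D s).natAbs ≤
            K * 3 ^ D.card * Fintype.card Fq ^ (3 * ℓ - 3 * k)) ∧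
        ((∑ᶠ s ∈ {s ∈ SecSet 3 ℓ k | HorizRed k s ∧ s 3 ≠ 0}, aD D s).natAbs ≤
            K * 3 ^ D.card * Fintype.card Fq ^ (3 * ℓ - 5 * k)) ∧
        ((∑ᶠ s ∈ {s ∈ SecSet 3 ℓ k | s = 0}, aD D s).natAbs ≤
            K * Fintype.card Fq ^ degD D) := by
  set q := Fintype.card Fq
  have hq : 0 < q := Fintype.card_pos
  have hK : 1 ≤ q ^ 7 := Nat.one_le_pow _ _ hq
  refine ⟨q ^ 7, hK, fun ℓ k D hℓ => ?_⟩
  have hhr_fin : (horizRedSections ℓ k).Finite := (finite_secSet (Fq := Fq) 3 ℓ k).sep _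
  have hsr_fin : (specRedSections ℓ k).Finite := (finite_secSet (Fq := Fq) 3 ℓ k).sep _
  have hhr := pow_degD_mul_ncard_vanishing_horizRedSections_le (Fq := Fq) hℓ
  have hsr (D' : Finset (P1Pt Fq)) :=
    (pow_degD_mul_ncard_vanishing_specRedSections_le ℓ k D').trans
      (Nat.pow_le_pow_right hq (Nat.le_succ _))
  have hconst (a e : ℕ) : a * q ^ (e + 7) = q ^ 7 * a * q ^ e := by ring
  rw [setOf_mem_secSet_eq_zero, finsum_mem_singleton, finsum_mem_singleton, aD_zero]
  refine ⟨?_, ?_, ?_, ?_, ?_, ?_⟩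
  · exact (finsum_mem_rD_le hhr_fin hhr).trans_eq (hconst _ _)
  · exact (finsum_mem_rD_le hsr_fin hsr).trans_eq (hconst _ _)
  · rw [mul_assoc]
    exact (rD_zero_le D).trans (Nat.le_mul_of_pos_left _ hK)
  · exact (natAbs_finsum_mem_aD_le hhr_fin hhr).trans_eq (hconst _ _)
  · exact (natAbs_finsum_mem_aD_le hsr_fin hsr).trans_eq (hconst _ _)
  · simpa only [Int.natAbs_pow, Int.natAbs_natCast] using Nat.le_mul_of_pos_left _ hK

/-- Let `ℓ, k ≥ 0` with `ℓ ≥ 3k` and `D` a reduced effective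
divisor on `P¹`.  Then, with implied constants depending only on `q`:
`R^{hr}(ℓ,k,D) = O(5^{ω(D)} q^{3ℓ−3k})`, `R^{sr}(ℓ,k,D) = O(5^{ω(D)} q^{3ℓ−5k})`,
`R^{z}(ℓ,k,D) = O(2^{ω(D)} q^{deg D})`, `|Φ^{hr}(ℓ,k,D)| = O(3^{ω(D)} q^{3ℓ−3k})`,
`|Φ^{sr}(ℓ,k,D)| = O(3^{ω(D)} q^{3ℓ−5k})`, and `|Φ^{z}(ℓ,k,D)| = O(q^{deg D})`.
Here the superscripts `hr`, `sr`, `z` restrict the sum over `V(ℓ,k)` to the nonzero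
horizontally reducible, specially reducible (horizontally reducible with `A₃ ≠ 0`),
and zero sections respectively. -/
theorem statement_14 (Fq : Type) [Field Fq] [Fintype Fq] :
    ∃ K : ℕ, 0 < K ∧
      ∀ (ℓ k : ℕ) (D : Finset (P1Pt Fq)), 3 * k ≤ ℓ →
        ((∑ᶠ s ∈ {s ∈ SecSet 3 ℓ k | s ≠ 0 ∧ HorizRed k s}, rD D s) ≤
            K * 5 ^ D.card * Fintype.card Fq ^ (3 * ℓ - 3 * k)) ∧
        ((∑ᶠ s ∈ {s ∈ SecSet 3 ℓ k | HorizRed k s ∧ s 3 ≠ 0}, rD D s) ≤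
            K * 5 ^ D.card * Fintype.card Fq ^ (3 * ℓ - 5 * k)) ∧
        ((∑ᶠ s ∈ {s ∈ SecSet 3 ℓ k | s = 0}, rD D s) ≤
            K * 2 ^ D.card * Fintype.card Fq ^ degD D) ∧
        ((∑ᶠ s ∈ {s ∈ SecSet 3 ℓ k | s ≠ 0 ∧ HorizRed k s}, aD D s).natAbs ≤
            K * 3 ^ D.card * Fintype.card Fq ^ (3 * ℓ - 3 * k)) ∧
        ((∑ᶠ s ∈ {s ∈ SecSet 3 ℓ k | HorizRed k s ∧ s 3 ≠ 0}, aD D s).natAbs ≤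
            K * 3 ^ D.card * Fintype.card Fq ^ (3 * ℓ - 5 * k)) ∧
        ((∑ᶠ s ∈ {s ∈ SecSet 3 ℓ k | s = 0}, aD D s).natAbs ≤
            K * Fintype.card Fq ^ degD D) := by
  obtain ⟨K, hK, h⟩ := statement_14_general Fq
  exact ⟨K, hK, fun ℓ k D hℓ => h ℓ k D (by omega)⟩

end Stmt14
end
end

section
/- Let ℓ, k ≥ 0 be integers and D a reduced effective divisor on P¹ with ℓ ≥ 3k and ℓ ≥ deg D. Then R^{xir}(ℓ,k,D) = Σ_{D₀ ⊆ D} [ q^{4ℓ−6k+4−deg D₀} − q^{3ℓ−3k+3} if ℓ−3k ≥ deg D₀, and 0 otherwise ], where D₀ ranges over all subdivisors of D (including 0 and D). Consequently, by inclusion–exclusion, Φ^{xir}(ℓ,k,D) = q^{4ℓ−6k+4−deg D} − q^{3ℓ−3k+3} if ℓ−3k ≥ deg D, and Φ^{xir}(ℓ,k,D) = 0 otherwise. -/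
/-!
Statement 16.  Exact formulas for the root-counting sums `R^{xir}(ℓ,k,D)` and
`Φ^{xir}(ℓ,k,D)` over the x-irreducible binary cubic forms (those with `A₃ ≠ 0`)
on the Hirzebruch surface `F_k` over `F_q`, in the small range `ℓ ≥ deg D`.
-/
open scoped Classical

noncomputable section

namespace Stmt16

/-- Closed points of the projective line `P¹` over `F_q`: `none` is the point at
infinity, and `some p` corresponds to the monic irreducible polynomial `p`. -/
abbrev P1Pt (Fq : Type) [Field Fq] : Type :=
  Option {p : Polynomial Fq // p.Monic ∧ Irreducible p}

variable {Fq : Type} [Field Fq]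

/-- The degree of a closed point of `P¹`. -/
def P1Pt.deg : P1Pt Fq → ℕ
  | none => 1
  | some p => p.1.natDegree

/-- The residue field of a closed point of `P¹`. -/
def P1Pt.Res : P1Pt Fq → Type
  | none => Fq
  | some p => AdjoinRoot p.1

instance (P : P1Pt Fq) : CommRing (P1Pt.Res P) :=
  match P with
  | none => inferInstanceAs (CommRing Fq)
  | some p => inferInstanceAs (CommRing (AdjoinRoot p.1))

instance (P : P1Pt Fq) : Algebra Fq (P1Pt.Res P) :=
  match P with
  | none => Algebra.id Fq
  | some p => inferInstanceAs (Algebra Fq (AdjoinRoot p.1))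

/-- The homogeneous coordinates `(t₀ : t₁)` of a closed point of `P¹`, in its residue
field: `(1 : 0)` for the point at infinity, and `(θ : 1)` with `θ` the root of `p`
for the point `some p`. -/
def P1Pt.coords : (P : P1Pt Fq) → Fin 2 → P1Pt.Res P
  | none => ![1, 0]
  | some p => ![AdjoinRoot.root p.1, 1]

/-- Evaluate a polynomial in the homogeneous coordinates `t₀, t₁` of the base `P¹`
at a closed point `P`, in the residue field of `P`. -/
def resEval (P : P1Pt Fq) (A : MvPolynomial (Fin 2) Fq) : P1Pt.Res P :=
  MvPolynomial.aeval (P1Pt.coords P) A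

/-- `r_P(s)`: the number of relative degree one points of the fiber of `F_k → P¹`
over `P` at which the binary cubic form `s = (A₀, A₁, A₂, A₃)` vanishes.  These
points are the `(z : 1)` with `z` in the residue field of `P`, together with `(1 : 0)`. -/
def rP (P : P1Pt Fq) (s : Fin 4 → MvPolynomial (Fin 2) Fq) : ℕ :=
  Nat.card {z : P1Pt.Res P //
      resEval P (s 0) * z ^ 3 + resEval P (s 1) * z ^ 2
        + resEval P (s 2) * z + resEval P (s 3) = 0} +
    (if resEval P (s 0) = 0 then 1 else 0)

/-- The degree of a reduced effective divisor (a finite set of closed points) on `P¹`. -/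
def degD (D : Finset (P1Pt Fq)) : ℕ := ∑ P ∈ D, P1Pt.deg P

/-- `r_D(s) = ∏_{P ∣ D} r_P(s)`. -/
def rD (D : Finset (P1Pt Fq)) (s : Fin 4 → MvPolynomial (Fin 2) Fq) : ℕ :=
  ∏ P ∈ D, rP P s

/-- `a_D(s) = ∏_{P ∣ D} (r_P(s) − 1)`. -/
def aD (D : Finset (P1Pt Fq)) (s : Fin 4 → MvPolynomial (Fin 2) Fq) : ℤ :=
  ∏ P ∈ D, ((rP P s : ℤ) - 1)

/-- `p` is homogeneous of (possibly negative) degree `d`; for `d < 0` this forces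
`p = 0`. -/
def IsHomOfDeg (p : MvPolynomial (Fin 2) Fq) (d : ℤ) : Prop :=
  p.IsHomogeneous d.toNat ∧ (d < 0 → p = 0)

/-- The space of global sections of `O(m, ℓ)` on the Hirzebruch surface `F_k`,
viewed as tuples `(A₀, …, A_m)` of binary forms with `A_i` homogeneous of degree
`ℓ − i·k`. -/
def SecSet (m ℓ k : ℕ) : Set (Fin (m + 1) → MvPolynomial (Fin 2) Fq) :=
  {s | ∀ i : Fin (m + 1), IsHomOfDeg (s i) ((ℓ : ℤ) - (i : ℕ) * k)}

/-- A binary cubic form `s ∈ H⁰(F_k, O(3,ℓ))` is horizontally reducible iff it is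
zero or factors as a product of a nonzero quadratic and a nonzero linear form in
`x, y` with homogeneous polynomial coefficients. -/
def HorizRed (k : ℕ) (s : Fin 4 → MvPolynomial (Fin 2) Fq) : Prop :=
  s = 0 ∨ ∃ (b c : ℤ) (B : Fin 3 → MvPolynomial (Fin 2) Fq)
      (C : Fin 2 → MvPolynomial (Fin 2) Fq),
    B ≠ 0 ∧ C ≠ 0 ∧
    (∀ j : Fin 3, IsHomOfDeg (B j) (b - (j : ℕ) * k)) ∧
    (∀ j : Fin 2, IsHomOfDeg (C j) (c - (j : ℕ) * k)) ∧
    s 0 = B 0 * C 0 ∧ s 1 = B 0 * C 1 + B 1 * C 0 ∧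
    s 2 = B 1 * C 1 + B 2 * C 0 ∧ s 3 = B 2 * C 1

/-!
Since `r_P = 1 + (r_P - 1)`, we have `r_D = Σ_{D₀ ⊆ D} a_{D₀}`, so the formula for `R^{xir}` is
the sum over `D₀ ⊆ D` of the formula for `Φ^{xir}`. To compute `Φ^{xir}(ℓ,k,D)`, fix `A₁, A₂,
A₃` and sum over `A₀` first. As `deg D ≤ ℓ + 1`, the values of `A₀` at the points of `D` are
independent and uniformly distributed, and over a finite field `κ` a cubic with uniformly random
leading coefficient has on average exactly one projective root, unless its constant term
vanishes, when it has two. Hence the inner sum is `q^{ℓ+1}` if `A₃` vanishes on `D` and `0`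
otherwise. It remains to count the nonzero forms `A₃` of degree `ℓ - 3k` vanishing on `D`: there
are `q^{ℓ-3k+1-deg D} - 1` of them, or none when `deg D > ℓ - 3k`.
-/

section FiniteSums

open scoped Finset

lemma sum_comp_of_surjective {V W M : Type*} [AddGroup V] [AddGroup W] [Fintype V] [Fintype W]
    [AddCommMonoid M] {φ : V →+ W} (hφ : Function.Surjective φ) (F : W → M) :
    ∑ v, F (φ v) = Nat.card φ.ker • ∑ w, F w := by
  have card_fiber (w : W) : #{v | φ v = w} = Nat.card φ.ker := by
    rw [AddMonoidHom.card_fiber_eq_of_mem_range φ (hφ w) ⟨0, map_zero φ⟩,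
      ← Fintype.card_subtype, ← Nat.card_eq_fintype_card]
    rfl
  rw [Finset.sum_comp, Finset.image_univ_of_surjective hφ, Finset.smul_sum]
  simp only [card_fiber]

variable {K : Type*} [CommRing K] [IsDomain K] [Fintype K] {n : ℕ}

lemma card_mul_pow_add_eq_zero {z : K} (hz : z ≠ 0) (c : K) :
    #{a : K | a * z ^ n + c = 0} = 1 := by
  have hinj : Function.Injective fun a : K => a * z ^ n + c :=
    (add_left_injective c).comp (mul_left_injective₀ (pow_ne_zero n hz))
  obtain ⟨a, ha, huniq⟩ := (Finite.injective_iff_bijective.1 hinj).existsUnique 0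
  exact Finset.card_eq_one.2 ⟨a, by ext b; simpa using ⟨huniq b, fun h => h ▸ ha⟩⟩

/- Count the pairs `(a, z)` by `z` instead of by `a`: each of the `|K| - 1` nonzero `z` has exactly
one `a`, while `z = 0` has all or none of them. -/
lemma sum_card_roots_sub_one (hn : n ≠ 0) (g : K → K) :
    ∑ a : K, ((Nat.card {z : K // a * z ^ n + g z = 0} : ℤ) + (if a = 0 then 1 else 0) - 1) =
      if g 0 = 0 then (Fintype.card K : ℤ) else 0 := by
  have card_zero : (#{a : K | a * 0 ^ n + g 0 = 0} : ℤ) =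
      if g 0 = 0 then ↑(Fintype.card K) else 0 := by
    split_ifs with h <;> simp [hn, h]
  have card_ne_zero : ∑ z ∈ Finset.univ.erase (0 : K), (#{a : K | a * z ^ n + g z = 0} : ℤ) =
      Fintype.card K - 1 := by
    have hone : ∀ z ∈ Finset.univ.erase (0 : K), (#{a : K | a * z ^ n + g z = 0} : ℤ) = 1 :=
      fun z hz => by rw [card_mul_pow_add_eq_zero (Finset.ne_of_mem_erase hz), Nat.cast_one]
    rw [Finset.sum_congr rfl hone]
    simp [Nat.cast_sub Fintype.card_pos]
  have double_count : ∑ a : K, (Nat.card {z : K // a * z ^ n + g z = 0} : ℤ) =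
      ∑ z : K, (#{a : K | a * z ^ n + g z = 0} : ℤ) := by
    simp only [Nat.card_eq_fintype_card, Fintype.card_subtype, Finset.card_filter, Nat.cast_sum]
    exact Finset.sum_comm
  rw [Finset.sum_sub_distrib, Finset.sum_add_distrib, double_count,
    ← Finset.sum_erase_add _ _ (Finset.mem_univ 0), card_ne_zero, card_zero]
  simp only [Finset.sum_ite_eq', Finset.mem_univ, if_true, Finset.sum_const, Finset.card_univ,
    nsmul_one]
  ring

end FiniteSums

section Homogenization

open Polynomial

variable {R : Type*} [CommRing R] {n : ℕ}

lemma natDegree_le_of_mem_degreeLT {f : R[X]} (hf : f ∈ degreeLT R (n + 1)) :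
    f.natDegree ≤ n := by
  rw [degreeLT_succ_eq_degreeLE, mem_degreeLE] at hf
  exact natDegree_le_of_degree_le hf

lemma mem_degreeLT_iff_coeff_eq_zero {f : R[X]} (hf : f ∈ degreeLT R (n + 1)) :
    f ∈ degreeLT R n ↔ f.coeff n = 0 := by
  rw [mem_degreeLT, degree_lt_iff_coeff_zero] at hf ⊢
  exact ⟨fun h => h n le_rfl, fun h m hm => hm.eq_or_lt.elim (fun e => e ▸ h) (hf m)⟩

lemma monic_mul_mem_degreeLT_iff {M : R[X]} (hM : M.Monic) {f : R[X]} :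
    M * f ∈ degreeLT R n ↔ f ∈ degreeLT R (n - M.natDegree) := by
  rcases eq_or_ne f 0 with rfl | hf
  · simp
  · have hMf : M * f ≠ 0 := fun h => hf (hM.mul_right_eq_zero_iff.1 h)
    rw [mem_degreeLT, mem_degreeLT, ← natDegree_lt_iff_degree_lt hf,
      ← natDegree_lt_iff_degree_lt hMf, hM.natDegree_mul' hf]
    omega

lemma homogenize_injOn_degreeLT :
    Set.InjOn (fun f : R[X] => f.homogenize n) (degreeLT R (n + 1)) := fun f hf g hg hfg =>
  sub_eq_zero.1 <| eq_zero_of_homogenize_eq_zero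
    (natDegree_le_of_mem_degreeLT (Submodule.sub_mem _ hf hg))
    (by rw [homogenize_sub]; exact sub_eq_zero.2 hfg)

lemma exists_homogenize_eq {A : MvPolynomial (Fin 2) R} (hA : A.IsHomogeneous n) :
    ∃ f ∈ degreeLT R (n + 1), f.homogenize n = A := by
  refine ⟨MvPolynomial.aeval ![X, 1] A, ?_, homogenize_eq_of_isHomogeneous hA rfl⟩
  rw [A.as_sum, map_sum]
  refine Submodule.sum_mem _ fun m hm => ?_
  have hdeg : m 0 + m 1 = n := by
    simpa [Finsupp.weight_apply, Finsupp.sum_fintype] using hA (MvPolynomial.mem_support_iff.1 hm)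
  have hterm : MvPolynomial.aeval ![X, 1] (MvPolynomial.monomial m (A.coeff m)) =
      C (A.coeff m) * X ^ m 0 := by
    simp [MvPolynomial.aeval_monomial, Finsupp.prod_fintype]
  rw [hterm, mem_degreeLT]
  exact (degree_C_mul_X_pow_le _ _).trans_lt (by exact_mod_cast (by omega : m 0 < n + 1))

lemma aeval_one_zero_homogenize (f : R[X]) (n : ℕ) :
    MvPolynomial.aeval (![1, 0] : Fin 2 → R) (f.homogenize n) = f.coeff n := by
  rw [homogenize, map_sum, Finset.sum_eq_single (n, 0)]
  · simp [MvPolynomial.aeval_monomial, Finsupp.update_eq_add_single, Finsupp.prod_fintype]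
  · rintro ⟨i, j⟩ hij hne
    have hj : j ≠ 0 := by
      rintro rfl
      simp_all
    simp [MvPolynomial.aeval_monomial, Finsupp.update_eq_add_single, Finsupp.prod_fintype, hj]
  · simp

end Homogenization

section ResidueFields

instance (P : P1Pt Fq) : IsDomain P.Res :=
  match P with
  | none => inferInstanceAs (IsDomain Fq)
  | some p =>
    have : Fact (Irreducible p.1) := ⟨p.2.2⟩
    inferInstanceAs (IsDomain (AdjoinRoot p.1))

instance (P : P1Pt Fq) : Module.Finite Fq P.Res :=
  match P with
  | none => inferInstanceAs (Module.Finite Fq Fq)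
  | some p => (AdjoinRoot.powerBasis p.2.2.ne_zero).finite

instance [Finite Fq] (P : P1Pt Fq) : Fintype P.Res :=
  have := Module.finite_of_finite Fq (M := P.Res)
  Fintype.ofFinite _

lemma finrank_res (P : P1Pt Fq) : Module.finrank Fq P.Res = P.deg :=
  match P with
  | none => Module.finrank_self Fq
  | some p => (AdjoinRoot.powerBasis p.2.2.ne_zero).finrank

lemma card_res [Fintype Fq] (P : P1Pt Fq) :
    Fintype.card P.Res = Fintype.card Fq ^ P.deg := by
  rw [Module.card_eq_pow_finrank (K := Fq), finrank_res]

lemma prod_card_res [Fintype Fq] (D : Finset (P1Pt Fq)) :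
    ∏ P ∈ D, Fintype.card P.Res = Fintype.card Fq ^ degD D := by
  simp only [card_res, Finset.prod_pow_eq_pow_sum, degD]

end ResidueFields

section BinaryForms

open scoped Finset
open Polynomial

/-- The space `H⁰(P¹, O(n))` of binary forms of degree `n` in `t₀, t₁`. -/
abbrev BinaryForm (F : Type*) [CommRing F] (n : ℕ) : Submodule F (MvPolynomial (Fin 2) F) :=
  MvPolynomial.homogeneousSubmodule (Fin 2) F n

/-- The monic polynomial cutting out the part of the divisor `D` away from the point at
infinity. -/
def affineEquation (D : Finset (P1Pt Fq)) : Fq[X] :=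
  ∏ p ∈ D.eraseNone, p.1

/-- The restriction map `H⁰(P¹, O(n)) → H⁰(D, O(n))`, trivialised by the chosen homogeneous
coordinates of the points of `D`. -/
def evalOn (n : ℕ) (D : Finset (P1Pt Fq)) : BinaryForm Fq n →ₗ[Fq] (P : D) → P1Pt.Res P.1 :=
  LinearMap.pi fun P => (MvPolynomial.aeval (P1Pt.coords P.1)).toLinearMap.domRestrict _

variable {n : ℕ} {D : Finset (P1Pt Fq)}

lemma mem_ker_evalOn {A : BinaryForm Fq n} :
    A ∈ (evalOn n D).ker ↔ ∀ P ∈ D, resEval P A = 0 := by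
  rw [LinearMap.mem_ker, funext_iff, Subtype.forall]
  rfl

lemma monic_affineEquation (D : Finset (P1Pt Fq)) : (affineEquation D).Monic :=
  monic_prod_of_monic _ _ fun p _ => p.2.1

lemma degD_eq_add_natDegree_affineEquation (D : Finset (P1Pt Fq)) :
    degD D = (if none ∈ D then 1 else 0) + (affineEquation D).natDegree := by
  rw [affineEquation, natDegree_prod_of_monic _ _ fun p _ => p.2.1,
    Finset.sum_eraseNone fun p : {p : Fq[X] // p.Monic ∧ Irreducible p} => p.1.natDegree,
    ← Finset.sum_ite_eq' D none fun _ => 1, ← Finset.sum_add_distrib, degD]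
  refine Finset.sum_congr rfl fun P _ => ?_
  cases P <;> simp [P1Pt.deg]

lemma affineEquation_dvd_iff {f : Fq[X]} :
    affineEquation D ∣ f ↔ ∀ p, some p ∈ D → p.1 ∣ f := by
  simp only [← Finset.mem_eraseNone]
  refine ⟨fun h p hp => (Finset.dvd_prod_of_mem _ hp).trans h, Finset.prod_dvd_of_coprime ?_⟩
  intro p _ r _ hpr
  refine p.2.2.coprime_iff_not_dvd.2 fun hdvd => hpr (Subtype.ext ?_)
  exact eq_of_monic_of_associated p.2.1 r.2.1 ((p.2.2.dvd_irreducible_iff_associated r.2.2).1 hdvd)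

lemma resEval_none_homogenize_eq_zero_iff {f : Fq[X]} :
    resEval none (f.homogenize n) = 0 ↔ f.coeff n = 0 := by
  rw [← aeval_one_zero_homogenize]
  rfl

lemma resEval_some_homogenize_eq_zero_iff {p : {p : Fq[X] // p.Monic ∧ Irreducible p}} {f : Fq[X]}
    (hf : f ∈ degreeLT Fq (n + 1)) :
    resEval (some p) (f.homogenize n) = 0 ↔ p.1 ∣ f := by
  have heval : resEval (some p) (f.homogenize n) = aeval (AdjoinRoot.root p.1) f :=
    aeval_homogenize_of_eq_one (A := AdjoinRoot p.1) (natDegree_le_of_mem_degreeLT hf)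
      ![AdjoinRoot.root p.1, 1] rfl
  rw [heval, ← AdjoinRoot.mk_eq_zero, ← AdjoinRoot.aeval_eq]
  rfl

lemma forall_resEval_homogenize_eq_zero_iff {f : Fq[X]} (hf : f ∈ degreeLT Fq (n + 1)) :
    (∀ P ∈ D, resEval P (f.homogenize n) = 0) ↔
      ∃ g ∈ degreeLT Fq (n + 1 - degD D), affineEquation D * g = f := by
  have hinfty : (none ∈ D → f.coeff n = 0) ↔
      f ∈ degreeLT Fq (n + 1 - if none ∈ D then 1 else 0) := by
    split_ifs with h <;> simp [h, hf, mem_degreeLT_iff_coeff_eq_zero hf]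
  simp only [Option.forall, resEval_none_homogenize_eq_zero_iff,
    resEval_some_homogenize_eq_zero_iff hf]
  rw [← affineEquation_dvd_iff, hinfty, degD_eq_add_natDegree_affineEquation, ← Nat.sub_sub]
  simp only [← monic_mul_mem_degreeLT_iff (monic_affineEquation D)]
  constructor
  · rintro ⟨hmem, g, rfl⟩
    exact ⟨g, hmem, rfl⟩
  · rintro ⟨g, hmem, rfl⟩
    exact ⟨hmem, dvd_mul_right _ _⟩

/-- Multiplication by an equation of `D`, as a map from polynomials (dehomogenised forms of degree
`n - deg D`) to binary forms of degree `n`; homogenising in degree `n` supplies the factor `t₁`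
when `D` contains the point at infinity. -/
def mulEquation (n : ℕ) (D : Finset (P1Pt Fq)) :
    degreeLT Fq (n + 1 - degD D) →ₗ[Fq] BinaryForm Fq n :=
  ((homogenizeLM n ∘ₗ LinearMap.mulLeft Fq (affineEquation D)).domRestrict _).codRestrict _
    fun _ => isHomogeneous_homogenize _

lemma affineEquation_mul_mem_degreeLT (g : degreeLT Fq (n + 1 - degD D)) :
    affineEquation D * g.1 ∈ degreeLT Fq (n + 1) :=
  (monic_mul_mem_degreeLT_iff (monic_affineEquation D)).2 <|
    degreeLT_mono (by rw [degD_eq_add_natDegree_affineEquation D]; omega) g.2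

lemma mulEquation_injective : Function.Injective (mulEquation n D) := fun g g' h =>
  Subtype.ext <| (monic_affineEquation D).isRegular.left <|
    homogenize_injOn_degreeLT (affineEquation_mul_mem_degreeLT g)
      (affineEquation_mul_mem_degreeLT g') (congrArg Subtype.val h)

lemma range_mulEquation : (mulEquation n D).range = (evalOn n D).ker := by
  ext ⟨A, hA⟩
  rw [mem_ker_evalOn]
  obtain ⟨f, hf, rfl⟩ := exists_homogenize_eq hA
  rw [forall_resEval_homogenize_eq_zero_iff hf]
  constructor
  · rintro ⟨g, hg⟩
    exact ⟨g.1, g.2, homogenize_injOn_degreeLT (affineEquation_mul_mem_degreeLT g) hf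
      (congrArg Subtype.val hg)⟩
  · rintro ⟨g, hg, rfl⟩
    exact ⟨⟨g, hg⟩, rfl⟩

/- If `deg D > n`, the truncated `n + 1 - degD D` is `0`: no nonzero form of degree `n` vanishes on
`D`. -/
lemma finrank_ker_evalOn (n : ℕ) (D : Finset (P1Pt Fq)) :
    Module.finrank Fq (evalOn n D).ker = n + 1 - degD D := by
  rw [← range_mulEquation, LinearMap.finrank_range_of_inj mulEquation_injective,
    (degreeLTEquiv Fq _).finrank_eq, Module.finrank_fin_fun]

lemma finrank_binaryForm (n : ℕ) : Module.finrank Fq (BinaryForm Fq n) = n + 1 := by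
  have hker : (evalOn (Fq := Fq) n ∅).ker = ⊤ := by
    ext A
    simp only [mem_ker_evalOn, Finset.notMem_empty, IsEmpty.forall_iff, implies_true,
      Submodule.mem_top]
  rw [← finrank_top, ← hker, finrank_ker_evalOn]
  rfl

instance (n : ℕ) : Module.Finite Fq (BinaryForm Fq n) :=
  Module.finite_of_finrank_pos (by rw [finrank_binaryForm]; omega)

lemma evalOn_surjective (hD : degD D ≤ n + 1) : Function.Surjective (evalOn n D) := by
  have hcod : Module.finrank Fq ((P : D) → P1Pt.Res P.1) = degD D := by
    simp only [Module.finrank_pi_fintype, finrank_res]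
    exact Finset.sum_coe_sort D P1Pt.deg
  have hrank := (evalOn n D).finrank_range_add_finrank_ker
  rw [finrank_ker_evalOn, finrank_binaryForm] at hrank
  exact LinearMap.range_eq_top.1 (Submodule.eq_top_of_finrank_eq (by omega))

instance [Finite Fq] (n : ℕ) : Fintype (BinaryForm Fq n) :=
  have := Module.finite_of_finite Fq (M := BinaryForm Fq n)
  Fintype.ofFinite _

variable [Fintype Fq]

lemma card_binaryForm (n : ℕ) : Fintype.card (BinaryForm Fq n) = Fintype.card Fq ^ (n + 1) := by
  rw [Module.card_eq_pow_finrank (K := Fq), finrank_binaryForm]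

lemma card_ker_evalOn (n : ℕ) (D : Finset (P1Pt Fq)) :
    Nat.card (evalOn n D).ker = Fintype.card Fq ^ (n + 1 - degD D) := by
  rw [Module.natCard_eq_pow_finrank (K := Fq), finrank_ker_evalOn, Nat.card_eq_fintype_card]

lemma sum_prod_resEval {M : Type*} [CommSemiring M] (hD : degD D ≤ n + 1)
    (F : (P : P1Pt Fq) → P.Res → M) :
    ∑ A : BinaryForm Fq n, ∏ P ∈ D, F P (resEval P A) =
      (Fintype.card Fq : M) ^ (n + 1 - degD D) * ∏ P ∈ D, ∑ x, F P x := by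
  have hsum := sum_comp_of_surjective (φ := (evalOn n D).toAddMonoidHom) (evalOn_surjective hD)
    fun w => ∏ P : D, F P.1 (w P)
  have hcard : Nat.card (evalOn n D).toAddMonoidHom.ker = Fintype.card Fq ^ (n + 1 - degD D) :=
    card_ker_evalOn n D
  rw [hcard, nsmul_eq_mul, Nat.cast_pow] at hsum
  rw [← Finset.prod_coe_sort D, Finset.prod_univ_sum, Fintype.piFinset_univ, ← hsum]
  exact Finset.sum_congr rfl fun A _ => (Finset.prod_coe_sort D _).symm

lemma card_ne_zero_forall_resEval_eq_zero (n : ℕ) (D : Finset (P1Pt Fq)) :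
    (#{A : {A : BinaryForm Fq n // A ≠ 0} | ∀ P ∈ D, resEval P A.1 = 0} : ℤ) =
      (Fintype.card Fq : ℤ) ^ (n + 1 - degD D) - 1 := by
  have hker : #{A : BinaryForm Fq n | ∀ P ∈ D, resEval P A = 0} =
      Fintype.card Fq ^ (n + 1 - degD D) := by
    rw [← card_ker_evalOn, ← Fintype.card_subtype, ← Nat.card_eq_fintype_card]
    simp only [mem_ker_evalOn]
  have herase : ({A : {A : BinaryForm Fq n // A ≠ 0} | ∀ P ∈ D, resEval P A.1 = 0} : Finset _).map
      (Function.Embedding.subtype _) =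
        ({A : BinaryForm Fq n | ∀ P ∈ D, resEval P A = 0} : Finset _).erase 0 := by
    ext A
    simp [and_comm]
  have hzero : (0 : BinaryForm Fq n) ∈
      ({A : BinaryForm Fq n | ∀ P ∈ D, resEval P A = 0} : Finset _) :=
    (Finset.mem_filter_univ _).2 fun P _ => map_zero (MvPolynomial.aeval P.coords)
  rw [← Finset.card_map, herase, Finset.cast_card_erase_of_mem hzero, hker, Nat.cast_pow]

end BinaryForms

section XIrreducibleSections

variable {ℓ k : ℕ} {D : Finset (P1Pt Fq)}

lemma degD_mono {D₀ : Finset (P1Pt Fq)} (h : D₀ ⊆ D) : degD D₀ ≤ degD D :=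
  Finset.sum_le_sum_of_subset h

lemma rD_eq_sum_powerset_aD (D : Finset (P1Pt Fq)) (s : Fin 4 → MvPolynomial (Fin 2) Fq) :
    (rD D s : ℤ) = ∑ D₀ ∈ D.powerset, aD D₀ s := by
  simp only [rD, aD, Nat.cast_prod, ← Finset.prod_one_add, add_sub_cancel]

lemma mem_SecSet_iff {m : ℕ} (h : m * k ≤ ℓ) {s : Fin (m + 1) → MvPolynomial (Fin 2) Fq} :
    s ∈ SecSet m ℓ k ↔ ∀ i : Fin (m + 1), (s i).IsHomogeneous (ℓ - i * k) := by
  refine forall_congr' fun i => ?_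
  have hi : (i : ℕ) * k ≤ ℓ := (Nat.mul_le_mul_right k i.is_le).trans h
  have hdeg : (ℓ : ℤ) - (i : ℕ) * k = (ℓ - i * k : ℕ) := by push_cast [hi]; rfl
  simp [IsHomOfDeg, hdeg]

/-- The `x`-irreducible section of `O(3, ℓ)` with coefficients `t = (A₃, A₂, A₁, A₀)`; it has the
right degrees only if `3k ≤ ℓ`. -/
def xirredSection (ℓ k : ℕ)
    (t : {A₃ : BinaryForm Fq (ℓ - 3 * k) // A₃ ≠ 0} × BinaryForm Fq (ℓ - 2 * k) ×
      BinaryForm Fq (ℓ - k) × BinaryForm Fq ℓ) : Fin 4 → MvPolynomial (Fin 2) Fq :=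
  ![t.2.2.2, t.2.2.1, t.2.1, t.1.1]

lemma xirredSection_injective : Function.Injective (xirredSection (Fq := Fq) ℓ k) := by
  rintro ⟨⟨A₃, _⟩, A₂, A₁, A₀⟩ ⟨⟨B₃, _⟩, B₂, B₁, B₀⟩ h
  obtain rfl : A₀ = B₀ := Subtype.ext (congrFun h 0)
  obtain rfl : A₁ = B₁ := Subtype.ext (congrFun h 1)
  obtain rfl : A₂ = B₂ := Subtype.ext (congrFun h 2)
  obtain rfl : A₃ = B₃ := Subtype.ext (congrFun h 3)
  rfl

lemma range_xirredSection (h : 3 * k ≤ ℓ) :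
    Set.range (xirredSection ℓ k) = {s ∈ SecSet (Fq := Fq) 3 ℓ k | s 3 ≠ 0} := by
  ext s
  constructor
  · rintro ⟨⟨⟨A₃, hA₃⟩, A₂, A₁, A₀⟩, rfl⟩
    refine ⟨(mem_SecSet_iff h).2 fun i => ?_, fun h₀ => hA₃ (Subtype.ext h₀)⟩
    fin_cases i
    · simpa only [Fin.zero_eta, Fin.val_zero, zero_mul, Nat.sub_zero] using! A₀.2
    · simpa only [Fin.mk_one, Fin.val_one, one_mul] using! A₁.2
    · exact A₂.2
    · exact A₃.2
  · rintro ⟨hs, hs₃⟩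
    rw [mem_SecSet_iff h] at hs
    refine ⟨(⟨⟨s 3, hs 3⟩, fun h₀ => hs₃ (congrArg Subtype.val h₀)⟩, ⟨s 2, hs 2⟩,
      ⟨s 1, by simpa using hs 1⟩, ⟨s 0, by simpa using hs 0⟩), ?_⟩
    ext1 i
    fin_cases i <;> rfl

lemma finsum_xirreducible [Finite Fq] {M : Type*} [AddCommMonoid M] (h : 3 * k ≤ ℓ)
    (g : (Fin 4 → MvPolynomial (Fin 2) Fq) → M) :
    ∑ᶠ s ∈ {s ∈ SecSet 3 ℓ k | s 3 ≠ 0}, g s =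
      ∑ A₃ : {A₃ : BinaryForm Fq (ℓ - 3 * k) // A₃ ≠ 0}, ∑ A₂ : BinaryForm Fq (ℓ - 2 * k),
        ∑ A₁ : BinaryForm Fq (ℓ - k), ∑ A₀ : BinaryForm Fq ℓ, g ![A₀, A₁, A₂, A₃.1] := by
  rw [← range_xirredSection h, finsum_mem_range xirredSection_injective, finsum_eq_sum_of_fintype]
  simp only [Fintype.sum_prod_type]
  rfl

lemma finsum_rD_xirreducible_eq_sum_powerset [Finite Fq] (h : 3 * k ≤ ℓ)
    (D : Finset (P1Pt Fq)) :
    ∑ᶠ s ∈ {s ∈ SecSet 3 ℓ k | s 3 ≠ 0}, (rD D s : ℤ) =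
      ∑ D₀ ∈ D.powerset, ∑ᶠ s ∈ {s ∈ SecSet 3 ℓ k | s 3 ≠ 0}, aD D₀ s := by
  have hfin : {s ∈ SecSet (Fq := Fq) 3 ℓ k | s 3 ≠ 0}.Finite :=
    range_xirredSection (Fq := Fq) h ▸ Set.finite_range (xirredSection ℓ k)
  simp only [rD_eq_sum_powerset_aD, finsum_mem_eq_finite_toFinset_sum _ hfin]
  exact Finset.sum_comm

variable [Fintype Fq]

lemma sum_aD_leadingCoeff {n : ℕ} (hD : degD D ≤ n + 1) (A₁ A₂ A₃ : MvPolynomial (Fin 2) Fq) :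
    ∑ A₀ : BinaryForm Fq n, aD D ![A₀, A₁, A₂, A₃] =
      if ∀ P ∈ D, resEval P A₃ = 0 then (Fintype.card Fq : ℤ) ^ (n + 1) else 0 := by
  let g (P : P1Pt Fq) (z : P.Res) : P.Res :=
    resEval P A₁ * z ^ 2 + resEval P A₂ * z + resEval P A₃
  have haD (A₀ : BinaryForm Fq n) : aD D ![A₀, A₁, A₂, A₃] =
      ∏ P ∈ D, ((Nat.card {z : P.Res // resEval P A₀ * z ^ 3 + g P z = 0} : ℤ) +
        (if resEval P A₀ = 0 then 1 else 0) - 1) := by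
    simp only [aD, rP, g, add_assoc, Nat.cast_add, Nat.cast_ite, Nat.cast_one, Nat.cast_zero]
    rfl
  have hg (P : P1Pt Fq) : g P 0 = resEval P A₃ := by simp [g]
  simp only [haD]
  rw [sum_prod_resEval hD fun P a => (Nat.card {z : P.Res // a * z ^ 3 + g P z = 0} : ℤ) +
    (if a = 0 then 1 else 0) - 1]
  simp only [sum_card_roots_sub_one three_ne_zero, hg, Finset.prod_ite_zero, ← Nat.cast_prod,
    prod_card_res, mul_ite, mul_zero]
  rw [Nat.cast_pow, ← pow_add, Nat.sub_add_cancel hD]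

theorem finsum_aD_xirreducible (h : 3 * k ≤ ℓ) (hD : degD D ≤ ℓ + 1) :
    ∑ᶠ s ∈ {s ∈ SecSet 3 ℓ k | s 3 ≠ 0}, aD D s =
      if 3 * k + degD D ≤ ℓ then
        (Fintype.card Fq : ℤ) ^ (4 * ℓ + 4 - 6 * k - degD D) -
          (Fintype.card Fq : ℤ) ^ (3 * ℓ + 3 - 3 * k)
      else 0 := by
  have hexp : 3 * ℓ + 3 - 3 * k = (ℓ - 2 * k + 1) + (ℓ - k + 1) + (ℓ + 1) := by omega
  have hsum : ∑ᶠ s ∈ {s ∈ SecSet 3 ℓ k | s 3 ≠ 0}, aD D s =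
      (Fintype.card Fq : ℤ) ^ (3 * ℓ + 3 - 3 * k) *
        ((Fintype.card Fq : ℤ) ^ (ℓ - 3 * k + 1 - degD D) - 1) := by
    rw [finsum_xirreducible h, ← card_ne_zero_forall_resEval_eq_zero]
    simp only [sum_aD_leadingCoeff hD, Finset.sum_const, Finset.card_univ, card_binaryForm,
      ← Finset.smul_sum, ← Finset.sum_filter]
    simp only [nsmul_eq_mul]
    push_cast
    rw [hexp]
    ring
  rw [hsum]
  split_ifs with hle
  · rw [mul_sub, mul_one, ← pow_add]
    congr 2
    omega
  · rw [show ℓ - 3 * k + 1 - degD D = 0 by omega, pow_zero, sub_self, mul_zero]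

end XIrreducibleSections

/-- Let `ℓ, k ≥ 0` and `D` a reduced effective divisor on `P¹`
with `ℓ ≥ 3k` and `ℓ ≥ deg D`.  Then
`R^{xir}(ℓ,k,D) = Σ_{D₀ ⊆ D} [q^{4ℓ−6k+4−deg D₀} − q^{3ℓ−3k+3}` if `ℓ−3k ≥ deg D₀`,
else `0]`, and consequently
`Φ^{xir}(ℓ,k,D) = q^{4ℓ−6k+4−deg D} − q^{3ℓ−3k+3}` if `ℓ−3k ≥ deg D` and `0` otherwise. -/
theorem statement_16 (Fq : Type) [Field Fq] [Fintype Fq] (ℓ k : ℕ)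
    (D : Finset (P1Pt Fq)) (h1 : 3 * k ≤ ℓ) (h2 : degD D ≤ ℓ) :
    (((∑ᶠ s ∈ {s ∈ SecSet 3 ℓ k | s 3 ≠ 0}, rD D s) : ℤ) =
      ∑ D₀ ∈ D.powerset,
        (if 3 * k + degD D₀ ≤ ℓ then
          (Fintype.card Fq : ℤ) ^ (4 * ℓ + 4 - 6 * k - degD D₀) -
            (Fintype.card Fq : ℤ) ^ (3 * ℓ + 3 - 3 * k)
        else 0)) ∧
    ((∑ᶠ s ∈ {s ∈ SecSet 3 ℓ k | s 3 ≠ 0}, aD D s) =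
      (if 3 * k + degD D ≤ ℓ then
        (Fintype.card Fq : ℤ) ^ (4 * ℓ + 4 - 6 * k - degD D) -
          (Fintype.card Fq : ℤ) ^ (3 * ℓ + 3 - 3 * k)
      else 0)) := by
  have hD₀ {D₀ : Finset (P1Pt Fq)} (h : D₀ ⊆ D) : degD D₀ ≤ ℓ + 1 :=
    ((degD_mono h).trans h2).trans ℓ.le_succ
  refine ⟨?_, finsum_aD_xirreducible h1 (hD₀ subset_rfl)⟩
  rw [finsum_rD_xirreducible_eq_sum_powerset h1]
  exact Finset.sum_congr rfl fun D₀ h => finsum_aD_xirreducible h1 (hD₀ (Finset.mem_powerset.1 h))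

end Stmt16
end
end
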